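/- (Theorem 2.1, equation (2.3).) For all positive integers a, b, s and all integers k_1, …, k_s with 0 < k_1 < k_2 < ⋯ < k_s ≤ a/2, the number of lozenge tilings of H_{a,2b}(k_1,…,k_s) that are invariant under rotation by 180° about the center of the region equals the square of the number of lozenge tilings of H_{a,2b}(k_1,…,k_s) that are invariant both under this 180° rotation and under reflection across the vertical symmetry axis; that is, M_⊙(H_{a,2b}(k_1,…,k_s)) = M_{⊙,|}(H_{a,2b}(k_1,…,k_s))². -/

import Mathlib

/-!
Geometric setup: the triangular lattice is drawn in the plane (identified with `ℝ × ℝ`)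
so that one family of lattice lines is vertical.  Lattice vertices are generated by
`v1 = (√3/2, 1/2)` and `v2 = (0,1)`, anchored so that the bottom vertex of the western
vertical side of the hexagon is at the origin.

The hexagon with side lengths `a, a, 2b, a, a, 2b` (clockwise from the northwestern side)
then has vertices `(0,0)`, `(0,2b)`, `(a√3/2, a/2+2b)`, `(a√3, 2b)`, `(a√3, 0)`,
`(a√3/2, -a/2)`; its center is `(a√3/2, b)` and its horizontal symmetry axis is `y = b`.
-/

noncomputable section

abbrev Pt : Type := ℝ × ℝ

namespace PP

/-- √3, the ratio of the long diagonal of a unit lozenge to its side. -/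
def s3 : ℝ := Real.sqrt 3

/-- The vertices of the triangular lattice (one family of lattice lines vertical). -/
def triLattice : Set Pt :=
  {p | ∃ m n : ℤ, p = ((m : ℝ) * (s3 / 2), (m : ℝ) / 2 + (n : ℝ))}

/-- The six unit vectors along lattice directions. -/
def unitVecs : Set Pt :=
  {(0, 1), (0, -1), (s3 / 2, 1 / 2), (-(s3 / 2), -(1 / 2)),
    (s3 / 2, -(1 / 2)), (-(s3 / 2), 1 / 2)}

/-- A (unit) lozenge of the triangular lattice: the union of two unit lattice triangles
sharing an edge, i.e. the convex hull of `p, p+u, p+v, p+u+v` for a lattice vertex `p`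
and two distinct non-opposite lattice unit vectors `u, v`. -/
def IsLozenge (L : Set Pt) : Prop :=
  ∃ p u v : Pt, p ∈ triLattice ∧ u ∈ unitVecs ∧ v ∈ unitVecs ∧ u ≠ v ∧ u ≠ -v ∧
    L = convexHull ℝ {p, p + u, p + v, p + u + v}

/-- A lozenge tiling of a region `R`: a set of lozenges covering `R` whose interiors
are pairwise disjoint. -/
def IsLozengeTiling (R : Set Pt) (T : Set (Set Pt)) : Prop :=
  (∀ L ∈ T, IsLozenge L) ∧ ⋃₀ T = R ∧
    ∀ L ∈ T, ∀ L' ∈ T, L ≠ L' → interior L ∩ interior L' = ∅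

/-- The hexagon with side lengths `A, A, 2b, A, A, 2b`, clockwise from the NW side. -/
def hexagon (A b : ℕ) : Set Pt :=
  convexHull ℝ
    {((0 : ℝ), (0 : ℝ)), ((0 : ℝ), 2 * (b : ℝ)),
      ((A : ℝ) * (s3 / 2), (A : ℝ) / 2 + 2 * (b : ℝ)),
      ((A : ℝ) * s3, 2 * (b : ℝ)), ((A : ℝ) * s3, (0 : ℝ)),
      ((A : ℝ) * (s3 / 2), -((A : ℝ) / 2))}

/-- The left-pointing triangular hole of side 2 whose vertical (right) side lies at
distance `2k` (in units of `√3` times half the lattice spacing, i.e. at `x = k√3`)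
from the left side of the hexagon, centered on the horizontal symmetry axis `y = b`. -/
def leftHole (b k : ℕ) : Set Pt :=
  convexHull ℝ
    {((k : ℝ) * s3, (b : ℝ) - 1), ((k : ℝ) * s3, (b : ℝ) + 1), (((k : ℝ) - 1) * s3, (b : ℝ))}

/-- The mirror image of `leftHole b k` across the vertical symmetry axis of the hexagon:
a right-pointing triangular hole of side 2. -/
def rightHole (A b k : ℕ) : Set Pt :=
  convexHull ℝ
    {(((A : ℝ) - k) * s3, (b : ℝ) - 1), (((A : ℝ) - k) * s3, (b : ℝ) + 1),
      (((A : ℝ) - k + 1) * s3, (b : ℝ))}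

/-- The region `H_{A,2b}(k_1,…,k_s)`: the hexagon with side lengths `A, A, 2b, A, A, 2b`,
with the (open) triangular holes `leftHole (k i)` and their mirror images removed. -/
def Hreg (A b s : ℕ) (k : Fin s → ℕ) : Set Pt :=
  hexagon A b \ ⋃ i : Fin s, (interior (leftHole b (k i)) ∪ interior (rightHole A b (k i)))

/-- The horizontal lattice rhombus of side `t` centered at the center `(A√3/2, b)`
of the hexagon. -/
def centralRhombus (A b t : ℕ) : Set Pt :=
  convexHull ℝ
    {((A : ℝ) * (s3 / 2) - (t : ℝ) * (s3 / 2), (b : ℝ)),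
      ((A : ℝ) * (s3 / 2) + (t : ℝ) * (s3 / 2), (b : ℝ)),
      ((A : ℝ) * (s3 / 2), (b : ℝ) - (t : ℝ) / 2),
      ((A : ℝ) * (s3 / 2), (b : ℝ) + (t : ℝ) / 2)}

/-- The region `H_{A,2b}(k_1,…,k_s; t)`: `H_{A,2b}(k_1,…,k_s)` with the (open) central
horizontal rhombus of side `t` also removed. -/
def HregC (A b s : ℕ) (k : Fin s → ℕ) (t : ℕ) : Set Pt :=
  Hreg A b s k \ interior (centralRhombus A b t)

/-- Rotation by `180°` about the center `(A√3/2, b)` of the hexagon. -/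
def rot180 (A b : ℕ) (p : Pt) : Pt := ((A : ℝ) * s3 - p.1, 2 * (b : ℝ) - p.2)

/-- Reflection across the vertical symmetry axis `x = A√3/2` of the hexagon. -/
def reflV (A : ℕ) (p : Pt) : Pt := ((A : ℝ) * s3 - p.1, p.2)

/-- A tiling is invariant under rotation by `180°` about the center of the region. -/
def RotInvariant (A b : ℕ) (T : Set (Set Pt)) : Prop :=
  ∀ L ∈ T, rot180 A b '' L ∈ T

/-- A tiling is invariant under reflection across the vertical symmetry axis. -/
def ReflInvariant (A : ℕ) (T : Set (Set Pt)) : Prop :=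
  ∀ L ∈ T, reflV A '' L ∈ T

/-- `M_⊙(R)`: the number of lozenge tilings of `R` invariant under rotation by `180°`
about the center (of the hexagon with parameters `A`, `b` from which `R` was built). -/
def Mrot (A b : ℕ) (R : Set Pt) : ℕ :=
  Nat.card {T : Set (Set Pt) // IsLozengeTiling R T ∧ RotInvariant A b T}

/-- `M_{⊙,|}(R)`: the number of lozenge tilings of `R` invariant both under rotation by
`180°` about the center and under reflection across the vertical symmetry axis. -/
def MrotRefl (A b : ℕ) (R : Set Pt) : ℕ :=
  Nat.card {T : Set (Set Pt) //
    IsLozengeTiling R T ∧ RotInvariant A b T ∧ ReflInvariant A T}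

end PP

/-!
A tiling invariant under rotation is determined by its western half. Let `S` be the set of the unit
segments of the vertical axis that are sides of lozenges; it is invariant under reflection in the
midpoint of the axis. For fixed `S`, the tilings of the western half are families of nonintersecting
lattice paths, counted by a Lindström–Gessel–Viennot determinant. The western half is symmetric in
the horizontal axis, so for `S = E ∪ mirror E` the determinant factors, up to a common sign, as
`s E * t E`: a maximal minor of the symmetrized path-counting vectors times one of the
antisymmetrized vectors. By induction on the columns, `t E` counts the path families invariant under
reflection, up to a common sign.

It remains to see that `∑ s E * t E = (∑ t E) ^ 2`. A step of the paths acts on vectors in the same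
way in every column, hence commutes with differences, and by induction the symmetrized vectors are
weighted partial sums of the antisymmetrized ones modulo combinations of one another. By
Cauchy–Binet the left-hand side is thus the determinant of the Gram matrix of the antisymmetrized
vectors for a kernel whose symmetric part has rank one. Such a determinant is the square of the sum
of the maximal minors.
-/

namespace HoleyHexagon

open Finset

section Slater

variable {ι : Type*} [LinearOrder ι] {R : Type*} [CommRing R]

/-- The sign picked up by moving `x` to its place in the increasing list of elements of `S`. -/
def insertSign (R : Type*) [CommRing R] (S : Finset ι) (x : ι) : R :=
  (-1) ^ #{y ∈ S | y < x}

/-- Left exterior multiplication by the vector `f`. Elements of the exterior algebra on `ι` are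
encoded by their coordinates, functions `Finset ι → R`. -/
def wedge (f : ι → R) (Ψ : Finset ι → R) (S : Finset ι) : R :=
  ∑ x ∈ S, insertSign R S x * f x * Ψ (S.erase x)

/-- Contraction with the coordinate form at `x`, the adjoint of exterior multiplication by the
basis vector at `x`. -/
def contract (x : ι) (Ψ : Finset ι → R) (S : Finset ι) : R :=
  if x ∈ S then 0 else insertSign R S x * Ψ (insert x S)

/-- The Slater determinants of a list of vectors: the coordinates of its exterior product. -/
def slater : List (ι → R) → Finset ι → R
  | [] => fun S => if S = ∅ then 1 else 0
  | f :: l => wedge f (slater l)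

lemma insertSign_mul_self (S : Finset ι) (x : ι) : insertSign R S x * insertSign R S x = 1 := by
  simp [insertSign, ← mul_pow]

lemma insertSign_insert_of_lt {S : Finset ι} {x y : ι} (hx : x ∉ S) (h : x < y) :
    insertSign R (insert x S) y = -insertSign R S y := by
  simp only [insertSign]
  rw [filter_insert, if_pos h, card_insert_of_notMem (by simp [hx]), pow_succ, mul_neg_one]

lemma insertSign_insert_of_le {S : Finset ι} {x y : ι} (h : y ≤ x) :
    insertSign R (insert x S) y = insertSign R S y := by
  simp only [insertSign]
  rw [filter_insert, if_neg h.not_gt]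

lemma insertSign_erase_of_lt {S : Finset ι} {x y : ι} (hx : x ∈ S) (h : x < y) :
    insertSign R (S.erase x) y = -insertSign R S y := by
  conv_rhs => rw [← insert_erase hx]
  rw [insertSign_insert_of_lt (notMem_erase x S) h, neg_neg]

lemma insertSign_erase_of_le {S : Finset ι} {x y : ι} (h : y ≤ x) :
    insertSign R (S.erase x) y = insertSign R S y := by
  by_cases hx : x ∈ S
  · conv_rhs => rw [← insert_erase hx]
    rw [insertSign_insert_of_le h]
  · rw [erase_eq_of_notMem hx]

lemma contract_wedge_of_mem {x : ι} {S : Finset ι} (hx : x ∈ S) (f : ι → R)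
    (Ψ : Finset ι → R) : wedge f (contract x Ψ) S = f x * Ψ S := by
  unfold wedge
  rw [sum_eq_single_of_mem x hx]
  · rw [contract, if_neg (notMem_erase x S), insert_erase hx, insertSign_erase_of_le le_rfl]
    linear_combination (f x * Ψ S) * insertSign_mul_self (R := R) S x
  · intro y _ hy
    rw [contract, if_pos (mem_erase.2 ⟨hy.symm, hx⟩), mul_zero]

lemma contract_wedge (x : ι) (f : ι → R) (Ψ : Finset ι → R) (S : Finset ι) :
    contract x (wedge f Ψ) S = f x * Ψ S - wedge f (contract x Ψ) S := by
  by_cases hx : x ∈ S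
  · rw [contract_wedge_of_mem hx, sub_self, contract, if_pos hx]
  rw [contract, if_neg hx, wedge, sum_insert hx, erase_insert hx, mul_add, mul_sum,
    insertSign_insert_of_le le_rfl, sub_eq_add_neg, wedge, ← sum_neg_distrib]
  congr 1
  · linear_combination (f x * Ψ S) * insertSign_mul_self (R := R) S x
  refine sum_congr rfl fun y hy => ?_
  have hxy : x ≠ y := fun h => hx (h ▸ hy)
  rw [contract, if_neg fun h => hx (mem_of_mem_erase h), erase_insert_of_ne hxy]
  rcases hxy.lt_or_gt with h | h
  · rw [insertSign_insert_of_lt hx h, insertSign_erase_of_le h.le]; ring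
  · rw [insertSign_insert_of_le h.le, insertSign_erase_of_lt hy h]; ring

lemma wedge_sum {κ : Type*} (s : Finset κ) (f : ι → R) (c : κ → R) (Ψ : κ → Finset ι → R)
    (S : Finset ι) :
    wedge f (fun S => ∑ k ∈ s, c k * Ψ k S) S = ∑ k ∈ s, c k * wedge f (Ψ k) S := by
  simp only [wedge, mul_sum]
  rw [sum_comm]
  exact sum_congr rfl fun _ _ => sum_congr rfl fun _ _ => by ring

lemma contract_slater (x : ι) : ∀ {n : ℕ} (f : Fin (n + 1) → ι → R) (S : Finset ι),
    contract x (slater (List.ofFn f)) S =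
      ∑ j : Fin (n + 1), (-1) ^ (j : ℕ) * f j x * slater (List.ofFn (f ∘ j.succAbove)) S
  | 0, f, S => by
    simp only [List.ofFn_succ, slater, contract_wedge, List.ofFn_zero, Fin.sum_univ_succ]
    simp [wedge, contract]
  | n + 1, f, S => by
    have ih : contract x (slater (List.ofFn fun i => f i.succ)) = fun S =>
        ∑ j : Fin (n + 1), ((-1) ^ (j : ℕ) * f j.succ x) *
          slater (List.ofFn fun i => f (j.succAbove i).succ) S := by
      funext S; exact contract_slater x (fun i => f i.succ) S
    rw [List.ofFn_succ, slater, contract_wedge, ih, wedge_sum,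
      Fin.sum_univ_succ (n := n + 1), sub_eq_add_neg, ← sum_neg_distrib]
    congr 1
    · simp [Function.comp_def]
    refine sum_congr rfl fun j _ => ?_
    rw [List.ofFn_succ (n := n), slater]
    simp only [Function.comp_def, Fin.succ_succAbove_succ, Fin.val_succ,
      Fin.succ_succAbove_zero]
    ring

lemma slater_eq_zero_of_card_ne {l : List (ι → R)} {S : Finset ι} (h : #S ≠ l.length) :
    slater l S = 0 := by
  induction l generalizing S with
  | nil => exact if_neg fun hS : S = ∅ => h (by rw [hS]; rfl)
  | cons f l ih =>
    refine sum_eq_zero fun x hx => ?_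
    rw [ih, mul_zero]
    have := card_erase_add_one hx
    rw [List.length_cons] at h
    omega

lemma map_slater {R' : Type*} [CommRing R'] (φ : R →+* R') (l : List (ι → R)) (S : Finset ι) :
    slater (l.map (φ ∘ ·)) S = φ (slater l S) := by
  induction l generalizing S with
  | nil => simp [slater, apply_ite φ]
  | cons f l ih => simp [slater, wedge, insertSign, ih]

lemma sum_powerset_sum_mem {M : Type*} [AddCommMonoid M] (B : Finset ι)
    (g : ι → Finset ι → M) :
    ∑ S ∈ B.powerset, ∑ x ∈ S, g x S =
      ∑ x ∈ B, ∑ S ∈ B.powerset with x ∉ S, g x (insert x S) := by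
  rw [sum_comm' (t' := B) (s' := fun x => {S ∈ B.powerset | x ∈ S})
    (by simp only [mem_powerset, mem_filter]; grind)]
  refine sum_congr rfl fun x hx => sum_nbij' (·.erase x) (insert x) ?_ ?_ ?_ ?_ ?_ <;>
    simp only [mem_filter, mem_powerset, and_imp]
  · exact fun S hS _ => ⟨(erase_subset x S).trans hS, notMem_erase x S⟩
  · exact fun S hS _ => ⟨insert_subset hx hS, mem_insert_self x S⟩
  · exact fun S _ hx => insert_erase hx
  · exact fun S _ hx => erase_insert hx
  · intro S _ hx
    rw [insert_erase hx]

lemma sum_wedge_mul (B : Finset ι) (f : ι → R) (Ψ Φ : Finset ι → R) :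
    ∑ S ∈ B.powerset, wedge f Ψ S * Φ S =
      ∑ x ∈ B, f x * ∑ S ∈ B.powerset, Ψ S * contract x Φ S := by
  simp only [wedge, sum_mul, contract, mul_ite, mul_zero]
  rw [sum_powerset_sum_mem B fun x S => insertSign R S x * f x * Ψ (S.erase x) * Φ S]
  refine sum_congr rfl fun x _ => ?_
  rw [sum_filter, mul_sum]
  refine sum_congr rfl fun S _ => ?_
  by_cases h : x ∈ S
  · simp [h]
  · rw [if_pos h, if_neg h, erase_insert h, insertSign_insert_of_le le_rfl]
    ring

theorem cauchyBinet (B : Finset ι) : ∀ {n : ℕ} (f g : Fin n → ι → R),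
    ∑ S ∈ B.powerset, slater (List.ofFn f) S * slater (List.ofFn g) S =
      (Matrix.of fun i j => ∑ x ∈ B, f i x * g j x).det
  | 0, f, g => by simp [slater]
  | n + 1, f, g => by
    rw [List.ofFn_succ, slater, sum_wedge_mul, Matrix.det_succ_row_zero]
    simp only [contract_slater, mul_sum]
    rw [sum_congr rfl fun _ _ => sum_comm, sum_comm]
    refine sum_congr rfl fun j _ => ?_
    have minor : (Matrix.of fun i j => ∑ x ∈ B, f i x * g j x).submatrix Fin.succ j.succAbove =
        Matrix.of fun i k => ∑ x ∈ B, f (Fin.succ i) x * (g ∘ j.succAbove) k x := rfl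
    simp only [minor, ← cauchyBinet B (fun i => f i.succ), Matrix.of_apply, mul_sum, sum_mul]
    rw [sum_comm]
    exact sum_congr rfl fun S _ => sum_congr rfl fun x _ => by ring

lemma orderEmbOfFin_erase {n : ℕ} (S : Finset ι) (h : #S = n + 1) (j : Fin (n + 1))
    (h' : #(S.erase (S.orderEmbOfFin h j)) = n) (i : Fin n) :
    (S.erase (S.orderEmbOfFin h j)).orderEmbOfFin h' i = S.orderEmbOfFin h (j.succAbove i) :=
  (congrFun (orderEmbOfFin_unique h' (f := fun i => S.orderEmbOfFin h (j.succAbove i))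
    (fun i => by simp [mem_erase, Fin.succAbove_ne])
    ((S.orderEmbOfFin h).strictMono.comp (Fin.strictMono_succAbove j))) i).symm

lemma insertSign_orderEmbOfFin {n : ℕ} (S : Finset ι) (h : #S = n) (j : Fin n) :
    insertSign R S (S.orderEmbOfFin h j) = (-1) ^ (j : ℕ) := by
  have below : {y ∈ S | y < S.orderEmbOfFin h j} =
      (Iio j).map (S.orderEmbOfFin h).toEmbedding := by
    ext x
    simp only [mem_filter, mem_map, mem_Iio, RelEmbedding.coe_toEmbedding]
    constructor
    · rintro ⟨hx, hlt⟩
      obtain ⟨i, rfl⟩ : x ∈ Set.range (S.orderEmbOfFin h) := by rwa [range_orderEmbOfFin]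
      exact ⟨i, (S.orderEmbOfFin h).lt_iff_lt.1 hlt, rfl⟩
    · rintro ⟨i, hi, rfl⟩
      exact ⟨orderEmbOfFin_mem S h i, (S.orderEmbOfFin h).lt_iff_lt.2 hi⟩
  rw [insertSign, below, card_map, Fin.card_Iio]

lemma slater_eq_det : ∀ {n : ℕ} (f : Fin n → ι → R) (S : Finset ι) (h : #S = n),
    slater (List.ofFn f) S = (Matrix.of fun i j => f i (S.orderEmbOfFin h j)).det
  | 0, f, S, h => by simp [slater, card_eq_zero.1 h]
  | n + 1, f, S, h => by
    rw [List.ofFn_succ, slater, Matrix.det_succ_row_zero, wedge,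
      sum_congr (map_orderEmbOfFin_univ S h).symm fun _ _ => rfl, sum_map]
    refine sum_congr rfl fun j _ => ?_
    have h' : #(S.erase (S.orderEmbOfFin h j)) = n := by
      rw [card_erase_of_mem (orderEmbOfFin_mem _ _ _), h, Nat.add_sub_cancel]
    rw [RelEmbedding.coe_toEmbedding, slater_eq_det _ _ h', insertSign_orderEmbOfFin]
    simp only [orderEmbOfFin_erase]
    rfl

lemma slater_cons_self {n : ℕ} (f : Fin n → ι → R) (i : Fin n) (S : Finset ι) :
    slater (f i :: List.ofFn f) S = 0 := by
  by_cases h : #S = n + 1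
  · rw [show f i :: List.ofFn f = List.ofFn (Fin.cons (f i) f : Fin (n + 1) → ι → R) by
      simp [List.ofFn_succ], slater_eq_det _ _ h]
    exact Matrix.det_zero_of_row_eq (Fin.succ_ne_zero i).symm (by ext j; simp)
  · exact slater_eq_zero_of_card_ne (by simpa using h)

end Slater

section SquareIdentity

variable {ι : Type*} [LinearOrder ι] {R : Type*} [CommRing R]

/-- The kernel `δ_{yx} + 2 [x < y]`. Its symmetric part has rank one, and its skew part is
the sign matrix, whose minors are Pfaffians. -/
def stairKernel (R : Type*) [CommRing R] (y x : ι) : R :=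
  if x = y then 1 else if x < y then 2 else 0

/-- The Gram matrix of a family of vectors with respect to the staircase kernel on `B`. -/
def stairGram (B : Finset ι) {n : ℕ} (f : Fin n → ι → R) : Matrix (Fin n) (Fin n) R :=
  Matrix.of fun i j => ∑ y ∈ B, f i y * ∑ x ∈ B, stairKernel R y x * f j x

/-- The sum of all maximal minors of a family of vectors on `B`. -/
def minorSum (B : Finset ι) {n : ℕ} (f : Fin n → ι → R) : R :=
  ∑ S ∈ B.powerset, slater (List.ofFn f) S

/-- The cofactors of the family `f` bordered by a column of ones. -/
def minorSumCofactor (B : Finset ι) {n : ℕ} (f : Fin (n + 1) → ι → R) (j : Fin (n + 1)) : R :=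
  (-1) ^ (j : ℕ) * minorSum B (f ∘ j.succAbove)

lemma stairKernel_add_comm (x y : ι) : stairKernel R y x + stairKernel R x y = 2 := by
  unfold stairKernel
  rcases lt_trichotomy x y with h | rfl | h
  · simp [h, h.ne, h.ne', h.not_gt]
  · simp [one_add_one_eq_two]
  · simp [h, h.ne, h.ne', h.not_gt]

/-- The alternating sum along the increasing list of `T` telescopes. -/
lemma wedge_stairKernel_one (y : ι) (T : Finset ι) :
    wedge (stairKernel R y) 1 T = 1 - contract y 1 T := by
  simp only [wedge, contract, Pi.one_apply, mul_one]
  induction T using Finset.induction_on_max with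
  | empty => simp [insertSign]
  | insert M T hM ih =>
    have hMT : M ∉ T := fun h => lt_irrefl M (hM M h)
    rw [sum_insert hMT, sum_congr rfl fun x hx => by
      rw [insertSign_insert_of_le (hM x hx).le], ih, insertSign_insert_of_le le_rfl, stairKernel]
    rcases lt_trichotomy y M with h | rfl | h
    · simp [h.ne, h.ne', h.not_gt, insertSign_insert_of_le h.le]
    · simp [hMT]
    · have hyT : y ∉ T := fun hy => (h.trans (hM y hy)).false
      have sign_eq : insertSign R T M = insertSign R T y := by
        simp only [insertSign]
        rw [filter_true_of_mem hM, filter_true_of_mem fun x hx => (hM x hx).trans h]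
      rw [insertSign_insert_of_lt hMT h, sign_eq]
      simp [h.ne, h.ne', h, hyT]
      ring

lemma sum_contract_slater (B : Finset ι) {n : ℕ} (f : Fin (n + 1) → ι → R) (x : ι) :
    ∑ S ∈ B.powerset, contract x (slater (List.ofFn f)) S =
      ∑ j, f j x * minorSumCofactor B f j := by
  simp only [contract_slater, minorSumCofactor, minorSum, mul_sum]
  rw [sum_comm]
  exact sum_congr rfl fun _ _ => sum_congr rfl fun _ _ => by ring

lemma sum_stairKernel_mul_cofactor (B : Finset ι) {n : ℕ} (f : Fin (n + 1) → ι → R) (y : ι) :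
    ∑ x ∈ B, stairKernel R y x * ∑ j, f j x * minorSumCofactor B f j =
      minorSum B f - ∑ S ∈ B.powerset, slater (List.ofFn f) S * contract y 1 S := by
  have adjoint := sum_wedge_mul B (stairKernel R y) 1 (slater (List.ofFn f))
  simp only [Pi.one_apply, one_mul, sum_contract_slater] at adjoint
  rw [← adjoint, minorSum, ← sum_sub_distrib]
  refine sum_congr rfl fun S _ => ?_
  rw [wedge_stairKernel_one]
  ring

lemma stairGram_mulVec_cofactor (B : Finset ι) {n : ℕ} (f : Fin (n + 1) → ι → R) :
    (stairGram B f).mulVec (minorSumCofactor B f) =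
      minorSum B f • fun i => ∑ y ∈ B, f i y := by
  funext i
  calc (stairGram B f).mulVec (minorSumCofactor B f) i
      = ∑ y ∈ B, f i y * ∑ x ∈ B, stairKernel R y x * ∑ j, f j x * minorSumCofactor B f j := by
        simp only [Matrix.mulVec, dotProduct, stairGram, Matrix.of_apply, mul_sum, sum_mul]
        rw [sum_comm]
        refine sum_congr rfl fun y _ => ?_
        rw [sum_comm]
        exact sum_congr rfl fun _ _ => sum_congr rfl fun _ _ => by ring
    _ = (∑ y ∈ B, f i y) * minorSum B f -
          ∑ y ∈ B, f i y * ∑ S ∈ B.powerset, slater (List.ofFn f) S * contract y 1 S := by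
        simp only [sum_stairKernel_mul_cofactor, mul_sub, sum_sub_distrib, sum_mul]
    _ = (∑ y ∈ B, f i y) * minorSum B f := by
        rw [← sum_wedge_mul, sub_eq_self]
        refine sum_eq_zero fun S _ => ?_
        rw [Pi.one_apply, mul_one]
        exact slater_cons_self f i S
    _ = (minorSum B f • fun i => ∑ y ∈ B, f i y) i := mul_comm _ _

lemma stairGram_add_transpose (B : Finset ι) {n : ℕ} (f : Fin n → ι → R) :
    stairGram B f + (stairGram B f).transpose =
      2 • Matrix.vecMulVec (fun i => ∑ y ∈ B, f i y) fun j => ∑ x ∈ B, f j x := by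
  ext i j
  have swap : ∑ y ∈ B, f j y * ∑ x ∈ B, stairKernel R y x * f i x =
      ∑ y ∈ B, ∑ x ∈ B, f i y * (stairKernel R x y * f j x) := by
    simp only [mul_sum]
    rw [sum_comm]
    exact sum_congr rfl fun _ _ => sum_congr rfl fun _ _ => by ring
  change _ + ∑ y ∈ B, f j y * ∑ x ∈ B, stairKernel R y x * f i x =
    2 • ((∑ y ∈ B, f i y) * ∑ x ∈ B, f j x)
  rw [swap, sum_mul_sum]
  simp only [stairGram, Matrix.of_apply, mul_sum, smul_sum, ← sum_add_distrib]
  refine sum_congr rfl fun y _ => sum_congr rfl fun x _ => ?_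
  rw [nsmul_eq_mul, Nat.cast_ofNat]
  linear_combination f i y * f j x * stairKernel_add_comm (R := R) x y

/-- A matrix `M` with `M + Mᵀ = 2 v vᵀ` has `det M • (adj M + (adj M)ᵀ) = 2 w wᵀ` for
`w = adj M v`; the relation `M γ = F v` identifies `w` with a multiple of `γ`. -/
lemma sq_mul_det_mul_adjugate_diag {n : Type*} [Fintype n] [DecidableEq n]
    {M : Matrix n n R} {v γ : n → R} {F : R}
    (hsymm : M + M.transpose = 2 • Matrix.vecMulVec v v) (hγ : M.mulVec γ = F • v) (i : n) :
    2 * (F ^ 2 * M.det * M.adjugate i i) = 2 * (M.det ^ 2 * γ i ^ 2) := by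
  have hw : M.det • γ = F • M.adjugate.mulVec v := by
    rw [← Matrix.mulVec_smul, ← hγ, Matrix.mulVec_mulVec, Matrix.adjugate_mul,
      Matrix.smul_mulVec, Matrix.one_mulVec]
  have hadj : M.det • (M.adjugate.transpose + M.adjugate) =
      2 • Matrix.vecMulVec (M.adjugate.mulVec v) (M.adjugate.mulVec v) := by
    calc M.det • (M.adjugate.transpose + M.adjugate)
        = M.adjugate * M * M.adjugate.transpose +
            M.adjugate * (M.adjugate * M).transpose := by
          simp [Matrix.adjugate_mul]
      _ = M.adjugate * (M + M.transpose) * M.adjugate.transpose := by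
          rw [Matrix.transpose_mul, Matrix.mul_add, Matrix.add_mul, Matrix.mul_assoc _ M.transpose]
      _ = _ := by
          rw [hsymm, Matrix.mul_smul, Matrix.smul_mul, Matrix.mul_vecMulVec,
            Matrix.vecMulVec_mul, Matrix.vecMul_transpose]
  have hwi := congrFun hw i
  have hadji := congrFun (congrFun hadj i) i
  simp only [Pi.smul_apply, smul_eq_mul] at hwi
  simp only [Matrix.smul_apply, Matrix.add_apply, Matrix.transpose_apply, smul_eq_mul,
    Matrix.vecMulVec_apply, nsmul_eq_mul, Nat.cast_ofNat] at hadji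
  linear_combination F ^ 2 * hadji -
    2 * (M.det * γ i + F * M.adjugate.mulVec v i) * hwi

lemma stairGram_submatrix (B : Finset ι) {n : ℕ} (f : Fin (n + 1) → ι → R) :
    (stairGram B f).submatrix Fin.succ Fin.succ = stairGram B (f ∘ Fin.succ) := rfl

lemma minorSumCofactor_zero (B : Finset ι) {n : ℕ} (f : Fin (n + 1) → ι → R) :
    minorSumCofactor B f 0 = minorSum B (f ∘ Fin.succ) := by
  simp [minorSumCofactor, Fin.succAbove_zero]

lemma det_stairGram_of_succ [IsDomain R] [NeZero (2 : R)] (B : Finset ι) {n : ℕ}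
    (f : Fin (n + 1) → ι → R) (hdet : (stairGram B f).det ≠ 0)
    (hsucc : (stairGram B (f ∘ Fin.succ)).det ≠ 0)
    (ih : (stairGram B (f ∘ Fin.succ)).det = minorSum B (f ∘ Fin.succ) ^ 2) :
    (stairGram B f).det = minorSum B f ^ 2 := by
  have hdiag := sq_mul_det_mul_adjugate_diag (stairGram_add_transpose B f)
    (stairGram_mulVec_cofactor B f) 0
  rw [Matrix.adjugate_fin_succ_eq_det_submatrix] at hdiag
  simp only [Fin.succAbove_zero, stairGram_submatrix, minorSumCofactor_zero, Fin.val_zero,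
    add_zero, pow_zero, one_mul, ← ih] at hdiag
  have := mul_left_cancel₀ (two_ne_zero (α := R)) hdiag
  exact (mul_right_cancel₀ (mul_ne_zero hdet hsucc) (by linear_combination this)).symm

lemma map_minorSum {R' : Type*} [CommRing R'] (φ : R →+* R') (B : Finset ι) {n : ℕ}
    (f : Fin n → ι → R) : minorSum B (fun i x => φ (f i x)) = φ (minorSum B f) := by
  simp only [minorSum, map_sum, ← map_slater, List.map_ofFn]
  rfl

lemma map_det_stairGram {R' : Type*} [CommRing R'] (φ : R →+* R') (B : Finset ι) {n : ℕ}
    (f : Fin n → ι → R) :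
    (stairGram B fun i x => φ (f i x)).det = φ (stairGram B f).det := by
  rw [RingHom.map_det]
  congr 1
  ext i j
  simp [stairGram, stairKernel, apply_ite φ, map_ofNat φ 2]

lemma det_stairGram_single (B : Finset ι) {n : ℕ} (e : Fin n ↪o ι) (he : ∀ i, e i ∈ B) :
    (stairGram B fun i => Pi.single (e i) (1 : R)).det = 1 := by
  have entry (i j) : stairGram B (fun i => Pi.single (e i) (1 : R)) i j =
      stairKernel R (e i) (e j) := by
    simp [stairGram, Pi.single_apply, he]
  rw [Matrix.det_of_isLowerTriangular _ fun i j (hij : i < j) => ?_]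
  · simp [entry, stairKernel]
  · simp [entry, stairKernel, hij.ne', hij.not_gt]

/-- The family of vectors whose coordinates are independent indeterminates. The index shift `k`
lets the family survive the removal of its first vector. -/
def genericFamily (ι : Type*) (k n : ℕ) (i : Fin n) (x : ι) : MvPolynomial (ℕ × ι) ℤ :=
  MvPolynomial.X (k + i, x)

lemma det_stairGram_generic_ne_zero (B : Finset ι) {n : ℕ} (k : ℕ) (hn : n ≤ #B) :
    (stairGram B (genericFamily ι k n)).det ≠ 0 := by
  intro h
  let e := B.orderEmbOfCardLe hn
  let φ : MvPolynomial (ℕ × ι) ℤ →+* ℤ := MvPolynomial.eval fun p =>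
    if h : p.1 - k < n then Pi.single (M := fun _ => ℤ) (e ⟨p.1 - k, h⟩) 1 p.2 else 0
  have hφ : (fun i x => φ (genericFamily ι k n i x)) = fun i => Pi.single (e i) (1 : ℤ) := by
    funext i x
    simp [φ, genericFamily]
  have := map_det_stairGram φ B (genericFamily ι k n)
  rw [hφ, det_stairGram_single B e (orderEmbOfCardLe_mem B hn), h, map_zero] at this
  exact one_ne_zero this

lemma det_stairGram_generic (B : Finset ι) : ∀ {n : ℕ} (k : ℕ), n ≤ #B →
    (stairGram B (genericFamily ι k n)).det = minorSum B (genericFamily ι k n) ^ 2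
  | 0, k, _ => by simp [minorSum, slater]
  | n + 1, k, hn => by
    have hsucc : genericFamily ι k (n + 1) ∘ Fin.succ = genericFamily ι (k + 1) n := by
      funext i x
      simp [genericFamily, add_assoc, add_comm 1]
    refine det_stairGram_of_succ B _ (det_stairGram_generic_ne_zero B k hn) ?_ ?_ <;> rw [hsucc]
    · exact det_stairGram_generic_ne_zero B (k + 1) (Nat.le_of_succ_le hn)
    · exact det_stairGram_generic B (k + 1) (Nat.le_of_succ_le hn)

theorem det_stairGram (B : Finset ι) {n : ℕ} (f : Fin n → ι → R) :
    (stairGram B f).det = minorSum B f ^ 2 := by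
  by_cases hn : n ≤ #B
  · let φ : MvPolynomial (ℕ × ι) ℤ →+* R := MvPolynomial.eval₂Hom (Int.castRingHom R) fun p =>
      if h : p.1 < n then f ⟨p.1, h⟩ p.2 else 0
    have hφ : (fun i x => φ (genericFamily ι 0 n i x)) = f := by
      funext i x
      simp [φ, genericFamily]
    rw [← hφ, map_det_stairGram, map_minorSum, det_stairGram_generic B 0 hn, map_pow]
  · have vanish (S) (hS : S ∈ B.powerset) : slater (List.ofFn f) S = 0 := by
      refine slater_eq_zero_of_card_ne fun h => hn ?_
      rw [List.length_ofFn] at h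
      exact h ▸ card_le_card (mem_powerset.1 hS)
    rw [minorSum, sum_eq_zero vanish, stairGram,
      ← cauchyBinet B f fun j y => ∑ x ∈ B, stairKernel R y x * f j x,
      sum_eq_zero fun S hS => by rw [vanish S hS, zero_mul], sq, zero_mul]

end SquareIdentity

section SlaterManipulation

variable {ι : Type*} [LinearOrder ι] {R : Type*} [CommRing R]

lemma det_columns_eq_slater {n : ℕ} (f : Fin n → ι → R) {c : Fin n → ι} (hc : StrictMono c) :
    (Matrix.of fun i j => f i (c j)).det = slater (List.ofFn f) (univ.image c) := by
  have hcard : #(univ.image c) = n := by simp [card_image_of_injective _ hc.injective]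
  rw [slater_eq_det f _ hcard,
    ← orderEmbOfFin_unique hcard (fun _ => mem_image_of_mem _ (mem_univ _)) hc]

lemma insertSign_mul_insertSign_erase {S : Finset ι} {x y : ι} (hx : x ∈ S) (hy : y ∈ S)
    (hxy : x ≠ y) :
    insertSign R S x * insertSign R (S.erase x) y =
      -(insertSign R S y * insertSign R (S.erase y) x) := by
  rcases hxy.lt_or_gt with h | h
  · rw [insertSign_erase_of_lt hx h, insertSign_erase_of_le h.le]; ring
  · rw [insertSign_erase_of_le h.le, insertSign_erase_of_lt hy h]; ring

lemma wedge_wedge_comm (f g : ι → R) (Ψ : Finset ι → R) :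
    wedge f (wedge g Ψ) = -wedge g (wedge f Ψ) := by
  funext S
  simp only [wedge, Pi.neg_apply, mul_sum]
  rw [sum_comm' (t' := S) (s' := fun y => S.erase y) (by simp only [mem_erase]; grind),
    ← sum_neg_distrib]
  refine sum_congr rfl fun y hy => ?_
  rw [← sum_neg_distrib]
  refine sum_congr rfl fun x hx => ?_
  rw [erase_right_comm]
  linear_combination f x * g y * Ψ ((S.erase y).erase x) *
    insertSign_mul_insertSign_erase (R := R) (mem_of_mem_erase hx) hy (ne_of_mem_erase hx)

lemma slater_append_cons (l l' : List (ι → R)) (f : ι → R) :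
    slater (l ++ f :: l') = (-1 : R) ^ l.length • slater (f :: (l ++ l')) := by
  induction l with
  | nil => simp
  | cons g l ih =>
    have hsmul (c : R) (Ψ : Finset ι → R) : wedge g (c • Ψ) = c • wedge g Ψ := by
      funext S
      simp only [wedge, Pi.smul_apply, smul_eq_mul, mul_sum]
      exact sum_congr rfl fun _ _ => by ring
    rw [List.cons_append, slater, ih, hsmul, List.cons_append, slater, slater, slater,
      wedge_wedge_comm, List.length_cons, pow_succ, mul_neg_one, neg_smul, smul_neg]

lemma wedge_single (x : ι) (Ψ : Finset ι → R) (S : Finset ι) :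
    wedge (Pi.single x 1) Ψ S = if x ∈ S then insertSign R S x * Ψ (S.erase x) else 0 := by
  simp [wedge, Pi.single_apply]

lemma wedge_add_left (f g : ι → R) (Ψ : Finset ι → R) :
    wedge (f + g) Ψ = wedge f Ψ + wedge g Ψ := by
  funext S
  simp only [wedge, Pi.add_apply, ← sum_add_distrib]
  exact sum_congr rfl fun _ _ => by ring

lemma wedge_congr {f g : ι → R} {Ψ Φ : Finset ι → R} {S : Finset ι} (hfg : ∀ x ∈ S, f x = g x)
    (hΨ : ∀ x ∈ S, Ψ (S.erase x) = Φ (S.erase x)) : wedge f Ψ S = wedge g Φ S :=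
  sum_congr rfl fun x hx => by rw [hfg x hx, hΨ x hx]

lemma slater_cons_eq_zero_of_mem_span {l : List (ι → R)} {f : ι → R}
    (hf : f ∈ Submodule.span R {g | g ∈ l}) : slater (f :: l) = 0 := by
  induction hf using Submodule.span_induction with
  | mem g hg =>
    obtain ⟨i, rfl⟩ := List.get_of_mem hg
    funext S
    simpa using slater_cons_self l.get i S
  | zero => funext S; simp [slater, wedge]
  | add f g _ _ hf hg => rw [slater, wedge_add_left, ← slater, ← slater, hf, hg, add_zero]
  | smul c f _ hf =>
    funext S
    have := congrFun hf S
    simp only [slater, wedge, Pi.zero_apply, Pi.smul_apply, smul_eq_mul] at this ⊢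
    rw [← mul_zero c, ← this, mul_sum]
    exact sum_congr rfl fun _ _ => by ring

lemma slater_eq_zero_of_forall_eq_zero {l : List (ι → R)} {S : Finset ι} {x : ι} (hx : x ∈ S)
    (hl : ∀ f ∈ l, f x = 0) : slater l S = 0 := by
  induction l generalizing S with
  | nil => exact if_neg (ne_empty_of_mem hx)
  | cons f l ih =>
    refine sum_eq_zero fun y _ => ?_
    rcases eq_or_ne x y with rfl | hxy
    · rw [hl f List.mem_cons_self, mul_zero, zero_mul]
    · rw [ih (mem_erase.2 ⟨hxy, hx⟩) fun g hg => hl g (List.mem_cons_of_mem f hg), mul_zero]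

lemma exists_slater_map_single (l : List ι) (hl : l.Nodup) :
    ∃ ε : Rˣ, ∀ S, slater (l.map fun x => (Pi.single x 1 : ι → R)) S =
      if S = l.toFinset then (ε : R) else 0 := by
  induction l with
  | nil => exact ⟨1, fun S => if_congr (by simp) rfl rfl⟩
  | cons x l ih =>
    obtain ⟨ε, hε⟩ := ih hl.of_cons
    have hx : x ∉ l.toFinset := by simpa using hl.notMem
    let δ := insertSign R (insert x l.toFinset) x
    have hδ : δ * δ = 1 := insertSign_mul_self _ x
    refine ⟨⟨δ, δ, hδ, hδ⟩ * ε, fun S => ?_⟩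
    rw [List.map_cons, slater, wedge_single, hε, List.toFinset_cons]
    by_cases hS : S = insert x l.toFinset
    · subst hS
      simp [δ, erase_insert hx]
    · rw [if_neg hS]
      refine ite_eq_right_iff.2 fun hxS => ?_
      rw [if_neg fun h => hS (by rw [← h, insert_erase hxS]), mul_zero]

/-- Reflecting the columns splits the matrix `(A B; B A)` into `A + B` and `A - B`. -/
lemma det_fromBlocks_symm {n : Type*} [Fintype n] [DecidableEq n] (A B : Matrix n n R) :
    (Matrix.fromBlocks A B B A).det = (A + B).det * (A - B).det := by
  have triangularize : Matrix.fromBlocks 1 0 1 1 * Matrix.fromBlocks A B B A *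
      Matrix.fromBlocks 1 0 (-1) 1 = Matrix.fromBlocks (A - B) B 0 (A + B) := by
    rw [Matrix.fromBlocks_multiply, Matrix.fromBlocks_multiply]
    congr 1 <;> simp [add_comm, ← sub_eq_add_neg]
  have := congrArg Matrix.det triangularize
  simp only [Matrix.det_mul, Matrix.det_fromBlocks_zero₁₂, Matrix.det_fromBlocks_zero₂₁,
    Matrix.det_one, one_mul, mul_one] at this
  rw [this, mul_comm]

lemma strictMono_append_reflect {r : ι → ι} (hr : StrictAnti r) {n : ℕ} {e : Fin n → ι}
    (he : StrictMono e) (hlt : ∀ i j, r (e i) < e j) :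
    StrictMono (Fin.append (fun j => r (e j.rev)) e) := by
  intro i j
  refine Fin.addCases (fun i => ?_) (fun i => ?_) i <;>
    refine Fin.addCases (fun j => ?_) (fun j => ?_) j <;>
    simp only [Fin.append_left, Fin.append_right] <;> intro hij
  · exact hr (he (Fin.rev_lt_rev.2 hij))
  · exact hlt _ _
  · rw [Fin.lt_def, Fin.val_natAdd, Fin.val_castAdd] at hij
    omega
  · exact he (by simpa only [Fin.lt_def, Fin.val_natAdd, add_lt_add_iff_left] using hij)

lemma image_append_reflect {n : ℕ} (r : ι → ι) (e : Fin n → ι) :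
    univ.image (Fin.append (fun j => r (e j.rev)) e) =
      univ.image e ∪ (univ.image e).image r := by
  ext x
  simp only [mem_image, mem_union, mem_univ, true_and, exists_exists_eq_and]
  rw [← finSumFinEquiv.exists_congr_right, Sum.exists, or_comm,
    Fin.rev_surjective.exists (p := fun j => r (e j) = x)]
  simp only [finSumFinEquiv_apply_left, finSumFinEquiv_apply_right, Fin.append_left,
    Fin.append_right]

lemma det_append_reflect {α : Type*} {n : ℕ} {r : α → α} (hinv : ∀ x, r (r x) = x)
    (f : Fin n → α → R) (e : Fin n → α) :
    (Matrix.of fun i j => Fin.append (fun i => f i ∘ r) f i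
      (Fin.append (fun j => r (e j.rev)) e j)).det =
      Equiv.Perm.sign (Fin.revPerm (n := n)) * (Matrix.of fun i j => (f i + f i ∘ r) (e j)).det *
        (Matrix.of fun i j => (f i - f i ∘ r) (e j)).det := by
  let A : Matrix (Fin n) (Fin n) R := Matrix.of fun i j => f i (e j)
  let B : Matrix (Fin n) (Fin n) R := Matrix.of fun i j => f i (r (e j))
  have hblocks : (Matrix.of fun i j => Fin.append (fun i => f i ∘ r) f i
      (Fin.append (fun j => r (e j.rev)) e j)).submatrix finSumFinEquiv finSumFinEquiv =
      (Matrix.fromBlocks A B B A).submatrix id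
        (Equiv.sumCongr Fin.revPerm (Equiv.refl (Fin n))) := by
    ext i j
    rcases i with i | i <;> rcases j with j | j <;> simp [A, B, hinv, -Fin.natAdd_eq_addNat]
  rw [← Matrix.det_submatrix_equiv_self finSumFinEquiv, hblocks, Matrix.det_permute',
    det_fromBlocks_symm, Equiv.Perm.sign_sumCongr, Equiv.Perm.sign_refl, mul_one, mul_assoc]
  rfl

lemma exists_slater_reflected_append {r : ι → ι} (hr : StrictAnti r) (hinv : ∀ x, r (r x) = x)
    (l : List (ι → R)) : ∃ ε : Rˣ, ∀ E : Finset ι, (∀ x ∈ E, ∀ y ∈ E, r x < y) →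
      slater (l.map (· ∘ r) ++ l) (E ∪ E.image r) =
        ε * slater (l.map fun f => f + f ∘ r) E * slater (l.map fun f => f - f ∘ r) E := by
  obtain ⟨n, f, rfl⟩ : ∃ n, ∃ f : Fin n → ι → R, l = List.ofFn f := ⟨_, l.get, by simp⟩
  refine ⟨(Equiv.Perm.sign (Fin.revPerm (n := n))).map (Int.castRingHom R), fun E hE => ?_⟩
  by_cases hn : #E = n
  · have hc := strictMono_append_reflect hr (E.orderEmbOfFin hn).strictMono fun i j =>
      hE _ (orderEmbOfFin_mem E hn i) _ (orderEmbOfFin_mem E hn j)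
    have himage := image_append_reflect r (E.orderEmbOfFin hn)
    rw [image_orderEmbOfFin_univ] at himage
    have hlist : (List.ofFn f).map (· ∘ r) ++ List.ofFn f =
        List.ofFn (Fin.append (fun i => f i ∘ r) f) := by
      rw [List.ofFn_fin_append, List.map_ofFn]; rfl
    rw [hlist, ← himage, ← det_columns_eq_slater _ hc, det_append_reflect hinv, List.map_ofFn,
      List.map_ofFn, slater_eq_det _ _ hn, slater_eq_det _ _ hn]
    rfl
  · have hdisj : Disjoint E (E.image r) := by
      simp only [disjoint_left, mem_image, not_exists, not_and]
      exact fun x hx y hy hyx => (hE y hy x hx).ne hyx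
    have hcard : #(E ∪ E.image r) = #E + #E := by
      rw [card_union_of_disjoint hdisj, card_image_of_injective E hr.injective]
    rw [slater_eq_zero_of_card_ne (S := E ∪ _), slater_eq_zero_of_card_ne (S := E), mul_zero,
      zero_mul]
    · simpa using hn
    · simp only [List.length_append, List.length_map, List.length_ofFn]
      omega

end SlaterManipulation

section Step

variable {R : Type*} [CommRing R]

/-- One step of the lattice paths, on vectors: a path at `i` comes from `i` or from `i - 1`. -/
def shiftAdd : (ℤ → R) →ₗ[R] ℤ → R := LinearMap.id + LinearMap.funLeft R R (· - 1)

@[simp] lemma shiftAdd_apply (f : ℤ → R) (i : ℤ) : shiftAdd f i = f i + f (i - 1) := rfl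

/-- The positions one column earlier of paths occupying `S`, when those at `V` have just
stepped up. -/
def descend (S V : Finset ℤ) : Finset ℤ := V.image (· - 1) ∪ S \ V

lemma mem_descend {S V : Finset ℤ} {i : ℤ} :
    i ∈ descend S V ↔ i + 1 ∈ V ∨ i ∈ S ∧ i ∉ V := by
  simp [descend, sub_eq_iff_eq_add]

/-- No two paths stepping to `S` collide one column earlier. -/
def IsNoncolliding (S V : Finset ℤ) : Prop := ∀ i ∈ S, i ∉ V → i + 1 ∉ V

instance (S V : Finset ℤ) : Decidable (IsNoncolliding S V) := by
  unfold IsNoncolliding; infer_instance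

lemma card_descend {S V : Finset ℤ} (hV : V ⊆ S) (h : IsNoncolliding S V) :
    #(descend S V) = #S := by
  have hdisj : Disjoint (V.image (· - 1)) (S \ V) := by
    simp only [disjoint_left, mem_image, mem_sdiff, not_and, not_not]
    rintro _ ⟨i, hi, rfl⟩ hiS
    by_contra hiV
    exact h _ hiS hiV (by rwa [sub_add_cancel])
  rw [descend, card_union_of_disjoint hdisj, card_image_of_injective _ (sub_left_injective),
    add_comm, card_sdiff_add_card_eq_card hV]

lemma strictMono_piecewise_sub_one {n : ℕ} (s : Fin n ↪o ℤ) {V : Finset (Fin n)}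
    (h : IsNoncolliding (univ.map s.toEmbedding) (V.map s.toEmbedding)) :
    StrictMono (V.piecewise (fun j => s j - 1) s) := by
  intro i j hij
  have hs := s.strictMono hij
  by_cases hj : j ∈ V <;> by_cases hi : i ∈ V <;> simp only [hi, hj, not_false_eq_true,
    piecewise_eq_of_mem, piecewise_eq_of_notMem]
  · omega
  · have hcol := h (s i) (by simp) (by simpa using hi)
    have hne : s j ≠ s i + 1 := fun e => hcol (e ▸ mem_map_of_mem s.toEmbedding hj)
    omega
  · omega
  · exact hs

lemma det_piecewise_columns {n : ℕ} (f : Fin n → ℤ → R) (s : Fin n ↪o ℤ) (V : Finset (Fin n)) :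
    (Matrix.of fun i j => f i (V.piecewise (fun j => s j - 1) s j)).det =
      if IsNoncolliding (univ.map s.toEmbedding) (V.map s.toEmbedding)
      then slater (List.ofFn f) (descend (univ.map s.toEmbedding) (V.map s.toEmbedding))
      else 0 := by
  split_ifs with h
  · rw [det_columns_eq_slater f (strictMono_piecewise_sub_one s h)]
    congr 1
    refine eq_of_subset_of_card_le (fun x hx => ?_) ?_
    · obtain ⟨i, -, rfl⟩ := mem_image.1 hx
      by_cases hi : i ∈ V <;> simp [mem_descend, hi]
    · rw [card_descend (map_subset_map.2 (subset_univ V)) h, card_map,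
        card_image_of_injective _ (strictMono_piecewise_sub_one s h).injective]
  · unfold IsNoncolliding at h
    push Not at h
    obtain ⟨x, hx, hxV, hxV'⟩ := h
    obtain ⟨i, -, rfl⟩ := mem_map.1 hx
    obtain ⟨j, hj, hij⟩ := mem_map.1 hxV'
    have hi : i ∉ V := by simpa using hxV
    refine Matrix.det_zero_of_column_eq (ne_of_mem_of_not_mem hj hi) fun k => ?_
    have hji : s j - 1 = s i := sub_eq_of_eq_add hij
    simp [hi, hj, hji]

lemma slater_map_shiftAdd_map_univ {n : ℕ} (f : Fin n → ℤ → R) (s : Fin n ↪o ℤ) :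
    slater ((List.ofFn f).map shiftAdd) (univ.map s.toEmbedding) =
      ∑ V : Finset (Fin n),
        (Matrix.of fun i j => f i (V.piecewise (fun j => s j - 1) s j)).det := by
  have hpiecewise (V : Finset (Fin n)) :
      (Matrix.of fun i j => f i (V.piecewise (fun j => s j - 1) s j)).det =
        Matrix.det (V.piecewise (fun j i => f i (s j - 1)) fun j i => f i (s j)) := by
    rw [← Matrix.det_transpose]
    congr 1
    ext i j
    by_cases hi : i ∈ V <;> simp [hi]
  have hcolumns : (Matrix.of fun i j => (shiftAdd ∘ f) i (s j)).transpose =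
      (fun j i => f i (s j - 1)) + fun j i => f i (s j) := by
    ext j i
    exact add_comm _ _
  have hslater := det_columns_eq_slater (shiftAdd ∘ f) s.strictMono
  rw [← Matrix.det_transpose, hcolumns, ← List.map_ofFn] at hslater
  rw [map_eq_image, sum_congr rfl fun V _ => hpiecewise V]
  exact hslater.symm.trans (Matrix.detRowAlternating.toMultilinearMap.map_add_univ _ _)

/-- Expanding the determinant along all columns at once, two colliding paths give two equal
columns. -/
theorem slater_map_shiftAdd (l : List (ℤ → R)) (S : Finset ℤ) :
    slater (l.map shiftAdd) S =
      ∑ V ∈ S.powerset with IsNoncolliding S V, slater l (descend S V) := by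
  obtain ⟨n, f, rfl⟩ : ∃ n, ∃ f : Fin n → ℤ → R, l = List.ofFn f := ⟨_, l.get, by simp⟩
  by_cases hn : #S = n
  · obtain ⟨s, rfl⟩ : ∃ s : Fin n ↪o ℤ, S = univ.map s.toEmbedding :=
      ⟨S.orderEmbOfFin hn, (map_orderEmbOfFin_univ S hn).symm⟩
    rw [slater_map_shiftAdd_map_univ, sum_congr rfl fun V _ => det_piecewise_columns f s V,
      sum_filter]
    refine sum_nbij (·.map s.toEmbedding) ?_ ?_ ?_ fun _ _ => rfl
    · exact fun V _ => mem_powerset.2 (map_subset_map.2 (subset_univ V))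
    · exact (map_injective _).injOn
    · intro V hV
      obtain ⟨W, -, rfl⟩ := subset_map_iff.1 (mem_powerset.1 hV)
      exact ⟨W, mem_coe.2 (mem_univ W), rfl⟩
  · rw [slater_eq_zero_of_card_ne (by simpa using hn), eq_comm]
    refine sum_eq_zero fun V hV => ?_
    rw [mem_filter, mem_powerset] at hV
    exact slater_eq_zero_of_card_ne (by simpa [card_descend hV.1 hV.2] using hn)

end Step

section PathCount

/-- The reflection of the sites of column `m` in the horizontal symmetry axis. -/
def mirror (m i : ℤ) : ℤ := m - 1 - i

lemma mirror_mirror (m i : ℤ) : mirror m (mirror m i) = i := by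
  simp only [mirror]; omega

lemma strictAnti_mirror (m : ℤ) : StrictAnti (mirror m) := fun _ _ h => by
  simp only [mirror]; omega

/-- The two sites of column `m` on the vertical side of a hole, if there is one: the hole with
parameter `κ` ends in column `2κ`. -/
def holeSites (K : Finset ℕ) (m : ℕ) : Finset ℤ :=
  if ∃ κ ∈ K, m = 2 * κ then {(m : ℤ) / 2 - 1, (m : ℤ) / 2} else ∅

/-- The number of families of nonintersecting lattice paths ending at the sites `S` of column `m`
and starting from the western side of the hexagon or from the holes in columns before `m`. With
the condition `σ`, only families invariant under reflection in the horizontal axis count: the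
reflection exchanges up-steps, ending at `V`, and down-steps. -/
def pathCount (b : ℕ) (K : Finset ℕ) (σ : Prop) [Decidable σ] : ℕ → Finset ℤ → ℕ
  | 0, S => if S = Ico (-b : ℤ) b then 1 else 0
  | m + 1, S => ∑ V ∈ S.powerset with IsNoncolliding S V ∧ holeSites K m ⊆ descend S V ∧
      (σ → V.image (mirror (m + 1)) = S \ V), pathCount b K σ m (descend S V \ holeSites K m)

/-- The unit vector at the upper site of the hole ending in column `m`, if there is one. -/
def holeVectors (K : Finset ℕ) (m : ℕ) : List (ℤ → ℤ) :=
  if ∃ κ ∈ K, m = 2 * κ then [Pi.single ((m : ℤ) / 2) 1] else []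

/-- The vectors counting the paths to column `m` from each starting point above the horizontal
axis. -/
def halfVectors (b : ℕ) (K : Finset ℕ) : ℕ → List (ℤ → ℤ)
  | 0 => (List.range b).reverse.map fun k : ℕ => Pi.single (k : ℤ) 1
  | m + 1 => (holeVectors K m ++ halfVectors b K m).map shiftAdd

/-- A list of vectors on column `m`, together with their reflections. -/
def withReflections (m : ℤ) (l : List (ℤ → ℤ)) : List (ℤ → ℤ) := l.map (· ∘ mirror m) ++ l

lemma hole_cases (K : Finset ℕ) (m : ℕ) :
    (∃ κ : ℤ, (m : ℤ) = 2 * κ ∧ holeSites K m = {κ - 1, κ} ∧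
      holeVectors K m = [Pi.single κ 1]) ∨ holeSites K m = ∅ ∧ holeVectors K m = [] := by
  unfold holeSites holeVectors
  split_ifs with h
  · obtain ⟨κ, -, rfl⟩ := h
    exact .inl ⟨κ, by push_cast; rfl, by simp, by simp⟩
  · exact .inr ⟨rfl, rfl⟩

lemma withReflections_map_shiftAdd (m : ℤ) (l : List (ℤ → ℤ)) :
    withReflections (m + 1) (l.map shiftAdd) = (withReflections m l).map shiftAdd := by
  simp only [withReflections, List.map_append, List.map_map]
  congr 2
  funext f i
  simp only [Function.comp_apply, shiftAdd_apply, mirror]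
  rw [add_comm]
  congr 2 <;> omega

lemma single_comp_mirror (m x : ℤ) :
    (Pi.single x 1 : ℤ → ℤ) ∘ mirror m = Pi.single (mirror m x) 1 := by
  funext i
  simp only [Function.comp_apply, Pi.single_apply, mirror]
  exact if_congr (by omega) rfl rfl

lemma insertSign_add_one {S : Finset ℤ} {i : ℤ} (hi : i ∈ S) :
    insertSign ℤ S (i + 1) = -insertSign ℤ S i := by
  have below : {y ∈ S | y < i + 1} = insert i {y ∈ S | y < i} := by
    ext y
    simp only [mem_filter, mem_insert]
    grind
  rw [insertSign, insertSign, below, card_insert_of_notMem (by simp), pow_succ, mul_neg_one]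

lemma exists_slater_hole (K : Finset ℕ) (m : ℕ) (l : List (ℤ → ℤ)) :
    ∃ ε : ℤˣ, ∀ S, slater (withReflections m (holeVectors K m ++ l)) S =
      ε * if holeSites K m ⊆ S then slater (withReflections m l) (S \ holeSites K m) else 0 := by
  obtain ⟨κ, hm, hsites, hvec⟩ | ⟨hsites, hvec⟩ := hole_cases K m
  · refine ⟨(-1) ^ l.length, fun S => ?_⟩
    rw [hsites, hvec, withReflections, List.singleton_append, List.map_cons, slater_append_cons,
      single_comp_mirror, show mirror m κ = κ - 1 by simp only [mirror]; omega,
      List.cons_append, Pi.smul_apply, slater, slater, wedge_single, wedge_single,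
      withReflections, List.length_cons, List.length_map]
    by_cases h : {κ - 1, κ} ⊆ S
    · obtain ⟨hκ', hκ⟩ := insert_subset_iff.1 h
      rw [singleton_subset_iff] at hκ
      have hsign := insertSign_add_one hκ'
      rw [sub_add_cancel] at hsign
      rw [if_pos h, if_pos hκ, if_pos (by simp [hκ']), insertSign_erase_of_le (by omega), hsign,
        show (S.erase κ).erase (κ - 1) = S \ {κ - 1, κ} by grind]
      have := insertSign_mul_self (R := ℤ) S (κ - 1)
      simp only [smul_eq_mul, pow_succ]
      push_cast
      linear_combination (-1) ^ l.length *
        slater (l.map (· ∘ mirror m) ++ l) (S \ {κ - 1, κ}) * this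
    · rw [if_neg h, mul_zero]
      by_cases hκ : κ ∈ S
      · rw [if_pos hκ, if_neg (by grind), mul_zero, smul_zero]
      · rw [if_neg hκ, smul_zero]
  · exact ⟨1, fun S => by simp [hsites, hvec]⟩

lemma exists_slater_halfVectors_zero (b : ℕ) (K : Finset ℕ) :
    ∃ ε : ℤˣ, ∀ S, slater (withReflections 0 (halfVectors b K 0)) S =
      ε * if S = Ico (-b : ℤ) b then 1 else 0 := by
  let l : List ℤ := List.map Nat.cast (List.range b).reverse
  have hl : l.Nodup := List.Nodup.map Nat.cast_injective (List.nodup_reverse.2 List.nodup_range)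
  have hnodup : (l.map (mirror 0) ++ l).Nodup := by
    refine (List.Nodup.map (strictAnti_mirror 0).injective hl).append hl ?_
    simp [l, List.Disjoint, mirror]
    omega
  have hset : (l.map (mirror 0) ++ l).toFinset = Ico (-b : ℤ) b := by
    ext i
    simp only [l, mirror, List.mem_toFinset, List.mem_append, List.mem_map, List.mem_reverse,
      List.mem_range, mem_Ico]
    constructor
    · rintro (⟨_, ⟨k, hk, rfl⟩, rfl⟩ | ⟨k, hk, rfl⟩) <;> omega
    · intro hi
      rcases le_or_gt 0 i with h | h
      · exact .inr ⟨i.toNat, by omega, by omega⟩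
      · exact .inl ⟨_, ⟨(-1 - i).toNat, by omega, rfl⟩, by omega⟩
  have hlist : withReflections 0 (halfVectors b K 0) =
      (l.map (mirror 0) ++ l).map fun x => Pi.single x 1 := by
    simp only [withReflections, halfVectors, l, List.map_append, List.map_map]
    congr 1
    exact List.map_congr_left fun k _ => single_comp_mirror 0 k
  obtain ⟨ε, hε⟩ := exists_slater_map_single (R := ℤ) _ hnodup
  exact ⟨ε, fun S => by rw [hlist, hε, hset, mul_ite, mul_one, mul_zero]⟩

/-- The Lindström–Gessel–Viennot determinant for the number of path families. -/
theorem exists_pathCount_eq_slater (b : ℕ) (K : Finset ℕ) (m : ℕ) :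
    ∃ ε : ℤˣ, ∀ S, (pathCount b K False m S : ℤ) =
      ε * slater (withReflections m (halfVectors b K m)) S := by
  induction m with
  | zero =>
    obtain ⟨ε, hε⟩ := exists_slater_halfVectors_zero b K
    refine ⟨ε⁻¹, fun S => ?_⟩
    rw [Nat.cast_zero, hε, ← mul_assoc, Units.inv_mul, one_mul, pathCount]
    push_cast
    rfl
  | succ m ih =>
    obtain ⟨ε, hε⟩ := ih
    obtain ⟨ε', hε'⟩ := exists_slater_hole K m (halfVectors b K m)
    refine ⟨ε * ε'⁻¹, fun S => ?_⟩
    rw [halfVectors, Nat.cast_succ, withReflections_map_shiftAdd, slater_map_shiftAdd, pathCount,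
      ← filter_filter, sum_filter, mul_sum, Nat.cast_sum]
    refine sum_congr rfl fun V _ => ?_
    simp only [false_imp_iff, and_true]
    rw [hε', Units.val_mul, mul_assoc, Units.inv_mul_cancel_left, mul_ite, mul_zero, ← hε]
    push_cast
    rfl

end PathCount

section SymmetricPathCount

/-- The sites of `S` above the horizontal axis of column `m`. -/
def upperHalf (m : ℤ) (S : Finset ℤ) : Finset ℤ := {i ∈ S | m ≤ 2 * i}

/-- The antisymmetric parts of vectors on column `m`, up to the factor `2`. -/
def antisymmetrize (m : ℤ) (l : List (ℤ → ℤ)) : List (ℤ → ℤ) := l.map fun f => f - f ∘ mirror m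

lemma antisymmetrize_map_shiftAdd (m : ℤ) (l : List (ℤ → ℤ)) :
    antisymmetrize (m + 1) (l.map shiftAdd) = (antisymmetrize m l).map shiftAdd := by
  simp only [antisymmetrize, List.map_map]
  congr 1
  funext f i
  simp only [Function.comp_apply, shiftAdd_apply, Pi.sub_apply, mirror]
  rw [show m + 1 - 1 - i - 1 = m - 1 - i by ring, show m + 1 - 1 - i = m - 1 - (i - 1) by ring]
  ring

lemma mirror_mem_iff {m : ℤ} {S : Finset ℤ} (hS : S.image (mirror m) = S) {i : ℤ} :
    mirror m i ∈ S ↔ i ∈ S := by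
  conv_lhs => rw [← hS]
  exact (strictAnti_mirror m).injective.mem_finset_image

lemma mirror_mem_iff_mem_sdiff {m : ℤ} {S V : Finset ℤ} (h : V.image (mirror m) = S \ V) {i : ℤ} :
    mirror m i ∈ V ↔ i ∈ S ∧ i ∉ V := by
  rw [← mem_sdiff, ← h]
  conv_rhs => rw [← mirror_mirror m i]
  exact (strictAnti_mirror m).injective.mem_finset_image.symm

lemma image_mirror_descend {m : ℤ} {S V : Finset ℤ} (h : V.image (mirror (m + 1)) = S \ V) :
    (descend S V).image (mirror m) = descend S V := by
  have hmem (i : ℤ) : mirror m i ∈ descend S V ↔ i ∈ descend S V := by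
    have h₁ := mirror_mem_iff_mem_sdiff h (i := i)
    have h₂ := mirror_mem_iff_mem_sdiff h (i := mirror m i)
    rw [show mirror (m + 1) (mirror m i) = i + 1 by simp only [mirror]; ring] at h₂
    rw [mem_descend, mem_descend, h₂, ← h₁, show mirror m i + 1 = mirror (m + 1) i by
      simp only [mirror]; ring]
    exact or_comm
  ext i
  rw [← hmem, ← mirror_mirror m i, (strictAnti_mirror m).injective.mem_finset_image, mirror_mirror]

lemma two_mul_ne_of_mem_descend {m : ℤ} {S V : Finset ℤ} (h : V.image (mirror (m + 1)) = S \ V)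
    (hV : IsNoncolliding S V) {i : ℤ} (hi : i ∈ descend S V) : 2 * i ≠ m - 1 := by
  intro him
  have := mirror_mem_iff_mem_sdiff h (i := i)
  rw [show mirror (m + 1) i = i + 1 by simp only [mirror]; omega] at this
  have := mem_descend.1 hi
  have := hV i
  tauto

lemma upperHalf_descend {m : ℤ} {S V : Finset ℤ} (hS : ∀ i ∈ S, 2 * i ≠ m)
    (h : V.image (mirror (m + 1)) = S \ V) (hV : IsNoncolliding S V) :
    upperHalf m (descend S V) = descend (upperHalf (m + 1) S) (upperHalf (m + 1) V) := by
  ext i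
  have := hS i
  have hcenter := two_mul_ne_of_mem_descend h hV (i := i)
  simp only [upperHalf, mem_filter, mem_descend] at hcenter ⊢
  grind

/-- The extension of a set `W` of up-steps, ending above the horizontal axis at sites of `S`, to a
set of up-steps invariant under reflection. -/
def symmetricExtension (m : ℤ) (S W : Finset ℤ) : Finset ℤ :=
  W ∪ (upperHalf (m + 1) S \ W).image (mirror (m + 1))

lemma mem_symmetricExtension {m : ℤ} {S W : Finset ℤ} (hS : S.image (mirror (m + 1)) = S) {i : ℤ} :
    i ∈ symmetricExtension m S W ↔ i ∈ W ∨ i ∈ S ∧ 2 * i ≤ m - 1 ∧ m - i ∉ W := by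
  have hmem : m - i ∈ S ↔ i ∈ S := by
    rw [← mirror_mem_iff hS (i := i), mirror, add_sub_cancel_right]
  rw [symmetricExtension, mem_union, ← mirror_mirror (m + 1) i,
    (strictAnti_mirror _).injective.mem_finset_image, mirror_mirror, mirror, add_sub_cancel_right,
    mem_sdiff, upperHalf, mem_filter, and_assoc, hmem]
  grind

lemma symmetricExtension_upperHalf {m : ℤ} {S V : Finset ℤ} (hS : S.image (mirror (m + 1)) = S)
    (hcenter : ∀ i ∈ S, 2 * i ≠ m) (hVS : V ⊆ S) (hV : V.image (mirror (m + 1)) = S \ V) :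
    symmetricExtension m S (upperHalf (m + 1) V) = V := by
  ext i
  have hmem := mirror_mem_iff_mem_sdiff hV (i := i)
  simp only [mirror, add_sub_cancel_right] at hmem
  rw [mem_symmetricExtension hS]
  simp only [upperHalf, mem_filter]
  grind

lemma upperHalf_symmetricExtension {m : ℤ} {S W : Finset ℤ} (hS : S.image (mirror (m + 1)) = S)
    (hW : W ⊆ upperHalf (m + 1) S) : upperHalf (m + 1) (symmetricExtension m S W) = W := by
  ext i
  rw [upperHalf, mem_filter, mem_symmetricExtension hS]
  have hi := fun hi => mem_filter.1 (@hW i hi)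
  grind

lemma image_mirror_symmetricExtension {m : ℤ} {S W : Finset ℤ}
    (hS : S.image (mirror (m + 1)) = S) (hcenter : ∀ i ∈ S, 2 * i ≠ m)
    (hW : W ⊆ upperHalf (m + 1) S) :
    (symmetricExtension m S W).image (mirror (m + 1)) = S \ symmetricExtension m S W := by
  ext i
  have hmem : m - i ∈ S ↔ i ∈ S := by
    rw [← mirror_mem_iff hS (i := i), mirror, add_sub_cancel_right]
  have hi := fun hi => mem_filter.1 (@hW i hi)
  have hi' := fun hi => mem_filter.1 (@hW (m - i) hi)
  rw [← mirror_mirror (m + 1) i, (strictAnti_mirror _).injective.mem_finset_image, mem_sdiff,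
    mem_symmetricExtension hS, mirror_mirror, mem_symmetricExtension hS, mirror,
    add_sub_cancel_right, hmem]
  grind

lemma isNoncolliding_symmetricExtension {m : ℤ} {S W : Finset ℤ}
    (hS : S.image (mirror (m + 1)) = S) (hcenter : ∀ i ∈ S, 2 * i ≠ m)
    (hWS : W ⊆ upperHalf (m + 1) S) (hW : IsNoncolliding (upperHalf (m + 1) S) W)
    (hdesc : ∀ i ∈ descend (upperHalf (m + 1) S) W, 2 * i ≠ m - 1) :
    IsNoncolliding S (symmetricExtension m S W) := by
  intro i hi hiV
  have hmem : m - (i + 1) ∈ S ↔ i + 1 ∈ S := by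
    rw [← mirror_mem_iff hS (i := i + 1), mirror, add_sub_cancel_right]
  rw [mem_symmetricExtension hS] at hiV ⊢
  simp only [mem_descend, IsNoncolliding] at hW hdesc
  have hsub := fun i hi => mem_filter.1 (@hWS i hi)
  simp only [upperHalf, mem_filter] at hW hdesc
  have := hW i
  have := hW (m - (i + 1))
  have := hdesc i
  grind

/-- The steps invariant under reflection are determined by the steps above the axis, which must
not descend to the axis. -/
lemma sum_mirror_steps {M : Type*} [AddCommMonoid M] {m : ℤ} {S : Finset ℤ}
    (hS : S.image (mirror (m + 1)) = S) (hcenter : ∀ i ∈ S, 2 * i ≠ m) (F : Finset ℤ → M) :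
    ∑ V ∈ S.powerset with IsNoncolliding S V ∧ V.image (mirror (m + 1)) = S \ V,
        F (upperHalf m (descend S V)) =
      ∑ W ∈ (upperHalf (m + 1) S).powerset with IsNoncolliding (upperHalf (m + 1) S) W ∧
        ∀ i ∈ descend (upperHalf (m + 1) S) W, 2 * i ≠ m - 1,
        F (descend (upperHalf (m + 1) S) W) := by
  refine sum_nbij' (upperHalf (m + 1)) (symmetricExtension m S) ?_ ?_ ?_ ?_ ?_ <;>
    simp only [mem_filter, mem_powerset, and_imp]
  · intro V hVS hV hmem
    refine ⟨filter_subset_filter _ hVS, ?_, fun i hi => ?_⟩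
    · intro i hi
      have := hV i
      grind [upperHalf]
    · rw [← upperHalf_descend hcenter hmem hV] at hi
      exact two_mul_ne_of_mem_descend hmem hV (mem_filter.1 hi).1
  · intro W hWS hW hdesc
    refine ⟨fun i hi => ?_, isNoncolliding_symmetricExtension hS hcenter hWS hW hdesc,
      image_mirror_symmetricExtension hS hcenter hWS⟩
    exact ((mem_symmetricExtension hS).1 hi).elim (fun hi => (mem_filter.1 (hWS hi)).1) And.left
  · exact fun V hVS _ hmem => symmetricExtension_upperHalf hS hcenter hVS hmem
  · exact fun W hWS _ _ => upperHalf_symmetricExtension hS hWS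
  · intro V _ hV hmem
    rw [upperHalf_descend hcenter hmem hV]

lemma slater_antisymmetrize_eq_zero {m i : ℤ} (hi : 2 * i = m - 1) {E : Finset ℤ} (hiE : i ∈ E)
    (l : List (ℤ → ℤ)) : slater (antisymmetrize m l) E = 0 := by
  refine slater_eq_zero_of_forall_eq_zero hiE fun f hf => ?_
  obtain ⟨g, -, rfl⟩ := List.mem_map.1 hf
  rw [Pi.sub_apply, Function.comp_apply, show mirror m i = i by simp only [mirror]; omega, sub_self]

lemma slater_antisymmetrize_map_shiftAdd (m : ℤ) (l : List (ℤ → ℤ)) (E : Finset ℤ) :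
    slater (antisymmetrize (m + 1) (l.map shiftAdd)) E =
      ∑ W ∈ E.powerset with IsNoncolliding E W ∧ ∀ i ∈ descend E W, 2 * i ≠ m - 1,
        slater (antisymmetrize m l) (descend E W) := by
  rw [antisymmetrize_map_shiftAdd, slater_map_shiftAdd, ← filter_filter]
  refine (sum_filter_of_ne fun W _ hW i hi him => hW ?_).symm
  exact slater_antisymmetrize_eq_zero him hi l

lemma single_sub_comp_mirror_apply {m x i : ℤ} (hx : m ≤ 2 * x) (hi : m ≤ 2 * i) :
    (Pi.single x 1 - Pi.single x 1 ∘ mirror m : ℤ → ℤ) i = (Pi.single x 1 : ℤ → ℤ) i := by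
  have : i ≠ mirror m x := by simp only [mirror]; omega
  rw [single_comp_mirror, Pi.sub_apply, Pi.single_eq_of_ne (M := fun _ => ℤ) this, sub_zero]

lemma image_mirror_holeSites (K : Finset ℕ) (m : ℕ) :
    (holeSites K m).image (mirror m) = holeSites K m := by
  obtain ⟨κ, hm, hsites, -⟩ | ⟨hsites, -⟩ := hole_cases K m
  · rw [hsites, image_insert, image_singleton, pair_comm,
      show mirror m κ = κ - 1 by simp only [mirror]; omega,
      show mirror m (κ - 1) = κ by simp only [mirror]; omega]
  · rw [hsites, image_empty]

lemma upperHalf_holeSites_subset_iff (K : Finset ℕ) (m : ℕ) {D : Finset ℤ}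
    (hD : D.image (mirror m) = D) :
    upperHalf m (holeSites K m) ⊆ upperHalf m D ↔ holeSites K m ⊆ D := by
  refine ⟨fun h i hi => ?_, fun h => filter_subset_filter _ h⟩
  rcases le_or_gt (m : ℤ) (2 * i) with him | him
  · exact (mem_filter.1 (h (mem_filter.2 ⟨hi, him⟩))).1
  · have hi' := (mirror_mem_iff (image_mirror_holeSites K m)).2 hi
    refine (mirror_mem_iff hD).1 (mem_filter.1 (h (mem_filter.2 ⟨hi', ?_⟩))).1
    obtain ⟨κ, hm, hsites, -⟩ | ⟨hsites, -⟩ := hole_cases K m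
    · rw [hsites, mem_insert, mem_singleton] at hi
      simp only [mirror]
      omega
    · simp [hsites] at hi

lemma slater_antisymmetrize_hole (K : Finset ℕ) (m : ℕ) (l : List (ℤ → ℤ)) {E : Finset ℤ}
    (hE : ∀ i ∈ E, (m : ℤ) ≤ 2 * i) :
    slater (antisymmetrize m (holeVectors K m ++ l)) E =
      if upperHalf m (holeSites K m) ⊆ E then slater (antisymmetrize m l) (E \ holeSites K m)
      else 0 := by
  obtain ⟨κ, hm, hsites, hvec⟩ | ⟨hsites, hvec⟩ := hole_cases K m
  · have hupper : upperHalf m {κ - 1, κ} = {κ} := by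
      ext i
      simp only [upperHalf, mem_filter, mem_insert, mem_singleton]
      omega
    have hsign : insertSign ℤ E κ = 1 := by
      rw [insertSign, filter_eq_empty_iff.2 fun i hi => ?_, card_empty, pow_zero]
      have := hE i hi
      omega
    rw [hsites, hvec, hupper, List.singleton_append, antisymmetrize, List.map_cons, slater,
      wedge_congr (fun i hi => single_sub_comp_mirror_apply hm.le (hE i hi)) fun _ _ => rfl,
      wedge_single, hsign, one_mul]
    refine if_congr singleton_subset_iff.symm (congrArg _ ?_) rfl
    ext i
    have := hE i
    simp only [mem_erase, mem_sdiff, mem_insert, mem_singleton]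
    grind
  · simp [hsites, hvec, upperHalf]

lemma slater_map_congr {α : Type*} {f g : α → ℤ → ℤ} {l : List α} {S : Finset ℤ}
    (h : ∀ a ∈ l, ∀ x ∈ S, f a x = g a x) : slater (l.map f) S = slater (l.map g) S := by
  induction l generalizing S with
  | nil => rfl
  | cons a l ih =>
    refine wedge_congr (h a List.mem_cons_self) fun x _ => ih fun c hc y hy => ?_
    exact h c (List.mem_cons_of_mem a hc) y (mem_of_mem_erase hy)

lemma exists_slater_antisymmetrize_zero (b : ℕ) (K : Finset ℕ) :
    ∃ ε : ℤˣ, ∀ S, S.image (mirror 0) = S →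
      slater (antisymmetrize 0 (halfVectors b K 0)) (upperHalf 0 S) =
        ε * if S = Ico (-b : ℤ) b then 1 else 0 := by
  let l : List ℤ := List.map Nat.cast (List.range b).reverse
  have hl : l.Nodup := List.Nodup.map Nat.cast_injective (List.nodup_reverse.2 List.nodup_range)
  have hl' (i) : i ∈ l.toFinset ↔ 0 ≤ i ∧ i < b := by
    simp only [l, List.mem_toFinset, List.mem_map, List.mem_reverse, List.mem_range]
    exact ⟨by rintro ⟨k, hk, rfl⟩; omega, fun hi => ⟨i.toNat, by omega, by omega⟩⟩
  have hlist : antisymmetrize 0 (halfVectors b K 0) =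
      l.map fun x => Pi.single x 1 - Pi.single x 1 ∘ mirror 0 := by
    simp only [antisymmetrize, halfVectors, l, List.map_map]
    rfl
  obtain ⟨ε, hε⟩ := exists_slater_map_single (R := ℤ) l hl
  refine ⟨ε, fun S hS => ?_⟩
  have hhalf (x) (hx : x ∈ l) (i) (hi : i ∈ upperHalf 0 S) :
      (Pi.single x 1 - Pi.single x 1 ∘ mirror 0 : ℤ → ℤ) i = (Pi.single x 1 : ℤ → ℤ) i := by
    have := (hl' x).1 (List.mem_toFinset.2 hx)
    exact single_sub_comp_mirror_apply (by omega) (mem_filter.1 hi).2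
  have hS' (i) : -1 - i ∈ S ↔ i ∈ S := by
    rw [← mirror_mem_iff hS (i := i), mirror, zero_sub]
  rw [hlist, slater_map_congr hhalf, hε, mul_ite, mul_one, mul_zero]
  refine if_congr ?_ rfl rfl
  simp only [Finset.ext_iff, hl', upperHalf, mem_filter, mem_Ico]
  refine ⟨fun h i => ?_, fun h i => ?_⟩
  · have := h i
    have := h (-1 - i)
    grind
  · rw [h i]
    omega

lemma pathCount_true_succ {b : ℕ} {K : Finset ℕ} {m : ℕ} {G : Finset ℤ → ℤ}
    (hG : ∀ S : Finset ℤ, S.image (mirror m) = S → (∀ i ∈ S, 2 * i ≠ (m : ℤ) - 1) →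
      (pathCount b K True m S : ℤ) = G (upperHalf m S))
    {S : Finset ℤ} (hS : S.image (mirror (m + 1)) = S) (hcenter : ∀ i ∈ S, 2 * i ≠ m) :
    (pathCount b K True (m + 1) S : ℤ) =
      ∑ W ∈ (upperHalf (m + 1) S).powerset with IsNoncolliding (upperHalf (m + 1) S) W ∧
        ∀ i ∈ descend (upperHalf (m + 1) S) W, 2 * i ≠ (m : ℤ) - 1,
        if upperHalf m (holeSites K m) ⊆ descend (upperHalf (m + 1) S) W then
          G (descend (upperHalf (m + 1) S) W \ holeSites K m) else 0 := by
  rw [← sum_mirror_steps hS hcenter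
    fun D => if upperHalf m (holeSites K m) ⊆ D then G (D \ holeSites K m) else 0,
    pathCount, Nat.cast_sum, sum_filter, sum_filter]
  refine sum_congr rfl fun V _ => ?_
  by_cases hV : IsNoncolliding S V ∧ V.image (mirror (m + 1)) = S \ V
  · have hsymm := image_mirror_descend hV.2
    have hcenter' (i) (hi : i ∈ descend S V \ holeSites K m) :=
      two_mul_ne_of_mem_descend hV.2 hV.1 (mem_sdiff.1 hi).1
    have hupper : upperHalf m (descend S V \ holeSites K m) =
        upperHalf m (descend S V) \ holeSites K m := by
      ext i
      simp only [upperHalf, mem_filter, mem_sdiff]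
      tauto
    simp only [hV, true_and, and_true, true_imp_iff, upperHalf_holeSites_subset_iff K m hsymm]
    rw [if_pos trivial, hG _ (by
      rw [image_sdiff _ _ (strictAnti_mirror m).injective, hsymm, image_mirror_holeSites])
      hcenter', hupper]
  · rw [if_neg (by tauto), if_neg hV]

theorem exists_pathCount_true_eq_slater (b : ℕ) (K : Finset ℕ) (m : ℕ) :
    ∃ ε : ℤˣ, ∀ S : Finset ℤ, S.image (mirror m) = S → (∀ i ∈ S, 2 * i ≠ (m : ℤ) - 1) →
      (pathCount b K True m S : ℤ) =
        ε * slater (antisymmetrize m (halfVectors b K m)) (upperHalf m S) := by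
  induction m with
  | zero =>
    obtain ⟨ε, hε⟩ := exists_slater_antisymmetrize_zero b K
    refine ⟨ε⁻¹, fun S hS _ => ?_⟩
    rw [Nat.cast_zero, hε S hS, ← mul_assoc, Units.inv_mul, one_mul, pathCount]
    push_cast
    rfl
  | succ m ih =>
    obtain ⟨ε, hε⟩ := ih
    refine ⟨ε, fun S hS hcenter => ?_⟩
    push_cast at hS hcenter ⊢
    rw [add_sub_cancel_right] at hcenter
    let G (E : Finset ℤ) := ε * slater (antisymmetrize m (halfVectors b K m)) E
    rw [pathCount_true_succ (G := G) hε hS hcenter, halfVectors,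
      slater_antisymmetrize_map_shiftAdd, mul_sum]
    refine sum_congr rfl fun W hW => ?_
    rw [mem_filter, mem_powerset] at hW
    rw [slater_antisymmetrize_hole K m _ fun i hi => ?_, mul_ite, mul_zero]
    have := hW.2.2 i hi
    have hupper (j) (hj : j ∈ upperHalf (m + 1) S) : (m : ℤ) + 1 ≤ 2 * j := (mem_filter.1 hj).2
    rcases mem_descend.1 hi with hi | hi
    · have := hupper _ (hW.1 hi)
      omega
    · have := hupper _ hi.1
      omega

end SymmetricPathCount

section Telescoping

/-- The symmetric parts of vectors on column `m`, up to the factor `2`. -/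
def symmetrize (m : ℤ) (l : List (ℤ → ℤ)) : List (ℤ → ℤ) := l.map fun f => f + f ∘ mirror m

/-- The defect of each vector in the list from being symmetric about `m / 2`, half a site above the
axis of column `m`, is the difference sequence of a combination of the symmetric parts of the
later vectors. -/
def IsTelescoping (m : ℤ) : List (ℤ → ℤ) → Prop
  | [] => True
  | f :: l => (∃ w ∈ Submodule.span ℤ {g | g ∈ symmetrize m l},
      ∀ y, f y - f (m - y) = w (y - 1) - w y) ∧ IsTelescoping m l

lemma symmetrize_map_shiftAdd (m : ℤ) (l : List (ℤ → ℤ)) :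
    symmetrize (m + 1) (l.map shiftAdd) = (symmetrize m l).map shiftAdd := by
  simp only [symmetrize, List.map_map]
  congr 1
  funext f i
  simp only [Function.comp_apply, shiftAdd_apply, Pi.add_apply, mirror]
  rw [show m + 1 - 1 - i - 1 = m - 1 - i by ring, show m + 1 - 1 - i = m - 1 - (i - 1) by ring]
  ring

lemma IsTelescoping.map_shiftAdd {m : ℤ} {l : List (ℤ → ℤ)} (h : IsTelescoping m l) :
    IsTelescoping (m + 1) (l.map shiftAdd) := by
  induction l with
  | nil => trivial
  | cons f l ih =>
    obtain ⟨⟨w, hw, hfw⟩, hl⟩ := h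
    refine ⟨⟨shiftAdd w, ?_, fun y => ?_⟩, ih hl⟩
    · rw [symmetrize_map_shiftAdd]
      refine Submodule.span_mono ?_ (Submodule.apply_mem_span_image_of_mem_span shiftAdd hw)
      rintro _ ⟨g, hg, rfl⟩
      exact List.mem_map_of_mem hg
    · have h₁ := hfw y
      have h₂ := hfw (y - 1)
      rw [show m - (y - 1) = m + 1 - y by ring] at h₂
      simp only [shiftAdd_apply, show m + 1 - y - 1 = m - y by ring]
      linear_combination h₁ + h₂

lemma isTelescoping_holeVectors_append (K : Finset ℕ) {m : ℕ} {l : List (ℤ → ℤ)}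
    (hl : IsTelescoping m l) : IsTelescoping m (holeVectors K m ++ l) := by
  obtain ⟨κ, hm, -, hvec⟩ | ⟨-, hvec⟩ := hole_cases K m
  · rw [hvec]
    refine ⟨⟨0, zero_mem _, fun y => ?_⟩, hl⟩
    simp only [Pi.single_apply, show (m : ℤ) - y = κ ↔ y = κ by omega]
    simp
  · rwa [hvec]

lemma isTelescoping_unitVectors (n : ℕ) :
    IsTelescoping 0 ((List.range n).reverse.map fun k : ℕ => Pi.single (k : ℤ) 1) := by
  let l (n : ℕ) : List (ℤ → ℤ) := (List.range n).reverse.map fun k : ℕ => Pi.single (k : ℤ) 1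
  have hl (n : ℕ) : l (n + 1) = Pi.single (n : ℤ) 1 :: l n := by simp [l, List.range_succ]
  have defect (n : ℕ) : ∃ w ∈ Submodule.span ℤ {g | g ∈ symmetrize 0 (l n)},
      ∀ y, (Pi.single (n : ℤ) 1 : ℤ → ℤ) y - (Pi.single (n : ℤ) 1 : ℤ → ℤ) (0 - y) =
        w (y - 1) - w y := by
    induction n with
    | zero =>
      refine ⟨0, zero_mem _, fun y => ?_⟩
      simp [Pi.single_apply]
    | succ n ih =>
      obtain ⟨w, hw, hwn⟩ := ih
      refine ⟨w + (Pi.single (n : ℤ) 1 + Pi.single (n : ℤ) 1 ∘ mirror 0), add_mem ?_ ?_, ?_⟩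
      · refine Submodule.span_mono (fun g hg => ?_) hw
        rw [hl]
        exact List.mem_cons_of_mem _ hg
      · refine Submodule.subset_span ?_
        rw [hl]
        exact List.mem_cons_self
      · intro y
        have := hwn y
        simp only [Pi.add_apply, Function.comp_apply, Pi.single_apply, mirror] at this ⊢
        push_cast
        split_ifs at this ⊢ <;> omega
  induction n with
  | zero => trivial
  | succ n ih =>
    change IsTelescoping 0 (l (n + 1))
    rw [hl]
    exact ⟨defect n, ih⟩

lemma isTelescoping_halfVectors (b : ℕ) (K : Finset ℕ) :
    ∀ m : ℕ, IsTelescoping m (halfVectors b K m)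
  | 0 => isTelescoping_unitVectors b
  | m + 1 => by
    have := (isTelescoping_holeVectors_append K (isTelescoping_halfVectors b K m)).map_shiftAdd
    exact_mod_cast this

lemma halfVectors_apply_eq_zero {b : ℕ} (hb : 0 < b) (K : Finset ℕ) {m : ℕ} {f : ℤ → ℤ}
    (hf : f ∈ halfVectors b K m) {i : ℤ} (hi : i < 0 ∨ (m : ℤ) + b ≤ i) : f i = 0 := by
  induction m generalizing f i with
  | zero =>
    obtain ⟨k, hk, rfl⟩ := List.mem_map.1 hf
    rw [List.mem_reverse, List.mem_range] at hk
    exact Pi.single_eq_of_ne (by omega) _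
  | succ m ih =>
    obtain ⟨g, hg, rfl⟩ := List.mem_map.1 hf
    push_cast at hi
    have hgi (j : ℤ) (hj : j < 0 ∨ (m : ℤ) + b ≤ j) : g j = 0 := by
      rcases List.mem_append.1 hg with hg | hg
      · obtain ⟨κ, hm, -, hvec⟩ | ⟨-, hvec⟩ := hole_cases K m
        · rw [hvec, List.mem_singleton] at hg
          rw [hg, Pi.single_eq_of_ne (by omega)]
        · simp [hvec] at hg
      · exact ih hg hj
    rw [shiftAdd_apply, hgi i (by omega), hgi (i - 1) (by omega), add_zero]

/-- The partial sums of `f` from above along `B`, with weights `2` above and `1` on the spot. -/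
def stairSum (B : Finset ℤ) (f : ℤ → ℤ) (y : ℤ) : ℤ := ∑ x ∈ B, stairKernel ℤ x y * f x

lemma stairSum_sub_one {lo N : ℤ} {f : ℤ → ℤ} (hf : f N = 0) {y : ℤ} (hlo : lo < y) (hN : y ≤ N) :
    stairSum (Ico lo N) f (y - 1) = stairSum (Ico lo N) f y + f (y - 1) + f y := by
  have kernel (x : ℤ) : stairKernel ℤ x (y - 1) =
      stairKernel ℤ x y + (if y - 1 = x then 1 else 0) + if y = x then 1 else 0 := by
    unfold stairKernel
    split_ifs <;> omega
  have hy : f y = if y ∈ Ico lo N then f y else 0 := by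
    rcases hN.lt_or_eq with h | rfl
    · rw [if_pos (mem_Ico.2 ⟨hlo.le, h⟩)]
    · rw [hf, ite_self]
  rw [hy]
  simp only [stairSum, kernel, add_mul, sum_add_distrib, ite_mul, one_mul, zero_mul, sum_ite_eq,
    mem_Ico.2 (⟨by omega, by omega⟩ : lo ≤ y - 1 ∧ y - 1 < N), if_true]

lemma eq_zero_of_mem_span_symmetrize {m y : ℤ} {l : List (ℤ → ℤ)} {w : ℤ → ℤ}
    (hl : ∀ f ∈ l, f y = 0 ∧ f (mirror m y) = 0)
    (hw : w ∈ Submodule.span ℤ {g | g ∈ symmetrize m l}) : w y = 0 := by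
  have : Submodule.span ℤ {g | g ∈ symmetrize m l} ≤ LinearMap.ker (LinearMap.proj y) := by
    refine Submodule.span_le.2 fun g hg => ?_
    obtain ⟨f, hf, rfl⟩ := List.mem_map.1 hg
    simp [hl f hf]
  exact this hw

/-- Summing the telescoping relation from above, where all vectors vanish. -/
lemma stairSum_antisymmetric {m lo N : ℤ} {f w : ℤ → ℤ} (hfN : f N = 0)
    (hfN' : f (mirror m N) = 0) (hwN : w N = 0) (hfw : ∀ y, f y - f (m - y) = w (y - 1) - w y)
    {y : ℤ} (hlo : lo ≤ y) (hN : y ≤ N) :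
    stairSum (Ico lo N) (f - f ∘ mirror m) y = (f + f ∘ mirror m + (2 : ℤ) • w) y := by
  induction y, hN using Int.leInductionDown with
  | base =>
    have : stairSum (Ico lo N) (f - f ∘ mirror m) N = 0 := by
      refine sum_eq_zero fun x hx => ?_
      have := (mem_Ico.1 hx).2
      simp [stairKernel, this.ne', this.not_gt]
    simp [this, hfN, hfN', hwN]
  | pred y hy ih =>
    have hstep := stairSum_sub_one (f := f - f ∘ mirror m) (lo := lo) (N := N)
      (by simp [hfN, hfN']) (by omega) hy
    have := ih (by omega)
    have := hfw y
    simp only [Pi.add_apply, Pi.sub_apply, Pi.smul_apply, Function.comp_apply, mirror,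
      smul_eq_mul, show m - 1 - (y - 1) = m - y by ring] at *
    linarith

lemma slater_symmetrize_eq {m lo N : ℤ} {l : List (ℤ → ℤ)} (hl : IsTelescoping m l)
    (hN : ∀ f ∈ l, f N = 0 ∧ f (mirror m N) = 0) {E : Finset ℤ} (hE : E ⊆ Ico lo N) :
    slater (symmetrize m l) E = slater ((antisymmetrize m l).map (stairSum (Ico lo N))) E := by
  induction l generalizing E with
  | nil => rfl
  | cons f l ih =>
    obtain ⟨⟨w, hw, hfw⟩, hl⟩ := hl
    have hNl (g) (hg : g ∈ l) := hN g (List.mem_cons_of_mem f hg)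
    obtain ⟨hfN, hfN'⟩ := hN f List.mem_cons_self
    have hwN := eq_zero_of_mem_span_symmetrize hNl hw
    have hspan : slater ((2 : ℤ) • w :: symmetrize m l) = 0 :=
      slater_cons_eq_zero_of_mem_span (Submodule.smul_mem _ _ hw)
    calc slater (symmetrize m (f :: l)) E
        = wedge (f + f ∘ mirror m + (2 : ℤ) • w) (slater (symmetrize m l)) E := by
          rw [wedge_add_left, ← slater, ← slater, hspan, add_zero]
          rfl
      _ = _ := wedge_congr (fun y hy => ?_) fun y _ => ih hl hNl ((erase_subset y E).trans hE)
    have := mem_Ico.1 (hE hy)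
    exact (stairSum_antisymmetric hfN hfN' hwN hfw this.1 this.2.le).symm

theorem sum_slater_symmetrize_mul {m lo N : ℤ} {l : List (ℤ → ℤ)} (hl : IsTelescoping m l)
    (hN : ∀ f ∈ l, f N = 0 ∧ f (mirror m N) = 0) :
    ∑ E ∈ (Ico lo N).powerset, slater (symmetrize m l) E * slater (antisymmetrize m l) E =
      (∑ E ∈ (Ico lo N).powerset, slater (antisymmetrize m l) E) ^ 2 := by
  obtain ⟨n, q, hq⟩ : ∃ n, ∃ q : Fin n → ℤ → ℤ, antisymmetrize m l = List.ofFn q :=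
    ⟨_, (antisymmetrize m l).get, by simp⟩
  calc ∑ E ∈ (Ico lo N).powerset, slater (symmetrize m l) E * slater (antisymmetrize m l) E
      = ∑ E ∈ (Ico lo N).powerset,
          slater (List.ofFn (stairSum (Ico lo N) ∘ q)) E * slater (List.ofFn q) E := by
        refine sum_congr rfl fun E hE => ?_
        rw [slater_symmetrize_eq hl hN (mem_powerset.1 hE), hq, List.map_ofFn]
    _ = (stairGram (Ico lo N) q).det := by
        rw [cauchyBinet]
        congr 1
        ext i j
        simp only [stairGram, stairSum, Matrix.of_apply, Function.comp_apply, mul_sum, sum_mul]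
        rw [sum_comm]
        exact sum_congr rfl fun _ _ => sum_congr rfl fun _ _ => by ring
    _ = _ := by rw [det_stairGram, minorSum, hq]

end Telescoping

section CentralColumn

/-- The sets of sites of the central column `a` that are symmetric in the horizontal axis. -/
def symmetricSites (a b : ℕ) : Finset (Finset ℤ) :=
  {S ∈ (Ico (-b : ℤ) (a + b)).powerset | S.image (mirror a) = S}

lemma odd_card_of_mem_center {m i : ℤ} {S : Finset ℤ} (hS : S.image (mirror m) = S) (hi : i ∈ S)
    (him : 2 * i = m - 1) : Odd #S := by
  have heven : ((#(S.erase i) : ℕ) : ZMod 2) = 0 := by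
    rw [cast_card]
    refine sum_involution (fun j _ => mirror m j) (fun _ _ => by decide) ?_ ?_
      fun j _ => mirror_mirror m j
    · intro j hj _ hji
      simp only [mirror] at hji
      exact (mem_erase.1 hj).1 (by omega)
    · intro j hj
      refine mem_erase.2 ⟨fun hji => (mem_erase.1 hj).1 ?_,
        (mirror_mem_iff hS).2 (mem_of_mem_erase hj)⟩
      simp only [mirror] at hji
      omega
  rw [← card_erase_add_one hi, Nat.odd_add_one, Nat.not_odd_iff_even]
  exact (ZMod.natCast_eq_zero_iff_even).1 heven

lemma pathCount_false_eq_zero {b : ℕ} {K : Finset ℕ} {m : ℕ} {S : Finset ℤ} {i : ℤ}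
    (hS : S.image (mirror m) = S) (hi : i ∈ S) (him : 2 * i = m - 1) :
    pathCount b K False m S = 0 := by
  obtain ⟨ε, hε⟩ := exists_pathCount_eq_slater b K m
  have hodd := odd_card_of_mem_center hS hi him
  have hcard : #S ≠ (withReflections m (halfVectors b K m)).length := by
    rintro h
    rw [h, withReflections, List.length_append, List.length_map] at hodd
    exact Nat.not_odd_iff_even.2 (Even.add_self _) hodd
  have := hε S
  rw [slater_eq_zero_of_card_ne hcard, mul_zero] at this
  exact_mod_cast this

lemma pathCount_true_eq_zero {b : ℕ} {K : Finset ℕ} : ∀ {m : ℕ} {S : Finset ℤ} {i : ℤ},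
    i ∈ S → 2 * i = m - 1 → pathCount b K True m S = 0
  | 0, S, i, _, him => by omega
  | m + 1, S, i, hi, him => by
    rw [pathCount, sum_eq_zero]
    intro V hV
    have := mirror_mem_iff_mem_sdiff ((mem_filter.1 hV).2.2.2 trivial) (i := i)
    push_cast at him
    rw [show mirror (m + 1) i = i by simp only [mirror]; omega] at this
    tauto

lemma mem_union_image_mirror {m : ℤ} {E : Finset ℤ} {i : ℤ} :
    i ∈ E ∪ E.image (mirror m) ↔ i ∈ E ∨ mirror m i ∈ E := by
  rw [mem_union]
  conv_lhs => rw [← mirror_mirror m i]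
  rw [(strictAnti_mirror m).injective.mem_finset_image, mirror_mirror]

lemma upperHalf_union_image_mirror {m : ℤ} {E : Finset ℤ} (hE : ∀ i ∈ E, m ≤ 2 * i) :
    upperHalf m (E ∪ E.image (mirror m)) = E := by
  ext i
  have := hE i
  have := hE (mirror m i)
  rw [upperHalf, mem_filter, mem_union_image_mirror]
  simp only [mirror] at *
  grind

lemma image_mirror_union (m : ℤ) (E : Finset ℤ) :
    (E ∪ E.image (mirror m)).image (mirror m) = E ∪ E.image (mirror m) := by
  ext i
  conv_lhs => rw [← mirror_mirror m i]
  rw [(strictAnti_mirror m).injective.mem_finset_image, mem_union_image_mirror,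
    mem_union_image_mirror, mirror_mirror, or_comm]

/-- The range of the sites of column `a` on or above the horizontal axis. -/
def upperRange (a b : ℕ) : Finset ℤ := Ico (((a : ℤ) + 1) / 2) (a + b)

lemma le_two_mul_of_mem_upperRange {a b : ℕ} {E : Finset ℤ} (hE : E ∈ (upperRange a b).powerset)
    (i : ℤ) (hi : i ∈ E) : (a : ℤ) ≤ 2 * i := by
  have := mem_Ico.1 (mem_powerset.1 hE hi)
  omega

/-- Symmetric sets avoiding the axis are the sets `E ∪ E.image (mirror a)`. -/
lemma sum_symmetricSites {a b : ℕ} {F : Finset ℤ → ℤ}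
    (hF : ∀ S ∈ symmetricSites a b, ∀ i ∈ S, 2 * i = (a : ℤ) - 1 → F S = 0) :
    ∑ S ∈ symmetricSites a b, F S =
      ∑ E ∈ (upperRange a b).powerset, F (E ∪ E.image (mirror a)) := by
  have hupper {E : Finset ℤ} (hE : E ∈ (upperRange a b).powerset) (i : ℤ)
      (hi : i ∈ E) : (a : ℤ) ≤ 2 * i ∧ i < a + b := by
    have := mem_Ico.1 (mem_powerset.1 hE hi)
    omega
  refine (sum_of_injOn (fun E : Finset ℤ => E ∪ E.image (mirror a)) ?_ ?_ ?_ fun _ _ => rfl).symm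
  · intro E hE E' hE' h
    dsimp only at h
    rw [← upperHalf_union_image_mirror fun i hi => (hupper hE i hi).1, h,
      upperHalf_union_image_mirror fun i hi => (hupper hE' i hi).1]
  · refine fun E hE => mem_coe.2 (mem_filter.2 ⟨mem_powerset.2 fun i hi => ?_,
      image_mirror_union a E⟩)
    rw [mem_Ico]
    rcases mem_union_image_mirror.1 hi with hi | hi <;> have := hupper hE _ hi <;>
      simp only [mirror] at * <;> omega
  · intro S hS hSE
    obtain ⟨hSB, hSsymm⟩ := mem_filter.1 hS
    by_contra hFS
    have hcenter (i) (hi : i ∈ S) (him : 2 * i = (a : ℤ) - 1) := hFS (hF S hS i hi him)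
    refine hSE ⟨upperHalf a S, mem_powerset.2 fun i hi => ?_, ?_⟩
    · have := mem_Ico.1 (mem_powerset.1 hSB (mem_filter.1 hi).1)
      have := (mem_filter.1 hi).2
      rw [upperRange, mem_Ico]
      omega
    · ext i
      rw [mem_union_image_mirror, upperHalf, mem_filter, mem_filter, mirror_mem_iff hSsymm]
      by_cases hi : i ∈ S
      · have : 2 * i ≠ (a : ℤ) - 1 := hcenter i hi
        simp only [hi, true_and, iff_true, mirror]
        omega
      · simp only [hi, false_and, or_self]

lemma exists_sum_pathCount_false (b : ℕ) (K : Finset ℕ) (a : ℕ) :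
    ∃ ε : ℤˣ, (∑ S ∈ symmetricSites a b, pathCount b K False a S : ℤ) =
      ε * ∑ E ∈ (upperRange a b).powerset, slater (symmetrize a (halfVectors b K a)) E *
        slater (antisymmetrize a (halfVectors b K a)) E := by
  obtain ⟨ε, hε⟩ := exists_pathCount_eq_slater b K a
  obtain ⟨ε', hε'⟩ := exists_slater_reflected_append (R := ℤ) (strictAnti_mirror a)
    (mirror_mirror a) (halfVectors b K a)
  refine ⟨ε * ε', ?_⟩
  rw [sum_symmetricSites, mul_sum]
  · refine sum_congr rfl fun E hE => ?_
    rw [hε, withReflections, hε' E fun x hx y hy => ?_]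
    · simp only [symmetrize, antisymmetrize, mul_assoc, Units.val_mul]
    · have := le_two_mul_of_mem_upperRange hE x hx
      have := le_two_mul_of_mem_upperRange hE y hy
      simp only [mirror]
      omega
  · intro S hS i hi him
    rw [pathCount_false_eq_zero (mem_filter.1 hS).2 hi him, Nat.cast_zero]

lemma exists_sum_pathCount_true (b : ℕ) (K : Finset ℕ) (a : ℕ) :
    ∃ ε : ℤˣ, (∑ S ∈ symmetricSites a b, pathCount b K True a S : ℤ) =
      ε * ∑ E ∈ (upperRange a b).powerset,
        slater (antisymmetrize a (halfVectors b K a)) E := by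
  obtain ⟨ε, hε⟩ := exists_pathCount_true_eq_slater b K a
  refine ⟨ε, ?_⟩
  rw [sum_symmetricSites, mul_sum]
  · refine sum_congr rfl fun E hE => ?_
    have hle := le_two_mul_of_mem_upperRange hE
    rw [hε _ (image_mirror_union a E) fun i hi => ?_, upperHalf_union_image_mirror hle]
    rcases mem_union_image_mirror.1 hi with hi | hi
    · have := hle i hi
      omega
    · have := hle _ hi
      simp only [mirror] at this
      omega
  · intro S _ i hi him
    rw [pathCount_true_eq_zero hi him, Nat.cast_zero]

theorem sum_pathCount_false_eq_sq {b : ℕ} (hb : 0 < b) (K : Finset ℕ) (a : ℕ) :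
    ∑ S ∈ symmetricSites a b, pathCount b K False a S =
      (∑ S ∈ symmetricSites a b, pathCount b K True a S) ^ 2 := by
  obtain ⟨ε, hfalse⟩ := exists_sum_pathCount_false b K a
  obtain ⟨ε', htrue⟩ := exists_sum_pathCount_true b K a
  have hvanish (f) (hf : f ∈ halfVectors b K a) :
      f (a + b) = 0 ∧ f (mirror a (a + b)) = 0 :=
    ⟨halfVectors_apply_eq_zero hb K hf (.inr le_rfl),
      halfVectors_apply_eq_zero hb K hf (.inl (by simp only [mirror]; omega))⟩
  rw [upperRange, sum_slater_symmetrize_mul (isTelescoping_halfVectors b K a) hvanish] at hfalse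
  rw [upperRange] at htrue
  have hsq : (∑ S ∈ symmetricSites a b, (pathCount b K False a S : ℤ)) =
      ε * (∑ S ∈ symmetricSites a b, (pathCount b K True a S : ℤ)) ^ 2 := by
    rw [hfalse, htrue, mul_pow]
    rcases Int.units_eq_one_or ε' with rfl | rfl <;> simp
  rcases Int.units_eq_one_or ε with rfl | rfl
  · rw [Units.val_one, one_mul] at hsq
    exact_mod_cast hsq
  · rw [Units.val_neg, Units.val_one, neg_one_mul] at hsq
    norm_cast at hsq
    zify
    nlinarith [sq_nonneg (∑ S ∈ symmetricSites a b, (pathCount b K True a S : ℤ)),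
      sum_nonneg fun S (_ : S ∈ symmetricSites a b) =>
        Int.natCast_nonneg (pathCount b K False a S)]

end CentralColumn

section Matchings

/-- A site `(i, j)` is a point of the triangular lattice in the oblique coordinates of
`obliqueCoords`. Two unit triangles are attached to it, on both sides of the vertical lattice edge
from `(i + 1, j)` to `(i, j + 1)`: a left-pointing one with third vertex `(i, j)`, and a
right-pointing one with third vertex `(i + 1, j + 1)`. -/
abbrev Site := ℤ × ℤ

/-- The column of the vertical edge shared by the two triangles of a site. -/
def col (q : Site) : ℤ := q.1 + q.2 + 1

/-- The site of column `m` with first coordinate `i`. -/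
def site (m i : ℤ) : Site := (i, m - 1 - i)

/-- The right-pointing triangle of the site `r` shares an edge with the left-pointing triangle of
the site `l`. -/
def Adj (r l : Site) : Prop := l = r ∨ l = (r.1 + 1, r.2) ∨ l = (r.1, r.2 + 1)

/-- A perfect matching between the right-pointing triangles of the sites `R` and the left-pointing
triangles of the sites `L`; its elements are the lozenges of a tiling. -/
structure IsMatching (R L : Set Site) (C : Set (Site × Site)) : Prop where
  adj : ∀ c ∈ C, Adj c.1 c.2
  right : Set.BijOn Prod.fst C R
  left : Set.BijOn Prod.snd C L

lemma col_site (m i : ℤ) : col (site m i) = m := by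
  simp only [col, site]; omega

lemma site_col (q : Site) : site (col q) q.1 = q :=
  Prod.ext rfl (show col q - 1 - q.1 = q.2 by simp only [col]; omega)

lemma site_inj {m i j : ℤ} : site m i = site m j ↔ i = j :=
  ⟨congrArg Prod.fst, congrArg _⟩

lemma site_mem_image {m i : ℤ} {S : Finset ℤ} : site m i ∈ site m '' S ↔ i ∈ S :=
  ⟨fun ⟨_, hj, h⟩ => site_inj.1 h ▸ hj, Set.mem_image_of_mem _⟩

lemma Adj.col_eq {r l : Site} (h : Adj r l) : l = r ∨ col l = col r + 1 :=
  h.imp_right <| by rintro (rfl | rfl) <;> simp only [col] <;> omega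

lemma Adj.swap {r l : Site} (h : Adj r l) : Adj r.swap l.swap := by
  obtain rfl | rfl | rfl := h
  exacts [.inl rfl, .inr (.inr rfl), .inr (.inl rfl)]

lemma adj_site_succ {r : Site} {m : ℕ} {i : ℤ} (h : Adj r (site (m + 1 : ℕ) i)) :
    r = site (m + 1 : ℕ) i ∨ r = site m (i - 1) ∨ r = site m i := by
  obtain ⟨x, y⟩ := r
  simp only [Adj, site, Prod.mk.injEq] at h ⊢
  omega

lemma bijOn_union {α β : Type*} {f : α → β} {s s' : Set α} {t t' : Set β} (h : Set.BijOn f s t)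
    (h' : Set.BijOn f s' t') (ht : Disjoint t t') : Set.BijOn f (s ∪ s') (t ∪ t') :=
  h.union h' <| by
    rw [Set.injOn_union (Set.disjoint_left.2 fun x hx hx' =>
      ht.le_bot ⟨h.mapsTo hx, h'.mapsTo hx'⟩)]
    exact ⟨h.injOn, h'.injOn, fun x hx y hy hxy =>
      ht.le_bot ⟨h.mapsTo hx, hxy ▸ h'.mapsTo hy⟩⟩

lemma bijOn_of_union {α β : Type*} {f : α → β} {s s' : Set α} {t t' : Set β}
    (h : Set.BijOn f (s ∪ s') (t ∪ t')) (h' : Set.BijOn f s' t') (hs : Disjoint s s')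
    (ht : Disjoint t t') : Set.BijOn f s t := by
  have himage : f '' s = t := by
    rw [← hs.sdiff_eq_left, ← Set.union_sdiff_right, h.injOn.image_sdiff,
      Set.union_inter_cancel_right, h.image_eq, h'.image_eq, Set.union_sdiff_right,
      ht.sdiff_eq_left]
  exact himage ▸ (h.injOn.mono Set.subset_union_left).bijOn_image

variable {R R' L L' : Set Site} {C C' : Set (Site × Site)}

lemma IsMatching.exists_left (h : IsMatching R L C) {r : Site} (hr : r ∈ R) :
    ∃ l, (r, l) ∈ C ∧ Adj r l := by
  obtain ⟨⟨_, l⟩, hc, rfl⟩ := h.right.surjOn hr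
  exact ⟨l, hc, h.adj _ hc⟩

lemma IsMatching.exists_right (h : IsMatching R L C) {l : Site} (hl : l ∈ L) :
    ∃ r, (r, l) ∈ C ∧ Adj r l := by
  obtain ⟨⟨r, _⟩, hc, rfl⟩ := h.left.surjOn hl
  exact ⟨r, hc, h.adj _ hc⟩

lemma IsMatching.union (h : IsMatching R L C) (h' : IsMatching R' L' C') (hR : Disjoint R R')
    (hL : Disjoint L L') : IsMatching (R ∪ R') (L ∪ L') (C ∪ C') :=
  ⟨fun c hc => hc.elim (h.adj c) (h'.adj c), bijOn_union h.right h'.right hR,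
    bijOn_union h.left h'.left hL⟩

lemma IsMatching.of_union (h : IsMatching (R ∪ R') (L ∪ L') (C ∪ C')) (h' : IsMatching R' L' C')
    (hC : Disjoint C C') (hR : Disjoint R R') (hL : Disjoint L L') : IsMatching R L C :=
  ⟨fun c hc => h.adj c (.inl hc), bijOn_of_union h.right h'.right hC hR,
    bijOn_of_union h.left h'.left hC hL⟩

lemma isMatching_image {ι : Type*} {I : Set ι} {r l : ι → Site} (hr : Set.InjOn r I)
    (hl : Set.InjOn l I) (hadj : ∀ i ∈ I, Adj (r i) (l i)) :
    IsMatching (r '' I) (l '' I) ((fun i => (r i, l i)) '' I) where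
  adj := Set.forall_mem_image.2 hadj
  right := by
    have := (Set.InjOn.image_of_comp (g := Prod.fst) (f := fun i => (r i, l i)) hr).bijOn_image
    rwa [Set.image_image] at this
  left := by
    have := (Set.InjOn.image_of_comp (g := Prod.snd) (f := fun i => (r i, l i)) hl).bijOn_image
    rwa [Set.image_image] at this

/-- The lozenges formed by the two triangles of a site in `Q`. -/
def horizontals (Q : Set Site) : Set (Site × Site) := (fun q => (q, q)) '' Q

lemma isMatching_horizontals (Q : Set Site) : IsMatching Q Q (horizontals Q) := by
  have := isMatching_image (I := Q) Function.injective_id.injOn Function.injective_id.injOn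
    fun q _ => .inl rfl
  rwa [Set.image_id] at this

/-- The site of column `m` from which a lattice path steps to the site `i` of column `m + 1`, by an
up-step if `i ∈ V`. -/
def stepOrigin (V : Finset ℤ) (i : ℤ) : ℤ := if i ∈ V then i - 1 else i

/-- The lozenges crossed by lattice paths between column `m` and the sites `S` of column `m + 1`,
those ending in `V` stepping up. -/
def steps (m : ℕ) (S V : Finset ℤ) : Set (Site × Site) :=
  (fun i => (site m (stepOrigin V i), site (m + 1 : ℕ) i)) '' S

lemma image_stepOrigin {S V : Finset ℤ} (hVS : V ⊆ S) :
    stepOrigin V '' S = descend S V := by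
  ext i
  simp only [Set.mem_image, mem_coe, mem_descend, stepOrigin]
  constructor
  · rintro ⟨j, hj, rfl⟩
    split_ifs with hjV
    · exact .inl (by simpa using hjV)
    · exact .inr ⟨hj, hjV⟩
  · rintro (hi | hi)
    · exact ⟨i + 1, hVS hi, by simp [hi]⟩
    · exact ⟨i, hi.1, by simp [hi.2]⟩

lemma injOn_stepOrigin {S V : Finset ℤ} (hV : IsNoncolliding S V) :
    Set.InjOn (stepOrigin V) S := by
  intro i hi j hj hij
  simp only [stepOrigin] at hij
  split_ifs at hij with hiV hjV hjV
  · omega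
  · exact absurd hiV (by simpa [← hij] using hV j hj hjV)
  · exact absurd hjV (by simpa [hij] using hV i hi hiV)
  · exact hij

lemma isMatching_steps (m : ℕ) {S V : Finset ℤ} (hVS : V ⊆ S) (hV : IsNoncolliding S V) :
    IsMatching (site m '' descend S V) (site (m + 1 : ℕ) '' S) (steps m S V) := by
  rw [← image_stepOrigin hVS, Set.image_image]
  refine isMatching_image (fun i hi j hj hij => injOn_stepOrigin hV hi hj (site_inj.1 hij))
    (fun i _ j _ hij => site_inj.1 hij) fun i _ => ?_
  simp only [Adj, stepOrigin, site, Prod.mk.injEq]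
  split_ifs <;> omega

/-- The reflection of a lozenge in the line `i = j`, the horizontal symmetry axis. -/
def flipPair (c : Site × Site) : Site × Site := (c.1.swap, c.2.swap)

lemma involutive_flipPair : Function.Involutive flipPair := fun _ => rfl

lemma col_swap (q : Site) : col q.swap = col q := by
  simp only [col, Prod.fst_swap, Prod.snd_swap]; omega

lemma swap_site (m i : ℤ) : (site m i).swap = site m (mirror m i) :=
  Prod.ext rfl (show i = m - 1 - (m - 1 - i) by omega)

lemma mapsTo_sdiff {α : Type*} {f : α → α} (hf : Function.Involutive f) {s t : Set α}
    (hs : Set.MapsTo f s s) (ht : Set.MapsTo f t t) : Set.MapsTo f (s \ t) (s \ t) :=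
  fun x hx => ⟨hs hx.1, fun h => hx.2 (hf x ▸ ht h)⟩

end Matchings

section WesternHalf

/-- The sites whose right-pointing triangle lies in one of the left-pointing holes. -/
def holeRight (K : Finset ℕ) : Set Site :=
  {q | ∃ κ ∈ K, (κ : ℤ) - 1 ≤ q.1 ∧ (κ : ℤ) - 1 ≤ q.2 ∧ col q < 2 * κ}

/-- The sites whose left-pointing triangle lies in one of the left-pointing holes. -/
def holeLeft (K : Finset ℕ) : Set Site :=
  {q | ∃ κ ∈ K, (κ : ℤ) - 1 ≤ q.1 ∧ (κ : ℤ) - 1 ≤ q.2 ∧ col q ≤ 2 * κ}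

/-- The right-pointing triangles of the region obtained from the cone spanned by the three western
sides of the hexagon by removing the left-pointing holes. -/
def westRight (b : ℕ) (K : Finset ℕ) : Set Site :=
  {q | -(b : ℤ) ≤ q.1 ∧ -(b : ℤ) ≤ q.2 ∧ 0 ≤ col q ∧ q ∉ holeRight K}

/-- The left-pointing triangles of the same region. -/
def westLeft (b : ℕ) (K : Finset ℕ) : Set Site :=
  {q | -(b : ℤ) ≤ q.1 ∧ -(b : ℤ) ≤ q.2 ∧ 0 < col q ∧ q ∉ holeLeft K}

/-- A matching of the triangles bounded by column `m`, where the right-pointing triangles of that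
column belong to the region except at the sites `S`. -/
def IsDented (b : ℕ) (K : Finset ℕ) (m : ℕ) (S : Finset ℤ) (C : Set (Site × Site)) : Prop :=
  IsMatching ({q ∈ westRight b K | col q ≤ m} \ site m '' S) {q ∈ westLeft b K | col q ≤ m} C

/-- The sites of column `m` whose right-pointing triangle is present in an `S`-dented region. -/
def undented (b : ℕ) (K : Finset ℕ) (m : ℕ) (S : Finset ℤ) : Set Site :=
  {q ∈ westRight b K | col q = m} \ site m '' S

variable {b : ℕ} {K : Finset ℕ} {m : ℕ} {S V : Finset ℤ} {C : Set (Site × Site)}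

lemma mem_holeSites {i : ℤ} :
    i ∈ holeSites K m ↔ ∃ κ ∈ K, m = 2 * κ ∧ (i = κ - 1 ∨ i = κ) := by
  unfold holeSites
  split_ifs with h
  · obtain ⟨κ, hκ, rfl⟩ := h
    rw [mem_insert, mem_singleton]
    constructor
    · exact fun hi => ⟨κ, hκ, rfl, by omega⟩
    · rintro ⟨κ', -, hκ', hi⟩
      omega
  · simp only [notMem_empty, false_iff]
    exact fun ⟨κ, hκ, hm, _⟩ => h ⟨κ, hκ, hm⟩

lemma site_mem_westRight_of_mem_holeSites (hb : 0 < b) {i : ℤ} (hi : i ∈ holeSites K m) :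
    site m i ∈ westRight b K := by
  obtain ⟨κ, -, rfl, hi⟩ := mem_holeSites.1 hi
  refine ⟨?_, ?_, ?_, ?_⟩
  · simp only [site]; omega
  · simp only [site]; omega
  · rw [col_site]; omega
  · rintro ⟨κ', -, h⟩
    rw [col_site] at h
    simp only [site] at h
    omega

lemma site_mem_westLeft {i : ℤ} (hm : 0 < m) :
    site m i ∈ westLeft b K ↔ site m i ∈ westRight b K ∧ i ∉ holeSites K m := by
  have hhole : site m i ∈ holeLeft K ↔ site m i ∈ holeRight K ∨ i ∈ holeSites K m := by
    rw [mem_holeSites]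
    change (∃ κ ∈ K, _) ↔ (∃ κ ∈ K, _) ∨ _
    rw [← exists_or]
    refine exists_congr fun κ => ?_
    rw [← and_or_left]
    refine and_congr_right fun _ => ?_
    rw [col_site]
    simp only [site]
    omega
  change _ ∧ _ ∧ _ ∧ _ ↔ (_ ∧ _ ∧ _ ∧ _) ∧ _
  rw [hhole, col_site]
  have : 0 ≤ (m : ℤ) ∧ 0 < (m : ℤ) := by omega
  tauto

lemma mem_undented {q : Site} :
    q ∈ undented b K m S ↔ q ∈ westRight b K ∧ ∃ i ∉ S, q = site m i := by
  constructor
  · rintro ⟨⟨hq, hm⟩, hS⟩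
    rw [← site_col q, hm] at hS
    exact ⟨hq, q.1, fun h => hS (site_mem_image.2 h), by rw [← hm, site_col]⟩
  · rintro ⟨hq, i, hi, rfl⟩
    exact ⟨⟨hq, col_site m i⟩, fun h => hi (site_mem_image.1 h)⟩

/-- The lozenges added to a dented matching of column `m` to obtain one of column `m + 1`. -/
def topLayer (b : ℕ) (K : Finset ℕ) (m : ℕ) (S V : Finset ℤ) : Set (Site × Site) :=
  steps m (S \ holeSites K (m + 1)) V ∪ horizontals (undented b K (m + 1) S)

lemma isMatching_topLayer (hVS : V ⊆ S \ holeSites K (m + 1))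
    (hV : IsNoncolliding (S \ holeSites K (m + 1)) V) :
    IsMatching
      (site m '' descend (S \ holeSites K (m + 1)) V ∪ undented b K (m + 1) S)
      (site (m + 1 : ℕ) '' (S \ holeSites K (m + 1) : Finset ℤ) ∪ undented b K (m + 1) S)
      (topLayer b K m S V) := by
  refine (isMatching_steps m hVS hV).union (isMatching_horizontals _) ?_ ?_ <;>
    rw [Set.disjoint_left]
  · rintro _ ⟨i, -, rfl⟩ ⟨⟨-, hcol⟩, -⟩
    rw [col_site] at hcol
    push_cast at hcol
    omega
  · rintro _ ⟨i, hi, rfl⟩ ⟨-, hS⟩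
    exact hS (site_mem_image.2 (mem_sdiff.1 hi).1)

lemma dentedRight_succ {D : Finset ℤ} (hD : site m '' D ⊆ westRight b K) (S : Finset ℤ) :
    {q ∈ westRight b K | col q ≤ (m + 1 : ℕ)} \ site (m + 1 : ℕ) '' S =
      ({q ∈ westRight b K | col q ≤ m} \ site m '' D) ∪
        (site m '' D ∪ undented b K (m + 1) S) := by
  have hcol : site m '' D ⊆ {q ∈ westRight b K | col q ≤ m} := fun q hq =>
    ⟨hD hq, by obtain ⟨i, -, rfl⟩ := hq; exact (col_site m i).le⟩
  rw [← Set.union_assoc, Set.sdiff_union_of_subset hcol]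
  ext q
  by_cases hq : col q = (m + 1 : ℕ)
  · have : ¬ col q ≤ m := by omega
    simp [undented, hq]
  · have : col q ≤ (m + 1 : ℕ) ↔ col q ≤ m := by omega
    have hnot : q ∉ site (m + 1 : ℕ) '' S := by
      rintro ⟨i, -, rfl⟩
      exact hq (col_site _ i)
    simp only [undented, Set.mem_sdiff, Set.mem_union, Set.mem_ofPred_eq]
    tauto

lemma dentedLeft_succ (hS : site (m + 1 : ℕ) '' S ⊆ westRight b K)
    (hH : holeSites K (m + 1) ⊆ S) :
    {q ∈ westLeft b K | col q ≤ (m + 1 : ℕ)} = {q ∈ westLeft b K | col q ≤ m} ∪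
      (site (m + 1 : ℕ) '' (S \ holeSites K (m + 1) : Finset ℤ) ∪ undented b K (m + 1) S) := by
  ext q
  by_cases hq : col q = (m + 1 : ℕ)
  · obtain ⟨i, rfl⟩ : ∃ i, q = site (m + 1 : ℕ) i := ⟨q.1, by rw [← hq, site_col]⟩
    have hdent : i ∈ S → site (m + 1 : ℕ) i ∈ westRight b K := fun hi => hS ⟨i, hi, rfl⟩
    have hhole : i ∈ holeSites K (m + 1) → i ∈ S := fun hi => hH hi
    simp only [undented, Set.mem_union, Set.mem_ofPred_eq, Set.mem_sdiff, site_mem_image,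
      site_mem_westLeft m.succ_pos, mem_sdiff, col_site, le_refl, and_true]
    have : ¬ ((m + 1 : ℕ) : ℤ) ≤ m := by omega
    tauto
  · have : col q ≤ (m + 1 : ℕ) ↔ col q ≤ m := by omega
    have hnot (X : Finset ℤ) : q ∉ site (m + 1 : ℕ) '' X := by
      rintro ⟨i, -, rfl⟩
      exact hq (col_site _ i)
    simp only [undented, Set.mem_union, Set.mem_ofPred_eq, Set.mem_sdiff, this, hnot, hq,
      and_false, false_and, or_false]

lemma disjoint_dentedRight (D S : Finset ℤ) :
    Disjoint ({q ∈ westRight b K | col q ≤ m} \ site m '' D)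
      (site m '' D ∪ undented b K (m + 1) S) :=
  Set.disjoint_left.2 fun q hq hq' => hq'.elim hq.2 fun h => by
    have hle := hq.1.2
    rw [h.1.2] at hle
    omega

lemma disjoint_dentedLeft (X S : Finset ℤ) :
    Disjoint {q ∈ westLeft b K | col q ≤ m}
      (site (m + 1 : ℕ) '' X ∪ undented b K (m + 1) S) :=
  Set.disjoint_left.2 fun q hq hq' => by
    have hcol : col q = (m + 1 : ℕ) := by
      obtain ⟨i, -, rfl⟩ | h := hq'
      · exact col_site _ i
      · exact h.1.2
    have hle := hq.2
    omega

end WesternHalf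

section WesternHalfCount

variable {b : ℕ} {K : Finset ℕ} {σ : Prop} {m : ℕ} {S V : Finset ℤ} {C : Set (Site × Site)}

open Classical in
/-- The sites of column `m + 1` in which the lattice paths of a matching end with an up-step. -/
def upSteps (K : Finset ℕ) (m : ℕ) (S : Finset ℤ) (C : Set (Site × Site)) : Finset ℤ :=
  {i ∈ S \ holeSites K (m + 1) | (site m (i - 1), site (m + 1 : ℕ) i) ∈ C}

lemma mem_upSteps {i : ℤ} : i ∈ upSteps K m S C ↔
    i ∈ S \ holeSites K (m + 1) ∧ (site m (i - 1), site (m + 1 : ℕ) i) ∈ C := by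
  classical exact mem_filter

lemma upSteps_subset : upSteps K m S C ⊆ S \ holeSites K (m + 1) :=
  fun _ hi => (mem_upSteps.1 hi).1

lemma IsDented.col_le (h : IsDented b K m S C) {c : Site × Site} (hc : c ∈ C) : col c.2 ≤ m :=
  (h.left.mapsTo hc).2

lemma col_of_mem_topLayer {c : Site × Site} (hc : c ∈ topLayer b K m S V) :
    col c.2 = (m + 1 : ℕ) := by
  obtain ⟨i, -, rfl⟩ | ⟨q, hq, rfl⟩ := hc
  · exact col_site _ i
  · exact hq.1.2

lemma IsDented.disjoint_topLayer (h : IsDented b K m S C) {S' : Finset ℤ} :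
    Disjoint C (topLayer b K m S' V) :=
  Set.disjoint_left.2 fun c hc hc' => by
    have := h.col_le hc
    rw [col_of_mem_topLayer hc'] at this
    omega

lemma upSteps_union_topLayer {D : Finset ℤ} (h : IsDented b K m D C)
    (hVS : V ⊆ S \ holeSites K (m + 1)) : upSteps K m S (C ∪ topLayer b K m S V) = V := by
  ext i
  rw [mem_upSteps]
  constructor
  · rintro ⟨-, hi | ⟨j, -, hj⟩ | ⟨q, -, hq⟩⟩
    · have := h.col_le hi
      rw [col_site] at this
      omega
    · obtain ⟨hstep, hji⟩ := Prod.mk.inj hj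
      rw [site_inj] at hstep hji
      by_contra hiV
      simp only [stepOrigin, hji, hiV, if_false] at hstep
      omega
    · have := congrArg (fun c => (c.1.1, c.2.1)) hq
      simp only [site, Prod.mk.injEq] at this
      omega
  · intro hi
    exact ⟨hVS hi, .inr (.inl ⟨i, hVS hi, by simp only [stepOrigin, hi, if_true]⟩)⟩

lemma isDented_union_topLayer (hS : site (m + 1 : ℕ) '' S ⊆ westRight b K)
    (hH : holeSites K (m + 1) ⊆ S) (hVS : V ⊆ S \ holeSites K (m + 1))
    (hV : IsNoncolliding (S \ holeSites K (m + 1)) V)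
    (hD : site m '' descend (S \ holeSites K (m + 1)) V ⊆ westRight b K)
    (h : IsDented b K m (descend (S \ holeSites K (m + 1)) V) C) :
    IsDented b K (m + 1) S (C ∪ topLayer b K m S V) := by
  rw [IsDented, dentedRight_succ hD, dentedLeft_succ hS hH]
  exact IsMatching.union h (isMatching_topLayer hVS hV) (disjoint_dentedRight _ _)
    (disjoint_dentedLeft _ _)

lemma IsDented.holeSites_subset (hb : 0 < b) (h : IsDented b K (m + 1) S C) :
    holeSites K (m + 1) ⊆ S := by
  intro i hi
  by_contra hiS
  have hR := site_mem_westRight_of_mem_holeSites hb hi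
  obtain ⟨l, hc, hadj⟩ :=
    h.exists_left ⟨⟨hR, (col_site _ i).le⟩, fun h => hiS (site_mem_image.1 h)⟩
  obtain rfl | hcol := hadj.col_eq
  · exact ((site_mem_westLeft m.succ_pos).1 (h.left.mapsTo hc).1).2 hi
  · have := h.col_le hc
    rw [hcol, col_site] at this
    omega

lemma IsDented.step_mem (hS : site (m + 1 : ℕ) '' S ⊆ westRight b K)
    (h : IsDented b K (m + 1) S C) {i : ℤ} (hi : i ∈ S \ holeSites K (m + 1)) :
    (site m (stepOrigin (upSteps K m S C) i), site (m + 1 : ℕ) i) ∈ C := by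
  obtain ⟨hiS, hiH⟩ := mem_sdiff.1 hi
  obtain ⟨r, hc, hadj⟩ := h.exists_right
    ⟨(site_mem_westLeft m.succ_pos).2 ⟨hS ⟨i, hiS, rfl⟩, hiH⟩, (col_site _ i).le⟩
  obtain rfl | rfl | rfl := adj_site_succ hadj
  · exact absurd ⟨i, hiS, rfl⟩ (h.right.mapsTo hc).2
  · rwa [stepOrigin, if_pos (mem_upSteps.2 ⟨hi, hc⟩)]
  · rwa [stepOrigin, if_neg fun hup => ?_]
    have := congrArg (fun c => c.1.1) (h.left.injOn (mem_upSteps.1 hup).2 hc rfl)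
    simp only [site] at this
    omega

lemma IsDented.isNoncolliding_upSteps (hS : site (m + 1 : ℕ) '' S ⊆ westRight b K)
    (h : IsDented b K (m + 1) S C) :
    IsNoncolliding (S \ holeSites K (m + 1)) (upSteps K m S C) := by
  intro i hi hidown hup
  have hstep := h.step_mem hS hi
  rw [stepOrigin, if_neg hidown] at hstep
  have hup := (mem_upSteps.1 hup).2
  rw [add_sub_cancel_right] at hup
  have := congrArg (fun c => c.2.1) (h.right.injOn hstep hup rfl)
  simp only [site] at this
  omega

lemma IsDented.horizontals_subset (h : IsDented b K m S C) :
    horizontals (undented b K m S) ⊆ C := by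
  rintro _ ⟨q, hq, rfl⟩
  obtain ⟨l, hc, hadj⟩ := h.exists_left ⟨⟨hq.1.1, hq.1.2.le⟩, hq.2⟩
  obtain rfl | hcol := hadj.col_eq
  · exact hc
  · have := h.col_le hc
    rw [hcol, hq.1.2] at this
    omega

lemma IsDented.topLayer_subset (hS : site (m + 1 : ℕ) '' S ⊆ westRight b K)
    (h : IsDented b K (m + 1) S C) : topLayer b K m S (upSteps K m S C) ⊆ C := by
  refine Set.union_subset ?_ h.horizontals_subset
  rintro _ ⟨i, hi, rfl⟩
  exact h.step_mem hS hi

lemma IsDented.sdiff_topLayer (hb : 0 < b) (hS : site (m + 1 : ℕ) '' S ⊆ westRight b K)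
    (h : IsDented b K (m + 1) S C) :
    site m '' descend (S \ holeSites K (m + 1)) (upSteps K m S C) ⊆ westRight b K ∧
      IsDented b K m (descend (S \ holeSites K (m + 1)) (upSteps K m S C))
        (C \ topLayer b K m S (upSteps K m S C)) := by
  have htop := isMatching_topLayer (b := b) upSteps_subset (h.isNoncolliding_upSteps hS)
  have hD : site m '' descend (S \ holeSites K (m + 1)) (upSteps K m S C) ⊆ westRight b K := by
    intro q hq
    obtain ⟨c, hc, rfl⟩ := htop.right.surjOn (.inl hq)
    exact (h.right.mapsTo (h.topLayer_subset hS hc)).1.1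
  refine ⟨hD, IsMatching.of_union ?_ htop Set.disjoint_sdiff_left (disjoint_dentedRight _ _)
    (disjoint_dentedLeft _ _)⟩
  rw [Set.sdiff_union_of_subset (h.topLayer_subset hS), ← dentedRight_succ hD,
    ← dentedLeft_succ hS (h.holeSites_subset hb)]
  exact h

end WesternHalfCount

section DentedCount

variable {b : ℕ} {K : Finset ℕ} {σ : Prop} {m : ℕ} {S V : Finset ℤ} {C : Set (Site × Site)}

lemma flipPair_step (m : ℕ) (x i : ℤ) :
    flipPair (site m x, site (m + 1 : ℕ) i) =
      (site m (mirror m x), site (m + 1 : ℕ) (mirror (m + 1) i)) := by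
  rw [flipPair, swap_site, swap_site, Nat.cast_succ]

lemma swap_mem_westRight {q : Site} (hq : q ∈ westRight b K) : q.swap ∈ westRight b K := by
  obtain ⟨hi, hj, hcol, hhole⟩ := hq
  exact ⟨hj, hi, (col_swap q).symm ▸ hcol,
    fun ⟨κ, hκ, hj, hi, h⟩ => hhole ⟨κ, hκ, hi, hj, col_swap q ▸ h⟩⟩

lemma image_mirror_sdiff_holeSites (hS : S.image (mirror (m + 1)) = S) :
    (S \ holeSites K (m + 1)).image (mirror (m + 1)) = S \ holeSites K (m + 1) := by
  rw [image_sdiff _ _ (strictAnti_mirror _).injective, hS, ← Nat.cast_succ,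
    image_mirror_holeSites]

lemma mapsTo_flipPair_topLayer (hS : S.image (mirror (m + 1)) = S)
    (hV : V.image (mirror (m + 1)) = (S \ holeSites K (m + 1)) \ V) :
    Set.MapsTo flipPair (topLayer b K m S V) (topLayer b K m S V) := by
  rintro _ (⟨i, hi, rfl⟩ | ⟨q, hq, rfl⟩)
  · refine .inl ⟨mirror (m + 1) i, ?_, ?_⟩
    · exact (mirror_mem_iff (image_mirror_sdiff_holeSites hS)).2 hi
    · have hup := mirror_mem_iff_mem_sdiff hV (i := i)
      rw [flipPair_step]
      simp only [stepOrigin, hup, mem_coe.1 hi, true_and, Prod.mk.injEq, site_inj, and_true]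
      simp only [mirror]
      split_ifs <;> omega
  · obtain ⟨hqR, i, hi, rfl⟩ := mem_undented.1 hq
    refine .inr ⟨_, mem_undented.2 ⟨swap_mem_westRight hqR, mirror (m + 1 : ℕ) i, ?_, ?_⟩, rfl⟩
    · rwa [Nat.cast_succ, mirror_mem_iff hS]
    · exact swap_site _ _

lemma IsDented.image_mirror_upSteps (hσ : S.image (mirror (m + 1)) = S)
    (hS : site (m + 1 : ℕ) '' S ⊆ westRight b K) (h : IsDented b K (m + 1) S C)
    (hC : Set.MapsTo flipPair C C) :
    (upSteps K m S C).image (mirror (m + 1)) =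
      (S \ holeSites K (m + 1)) \ upSteps K m S C := by
  have hdown {i : ℤ} : i ∈ (S \ holeSites K (m + 1)) \ upSteps K m S C ↔
      i ∈ S \ holeSites K (m + 1) ∧ (site m i, site (m + 1 : ℕ) i) ∈ C := by
    rw [mem_sdiff]
    refine and_congr_right fun hi => ⟨fun hup => ?_, fun hstep hup => ?_⟩
    · have := h.step_mem hS hi
      rwa [stepOrigin, if_neg hup] at this
    · have := congrArg (fun c => c.1.1)
        (h.left.injOn hstep (mem_upSteps.1 hup).2 rfl)
      simp only [site] at this
      omega
  have hflip {i : ℤ} : (site m (mirror (m + 1) i - 1), site (m + 1 : ℕ) (mirror (m + 1) i)) ∈ C ↔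
      (site m i, site (m + 1 : ℕ) i) ∈ C := by
    have := flipPair_step m i i
    rw [show mirror m i = mirror (m + 1) i - 1 by simp only [mirror]; omega] at this
    rw [← this]
    exact ⟨fun h => hC h, fun h => hC h⟩
  ext i
  rw [hdown, ← hflip]
  conv_lhs => rw [← mirror_mirror (m + 1) i, (strictAnti_mirror _).injective.mem_finset_image]
  rw [mem_upSteps, mirror_mem_iff (image_mirror_sdiff_holeSites hσ)]

/-- The dented matchings of column `m`; with the condition `σ`, only those invariant under
reflection in the horizontal axis. -/
def dentedMatchings (b : ℕ) (K : Finset ℕ) (σ : Prop) (m : ℕ) (S : Finset ℤ) :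
    Set (Set (Site × Site)) :=
  {C | site m '' S ⊆ westRight b K ∧ IsDented b K m S C ∧ (σ → Set.MapsTo flipPair C C)}

/-- The possible sets of up-steps ending in column `m + 1` of a dented matching. -/
def upStepSets (K : Finset ℕ) (σ : Prop) [Decidable σ] (m : ℕ) (S : Finset ℤ) :
    Finset (Finset ℤ) :=
  {V ∈ (S \ holeSites K (m + 1)).powerset | IsNoncolliding (S \ holeSites K (m + 1)) V ∧
    (σ → V.image (mirror (m + 1)) = (S \ holeSites K (m + 1)) \ V)}

lemma dentedMatchings_succ [Decidable σ] (hb : 0 < b)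
    (hS : site (m + 1 : ℕ) '' S ⊆ westRight b K)
    (hσ : σ → S.image (mirror (m + 1)) = S) (hH : holeSites K (m + 1) ⊆ S) :
    dentedMatchings b K σ (m + 1) S = ⋃ V ∈ upStepSets K σ m S, (· ∪ topLayer b K m S V) ''
      dentedMatchings b K σ m (descend (S \ holeSites K (m + 1)) V) := by
  ext C
  simp only [Set.mem_iUnion, Set.mem_image, upStepSets, mem_filter, mem_powerset]
  constructor
  · rintro ⟨-, hC, hflip⟩
    have hV (h : σ) := hC.image_mirror_upSteps (hσ h) hS (hflip h)
    obtain ⟨hD, hC'⟩ := hC.sdiff_topLayer hb hS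
    refine ⟨_, ⟨upSteps_subset, hC.isNoncolliding_upSteps hS, hV⟩, _, ⟨hD, hC', fun h => ?_⟩,
      Set.sdiff_union_of_subset (hC.topLayer_subset hS)⟩
    exact mapsTo_sdiff involutive_flipPair (hflip h)
      (mapsTo_flipPair_topLayer (hσ h) (hV h))
  · rintro ⟨V, ⟨hVS, hV, hmirror⟩, C, ⟨hD, hC, hflip⟩, rfl⟩
    exact ⟨hS, isDented_union_topLayer hS hH hVS hV hD hC, fun h =>
      (hflip h).union_union (mapsTo_flipPair_topLayer (hσ h) (hmirror h))⟩

lemma encard_dentedMatchings_succ [Decidable σ] (hb : 0 < b)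
    (hS : site (m + 1 : ℕ) '' S ⊆ westRight b K)
    (hσ : σ → S.image (mirror (m + 1)) = S) (hH : holeSites K (m + 1) ⊆ S) :
    (dentedMatchings b K σ (m + 1) S).encard = ∑ V ∈ upStepSets K σ m S,
      (dentedMatchings b K σ m (descend (S \ holeSites K (m + 1)) V)).encard := by
  have hVS {V} (hV : V ∈ (upStepSets K σ m S : Set (Finset ℤ))) : V ⊆ S \ holeSites K (m + 1) :=
    mem_powerset.1 (mem_filter.1 hV).1
  rw [dentedMatchings_succ hb hS hσ hH]
  refine ((upStepSets K σ m S).finite_toSet.encard_biUnion ?_).trans ?_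
  · intro V hV V' hV' hne
    refine Set.disjoint_left.2 ?_
    rintro _ ⟨C, hC, rfl⟩ ⟨C', hC', heq⟩
    refine hne ?_
    rw [← upSteps_union_topLayer hC.2.1 (hVS hV), ← upSteps_union_topLayer hC'.2.1 (hVS hV')]
    exact congrArg (upSteps K m S) heq.symm
  · rw [finsum_mem_coe_finset]
    refine sum_congr rfl fun V _ => Set.InjOn.encard_image fun C hC C' hC' heq => ?_
    rw [← hC.2.1.disjoint_topLayer.sup_sdiff_cancel_right,
      ← hC'.2.1.disjoint_topLayer.sup_sdiff_cancel_right]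
    exact congrArg (· \ topLayer b K m S V) heq

lemma holeSites_subset_Ico (hb : 0 < b) : holeSites K m ⊆ Ico (-b : ℤ) (m + b) := by
  intro i hi
  obtain ⟨κ, -, rfl, hi⟩ := mem_holeSites.1 hi
  rw [mem_Ico]
  push_cast
  omega

lemma subset_Ico_of_pathCount_ne_zero [Decidable σ] (hb : 0 < b)
    (h : pathCount b K σ m S ≠ 0) : S ⊆ Ico (-b : ℤ) (m + b) := by
  induction m generalizing S with
  | zero =>
    rw [pathCount] at h
    have := (ite_ne_right_iff.1 h).1
    simp [this]
  | succ m ih =>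
    rw [pathCount] at h
    obtain ⟨V, hV, hne⟩ := exists_ne_zero_of_sum_ne_zero h
    have hD := (sdiff_le_iff.1 (ih hne)).trans (union_subset (holeSites_subset_Ico hb) Subset.rfl)
    intro i hi
    have horigin : stepOrigin V i ∈ descend S V := by
      rw [← mem_coe, ← image_stepOrigin (mem_powerset.1 (mem_filter.1 hV).1)]
      exact ⟨i, hi, rfl⟩
    have := mem_Ico.1 (hD horigin)
    rw [mem_Ico]
    simp only [stepOrigin] at this
    push_cast
    split_ifs at this <;> omega

lemma site_mem_westRight_of_mem_descend (hV : V ⊆ S \ holeSites K (m + 1)) {i : ℤ}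
    (hi : i ∈ descend (S \ holeSites K (m + 1)) V) (hIco : i ∈ Ico (-b : ℤ) (m + b)) :
    site m i ∈ westRight b K := by
  rw [mem_Ico] at hIco
  have avoid {j : ℤ} (hj : j ∈ S \ holeSites K (m + 1)) :
      ∀ κ ∈ K, m + 1 = 2 * κ → ¬(j = κ - 1 ∨ j = κ) :=
    fun κ hκ hm h => (mem_sdiff.1 hj).2 (mem_holeSites.2 ⟨κ, hκ, hm, h⟩)
  refine ⟨hIco.1, show -(b : ℤ) ≤ m - 1 - i by omega, by rw [col_site]; omega, ?_⟩
  rintro ⟨κ, hκ, hκi, hκj, hlt⟩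
  rw [col_site] at hlt
  simp only [site] at hκi hκj
  obtain hup | ⟨hdown, -⟩ := mem_descend.1 hi
  · exact avoid (hV hup) κ hκ (by omega) (by omega)
  · exact avoid hdown κ hκ (by omega) (by omega)

lemma site_zero_mem_westRight {i : ℤ} :
    site (0 : ℕ) i ∈ westRight b K ↔ i ∈ Ico (-b : ℤ) b := by
  rw [mem_Ico]
  constructor
  · rintro ⟨hi, hj, -⟩
    simp only [site] at hi hj
    omega
  · intro hi
    refine ⟨hi.1, show -(b : ℤ) ≤ (0 : ℕ) - 1 - i by omega, (col_site _ i).ge, ?_⟩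
    rintro ⟨κ, -, hκi, hκj, hlt⟩
    rw [col_site] at hlt
    simp only [site] at hκi hκj
    omega

lemma isDented_zero : IsDented b K 0 S C ↔ Ico (-b : ℤ) b ⊆ S ∧ C = ∅ := by
  have hleft : {q ∈ westLeft b K | col q ≤ (0 : ℕ)} = ∅ :=
    Set.eq_empty_iff_forall_notMem.2 fun q hq => by have := hq.1.2.2.1; have := hq.2; omega
  have hright : {q ∈ westRight b K | col q ≤ (0 : ℕ)} = site (0 : ℕ) '' Ico (-b : ℤ) b := by
    ext q
    constructor
    · rintro ⟨hq, hcol⟩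
      have hcol : col q = (0 : ℕ) := by have := hq.2.2.1; omega
      rw [← site_col q, hcol] at hq ⊢
      exact site_mem_image.2 (site_zero_mem_westRight.1 hq)
    · rintro ⟨i, hi, rfl⟩
      exact ⟨site_zero_mem_westRight.2 hi, (col_site _ i).le⟩
  rw [IsDented, hleft, hright, ← coe_subset,
    ← Set.image_subset_image_iff (fun i j h => (site_inj (m := (0 : ℕ))).1 h), ← Set.sdiff_eq_empty]
  constructor
  · intro h
    obtain rfl : C = ∅ := Set.eq_empty_iff_forall_notMem.2 fun c hc => h.left.mapsTo hc
    exact ⟨h.right.image_eq.symm.trans (Set.image_empty _), rfl⟩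
  · rintro ⟨h, rfl⟩
    rw [h]
    exact ⟨by simp, Set.bijOn_empty _, Set.bijOn_empty _⟩

lemma encard_dentedMatchings_zero [Decidable σ] (hS : site (0 : ℕ) '' S ⊆ westRight b K) :
    (dentedMatchings b K σ 0 S).encard = (pathCount b K σ 0 S : ℕ) := by
  have hIco : S ⊆ Ico (-b : ℤ) b := fun i hi => site_zero_mem_westRight.1 (hS ⟨i, hi, rfl⟩)
  rw [pathCount]
  split_ifs with h
  · have : dentedMatchings b K σ 0 S = {∅} := by
      ext C
      rw [Set.mem_singleton_iff]
      refine ⟨fun hC => (isDented_zero.1 hC.2.1).2, ?_⟩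
      rintro rfl
      exact ⟨hS, isDented_zero.2 ⟨h.ge, rfl⟩, fun _ => Set.mapsTo_empty _ _⟩
    rw [this, Set.encard_singleton, Nat.cast_one]
  · rw [Nat.cast_zero, Set.encard_eq_zero, Set.eq_empty_iff_forall_notMem]
    exact fun C hC => h (hIco.antisymm (isDented_zero.1 hC.2.1).1)

lemma pathCount_descend_eq_zero [Decidable σ] (hb : 0 < b)
    (hV : V ⊆ S \ holeSites K (m + 1))
    (hD : ¬ site m '' descend (S \ holeSites K (m + 1)) V ⊆ westRight b K) :
    pathCount b K σ m (descend (S \ holeSites K (m + 1)) V \ holeSites K m) = 0 := by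
  by_contra hne
  have hIco := (sdiff_le_iff.1 (subset_Ico_of_pathCount_ne_zero hb hne)).trans
    (union_subset (holeSites_subset_Ico hb) Subset.rfl)
  refine hD ?_
  rintro _ ⟨i, hi, rfl⟩
  exact site_mem_westRight_of_mem_descend hV hi (hIco hi)

theorem encard_dentedMatchings [Decidable σ] (hb : 0 < b) (hK : 0 ∉ K)
    (hS : site m '' S ⊆ westRight b K) (hσ : σ → S.image (mirror m) = S) :
    (dentedMatchings b K σ m S).encard =
      (if holeSites K m ⊆ S then pathCount b K σ m (S \ holeSites K m) else 0 : ℕ) := by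
  induction m generalizing S with
  | zero =>
    have : holeSites K 0 = ∅ := by
      ext i
      simp only [mem_holeSites, notMem_empty, iff_false]
      rintro ⟨κ, hκ, h0, -⟩
      exact hK (by rwa [show κ = 0 by omega] at hκ)
    rw [this, if_pos (empty_subset S), sdiff_empty, encard_dentedMatchings_zero hS]
  | succ m ih =>
    split_ifs with hH
    · rw [encard_dentedMatchings_succ hb hS (by simpa using hσ) hH, pathCount]
      have hterm : ∀ V ∈ upStepSets K σ m S,
          (dentedMatchings b K σ m (descend (S \ holeSites K (m + 1)) V)).encard =
            (if holeSites K m ⊆ descend (S \ holeSites K (m + 1)) V then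
              pathCount b K σ m (descend (S \ holeSites K (m + 1)) V \ holeSites K m)
              else 0 : ℕ) := by
        intro V hV
        obtain ⟨hVS, -, hmirror⟩ := mem_filter.1 hV
        by_cases hD : site m '' descend (S \ holeSites K (m + 1)) V ⊆ westRight b K
        · exact ih hD fun h => image_mirror_descend (hmirror h)
        · rw [pathCount_descend_eq_zero hb (mem_powerset.1 hVS) hD, ite_self, Nat.cast_zero,
            Set.encard_eq_zero, Set.eq_empty_iff_forall_notMem]
          exact fun C hC => hD hC.1
      rw [sum_congr rfl hterm, ← Nat.cast_sum, ← sum_filter, upStepSets, filter_filter]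
      simp only [and_right_comm, and_assoc]
    · rw [Nat.cast_zero, Set.encard_eq_zero, Set.eq_empty_iff_forall_notMem]
      exact fun C hC => hH (hC.2.1.holeSites_subset hb)

end DentedCount

section Rotation

/-- The rotation of sites by `180°` about the centre of the hexagon; it exchanges left- and
right-pointing triangles. -/
def rotSite (a : ℕ) (q : Site) : Site := (a - 1 - q.1, a - 1 - q.2)

/-- The rotation of lozenges by `180°` about the centre of the hexagon. -/
def rotPair (a : ℕ) (c : Site × Site) : Site × Site := (rotSite a c.2, rotSite a c.1)

/-- The right-pointing triangles of the holey hexagon. -/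
def rightSites (a b : ℕ) (K : Finset ℕ) : Set Site := westRight b K ∩ rotSite a ⁻¹' westLeft b K

/-- The left-pointing triangles of the holey hexagon. -/
def leftSites (a b : ℕ) (K : Finset ℕ) : Set Site := rotSite a ⁻¹' rightSites a b K

variable {a b : ℕ} {K : Finset ℕ} {S : Finset ℤ} {R L : Set Site} {C : Set (Site × Site)}

lemma involutive_rotSite (a : ℕ) : Function.Involutive (rotSite a) := fun q =>
  Prod.ext (sub_sub_cancel _ q.1) (sub_sub_cancel _ q.2)

lemma involutive_rotPair (a : ℕ) : Function.Involutive (rotPair a) := fun c =>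
  Prod.ext (involutive_rotSite a c.1) (involutive_rotSite a c.2)

lemma col_rotSite (a : ℕ) (q : Site) : col (rotSite a q) = 2 * a - col q := by
  simp only [col, rotSite]; omega

lemma rotSite_site (a : ℕ) (i : ℤ) : rotSite a (site a i) = site a (mirror a i) :=
  Prod.ext rfl (by simp only [rotSite, site, mirror])

lemma Adj.rot {r l : Site} (h : Adj r l) (a : ℕ) : Adj (rotSite a l) (rotSite a r) := by
  obtain ⟨i, j⟩ := r
  obtain ⟨i', j'⟩ := l
  simp only [Adj, rotSite, Prod.mk.injEq] at h ⊢
  omega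

lemma bijOn_comp_involutive {α β : Type*} {f : α → β} {g : α → α} {h : β → β} {s : Set α}
    {t : Set β} (hf : Set.BijOn f s t) (hg : g.Involutive) (hh : h.Involutive) :
    Set.BijOn (h ∘ f ∘ g) (g ⁻¹' s) (h ⁻¹' t) := by
  rw [← hg.image_eq_preimage_symm, ← hh.image_eq_preimage_symm]
  refine ((hh.injective.injOn.bijOn_image).comp hf).comp ?_
  rw [hg.image_eq_preimage_symm]
  exact ⟨fun _ h => h, hg.injective.injOn, fun x hx => ⟨g x, by rwa [Set.mem_preimage, hg], hg x⟩⟩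

lemma IsMatching.rot (h : IsMatching R L C) (a : ℕ) :
    IsMatching (rotSite a ⁻¹' L) (rotSite a ⁻¹' R) (rotPair a ⁻¹' C) where
  adj c hc := by
    have := (h.adj _ hc).rot a
    rwa [rotPair, involutive_rotSite a, involutive_rotSite a] at this
  right := by
    convert bijOn_comp_involutive h.left (involutive_rotPair a) (involutive_rotSite a) using 1
    exact funext fun c => (involutive_rotSite a c.1).symm
  left := by
    convert bijOn_comp_involutive h.right (involutive_rotPair a) (involutive_rotSite a) using 1
    exact funext fun c => (involutive_rotSite a c.2).symm

end Rotation

section Assembly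

variable {a b : ℕ} {K : Finset ℕ} {σ : Prop} {S : Finset ℤ} {C : Set (Site × Site)}

lemma mem_leftSites {q : Site} :
    q ∈ leftSites a b K ↔ q ∈ westLeft b K ∧ rotSite a q ∈ westRight b K := by
  rw [leftSites, rightSites, Set.mem_preimage, Set.mem_inter_iff, Set.mem_preimage,
    involutive_rotSite a, and_comm]

lemma rotSite_mem_westLeft (ha : 0 < a) (hK : ∀ κ ∈ K, 2 * κ < a) {q : Site}
    (hq : q ∈ westRight b K) (hcol : col q ≤ a) : rotSite a q ∈ westLeft b K := by
  obtain ⟨hi, hj, -⟩ := hq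
  have hcol' := col_rotSite a q
  refine ⟨?_, ?_, by omega, ?_⟩
  · simp only [col, rotSite] at hcol ⊢; omega
  · simp only [col, rotSite] at hcol ⊢; omega
  · rintro ⟨κ, hκ, -, -, hle⟩
    have := hK κ hκ
    omega

lemma westLeft_subset_westRight : westLeft b K ⊆ westRight b K := by
  rintro q ⟨hi, hj, hcol, hhole⟩
  exact ⟨hi, hj, hcol.le, fun ⟨κ, hκ, hκi, hκj, hlt⟩ => hhole ⟨κ, hκ, hκi, hκj, hlt.le⟩⟩

lemma mem_rightSites_of_col_le (ha : 0 < a) (hK : ∀ κ ∈ K, 2 * κ < a) {q : Site}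
    (hcol : col q ≤ a) : q ∈ rightSites a b K ↔ q ∈ westRight b K :=
  ⟨And.left, fun hq => ⟨hq, rotSite_mem_westLeft ha hK hq hcol⟩⟩

lemma mem_leftSites_of_col_le (ha : 0 < a) (hK : ∀ κ ∈ K, 2 * κ < a) {q : Site}
    (hcol : col q ≤ a) : q ∈ leftSites a b K ↔ q ∈ westLeft b K := by
  rw [mem_leftSites]
  exact ⟨And.left, fun hq => ⟨hq, westLeft_subset_westRight
    (rotSite_mem_westLeft ha hK (westLeft_subset_westRight hq) hcol)⟩⟩

lemma site_mem_rightSites (ha : 0 < a) (hK : ∀ κ ∈ K, 2 * κ < a) {i : ℤ} :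
    site a i ∈ rightSites a b K ↔ i ∈ Ico (-b : ℤ) (a + b) := by
  rw [mem_rightSites_of_col_le ha hK (col_site _ i).le, mem_Ico]
  constructor
  · rintro ⟨hi, hj, -⟩
    simp only [site] at hi hj
    omega
  · intro hi
    refine ⟨hi.1, show -(b : ℤ) ≤ a - 1 - i by omega, by rw [col_site]; omega, ?_⟩
    rintro ⟨κ, hκ, -, -, hlt⟩
    rw [col_site] at hlt
    have := hK κ hκ
    omega

lemma site_mem_leftSites (ha : 0 < a) (hK : ∀ κ ∈ K, 2 * κ < a) {i : ℤ} :
    site a i ∈ leftSites a b K ↔ i ∈ Ico (-b : ℤ) (a + b) := by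
  rw [leftSites, Set.mem_preimage, rotSite_site, site_mem_rightSites ha hK]
  simp only [mirror, mem_Ico]
  omega

/-- The matchings of the holey hexagon invariant under rotation by `180°`; with the condition `σ`,
only those also invariant under reflection. -/
def rotMatchings (a b : ℕ) (K : Finset ℕ) (σ : Prop) : Set (Set (Site × Site)) :=
  {C | IsMatching (rightSites a b K) (leftSites a b K) C ∧ Set.MapsTo (rotPair a) C C ∧
    (σ → Set.MapsTo flipPair C C)}

/-- The part of a matching west of column `a`, including the lozenges centred on that column. -/
def westPart (a : ℕ) (C : Set (Site × Site)) : Set (Site × Site) := {c ∈ C | col c.2 ≤ a}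

open Classical in
/-- The sites of column `a` whose triangles do not form a lozenge of the matching. -/
def crossings (a b : ℕ) (C : Set (Site × Site)) : Finset ℤ :=
  {i ∈ Ico (-b : ℤ) (a + b) | (site a i, site a i) ∉ C}

lemma mem_crossings {i : ℤ} :
    i ∈ crossings a b C ↔ i ∈ Ico (-b : ℤ) (a + b) ∧ (site a i, site a i) ∉ C := by
  classical exact mem_filter

lemma crossings_mem_symmetricSites (hC : Set.MapsTo (rotPair a) C C) :
    crossings a b C ∈ symmetricSites a b := by
  refine mem_filter.2 ⟨mem_powerset.2 fun i hi => (mem_crossings.1 hi).1, ?_⟩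
  have hrot {i : ℤ} (h : (site a i, site a i) ∈ C) :
      (site a (mirror a i), site a (mirror a i)) ∈ C := by
    rw [← rotSite_site]
    exact hC h
  ext i
  rw [← mirror_mirror a i, (strictAnti_mirror _).injective.mem_finset_image, mirror_mirror,
    mem_crossings, mem_crossings]
  refine and_congr (by simp only [mirror, mem_Ico]; omega) (not_congr ⟨fun h => ?_, hrot⟩)
  simpa only [mirror_mirror] using hrot h

lemma bijOn_fst_westPart (ha : 0 < a) (hK : ∀ κ ∈ K, 2 * κ < a)
    (h : IsMatching (rightSites a b K) (leftSites a b K) C) :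
    Set.BijOn Prod.fst (westPart a C)
      ({q ∈ westRight b K | col q ≤ a} \ site a '' crossings a b C) := by
  refine ⟨?_, h.right.injOn.mono fun _ hc => hc.1, ?_⟩
  · intro c ⟨hc, hcol⟩
    have hcols := (h.adj c hc).col_eq
    have hle : col c.1 ≤ a := by
      rcases hcols with heq | heq
      · rwa [← heq]
      · omega
    refine ⟨⟨(mem_rightSites_of_col_le ha hK hle).1 (h.right.mapsTo hc), hle⟩, ?_⟩
    rintro ⟨i, hi, hi'⟩
    obtain heq | heq := hcols
    · refine (mem_crossings.1 hi).2 ?_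
      rw [hi']
      nth_rw 2 [← heq]
      exact hc
    · rw [← hi', col_site] at heq
      omega
  · rintro q ⟨⟨hq, hcol⟩, hS⟩
    have hq := (mem_rightSites_of_col_le ha hK hcol).2 hq
    obtain ⟨l, hc, hadj⟩ := h.exists_left hq
    refine ⟨_, ⟨hc, ?_⟩, rfl⟩
    change col l ≤ a
    obtain rfl | hl := hadj.col_eq
    · exact hcol
    by_contra hlt
    have hqa : col q = a := by omega
    rw [← site_col q, hqa] at hq hS hc
    refine hS (site_mem_image.2 (mem_crossings.2 ⟨(site_mem_rightSites ha hK).1 hq, ?_⟩))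
    intro hc'
    rw [show l = _ from congrArg Prod.snd (h.right.injOn hc hc' rfl), col_site] at hlt
    exact hlt le_rfl

lemma isDented_westPart (ha : 0 < a) (hK : ∀ κ ∈ K, 2 * κ < a)
    (h : IsMatching (rightSites a b K) (leftSites a b K) C) :
    IsDented b K a (crossings a b C) (westPart a C) where
  adj c hc := h.adj c hc.1
  right := bijOn_fst_westPart ha hK h
  left := by
    refine ⟨fun c hc => ⟨(mem_leftSites_of_col_le ha hK hc.2).1 (h.left.mapsTo hc.1), hc.2⟩,
      h.left.injOn.mono fun _ hc => hc.1, fun q hq => ?_⟩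
    obtain ⟨r, hc, -⟩ := h.exists_right ((mem_leftSites_of_col_le ha hK hq.2).2 hq.1)
    exact ⟨_, ⟨hc, hq.2⟩, rfl⟩

lemma westPart_union_rot (hadj : ∀ c ∈ C, Adj c.1 c.2) (hrot : Set.MapsTo (rotPair a) C C) :
    westPart a C ∪ rotPair a ⁻¹' westPart a C = C := by
  ext c
  refine ⟨fun hc => hc.elim And.left fun hc => ?_, fun hc => ?_⟩
  · rw [← involutive_rotPair a c]
    exact hrot hc.1
  · by_cases hcol : col c.2 ≤ a
    · exact .inl ⟨hc, hcol⟩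
    · refine .inr ⟨hrot hc, ?_⟩
      have := (hadj c hc).col_eq
      rw [rotPair, col_rotSite]
      rcases this with heq | heq
      · rw [← heq]; omega
      · omega

end Assembly

section RotationCount

variable {a b : ℕ} {K : Finset ℕ} {σ : Prop} {S : Finset ℤ} {C : Set (Site × Site)}

lemma rotSite_mem_image_site (hS : S.image (mirror a) = S) {q : Site} :
    rotSite a q ∈ site a '' S ↔ q ∈ site a '' S := by
  have hmaps {q : Site} (hq : q ∈ site a '' S) : rotSite a q ∈ site a '' S := by
    obtain ⟨i, hi, rfl⟩ := hq
    rw [rotSite_site, site_mem_image, mirror_mem_iff hS]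
    exact hi
  exact ⟨fun h => involutive_rotSite a q ▸ hmaps h, hmaps⟩

lemma rightSites_eq_union (ha : 0 < a) (hK : ∀ κ ∈ K, 2 * κ < a) (hS : S.image (mirror a) = S)
    (hSW : site a '' S ⊆ westRight b K) :
    rightSites a b K = ({q ∈ westRight b K | col q ≤ a} \ site a '' S) ∪
      rotSite a ⁻¹' ({q ∈ westLeft b K | col q < a} ∪ site a '' S) := by
  ext q
  have hcol := col_rotSite a q
  rw [Set.mem_union, Set.mem_preimage, Set.mem_union, rotSite_mem_image_site hS]
  by_cases hq : col q ≤ a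
  · have : ¬ col (rotSite a q) < a := by omega
    have := @hSW q
    simp only [mem_rightSites_of_col_le ha hK hq, Set.mem_sdiff, Set.mem_ofPred_eq]
    tauto
  · have hsite : q ∉ site a '' S := by
      rintro ⟨i, -, rfl⟩
      exact hq (col_site _ i).le
    have hlt : col (rotSite a q) < a := by omega
    rw [← involutive_rotSite a q, ← Set.mem_preimage, ← leftSites,
      mem_leftSites_of_col_le ha hK hlt.le, involutive_rotSite a]
    simp only [Set.mem_sdiff, Set.mem_ofPred_eq]
    tauto

lemma leftSites_eq_union (ha : 0 < a) (hK : ∀ κ ∈ K, 2 * κ < a) :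
    leftSites a b K = {q ∈ westLeft b K | col q ≤ a} ∪
      rotSite a ⁻¹' {q ∈ westRight b K | col q < a} := by
  ext q
  have hcol := col_rotSite a q
  by_cases hq : col q ≤ a
  · have : ¬ col (rotSite a q) < a := by omega
    simp only [mem_leftSites_of_col_le ha hK hq, Set.mem_union, Set.mem_preimage,
      Set.mem_ofPred_eq]
    tauto
  · have hlt : col (rotSite a q) < a := by omega
    rw [leftSites, Set.mem_preimage, mem_rightSites_of_col_le ha hK hlt.le]
    simp only [Set.mem_union, Set.mem_preimage, Set.mem_ofPred_eq]
    tauto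

lemma mem_westLeft_of_col_eq (ha : 0 < a) (hK : ∀ κ ∈ K, 2 * κ < a) {q : Site}
    (hcol : col q = a) : q ∈ westLeft b K ↔ q ∈ westRight b K := by
  rw [← mem_leftSites_of_col_le ha hK hcol.le, ← mem_rightSites_of_col_le ha hK hcol.le,
    ← site_col q, hcol, site_mem_leftSites ha hK, site_mem_rightSites ha hK]

lemma dentedRight_eq_union :
    {q ∈ westRight b K | col q ≤ a} \ site a '' S =
      {q ∈ westRight b K | col q < a} ∪ undented b K a S := by
  ext q
  simp only [undented, Set.mem_sdiff, Set.mem_union, Set.mem_ofPred_eq, le_iff_lt_or_eq]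
  have : col q < a → q ∉ site a '' S := by
    rintro hq ⟨i, -, rfl⟩
    exact hq.ne (col_site _ i)
  tauto

lemma dentedLeft_eq_union (ha : 0 < a) (hK : ∀ κ ∈ K, 2 * κ < a)
    (hSW : site a '' S ⊆ westRight b K) :
    {q ∈ westLeft b K | col q ≤ a} =
      ({q ∈ westLeft b K | col q < a} ∪ site a '' S) ∪ undented b K a S := by
  ext q
  simp only [undented, Set.mem_sdiff, Set.mem_union, Set.mem_ofPred_eq, le_iff_lt_or_eq]
  have hsite : q ∈ site a '' S → col q = a := by
    rintro ⟨i, -, rfl⟩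
    exact col_site _ i
  have := @hSW q
  have := fun h => mem_westLeft_of_col_eq (b := b) ha hK (q := q) h
  tauto

lemma IsDented.sdiff_horizontals (ha : 0 < a) (hK : ∀ κ ∈ K, 2 * κ < a)
    (hSW : site a '' S ⊆ westRight b K) (h : IsDented b K a S C) :
    IsMatching {q ∈ westRight b K | col q < a}
      ({q ∈ westLeft b K | col q < a} ∪ site a '' S) (C \ horizontals (undented b K a S)) := by
  refine IsMatching.of_union ?_ (isMatching_horizontals (undented b K a S))
    Set.disjoint_sdiff_left ?_ ?_
  · rwa [Set.sdiff_union_of_subset h.horizontals_subset, ← dentedRight_eq_union,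
      ← dentedLeft_eq_union ha hK hSW]
  · exact Set.disjoint_left.2 fun q hq hq' => hq.2.ne hq'.1.2
  · exact Set.disjoint_left.2 fun q hq hq' => hq.elim (fun h => h.2.ne hq'.1.2) hq'.2

lemma mapsTo_rotPair_horizontals (ha : 0 < a) (hK : ∀ κ ∈ K, 2 * κ < a)
    (hS : S.image (mirror a) = S) :
    Set.MapsTo (rotPair a) (horizontals (undented b K a S)) (horizontals (undented b K a S)) := by
  rintro _ ⟨q, ⟨⟨hq, hcol⟩, hqS⟩, rfl⟩
  have hcol' : col (rotSite a q) = a := by rw [col_rotSite]; omega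
  refine ⟨rotSite a q, ⟨⟨?_, hcol'⟩, fun h => hqS ((rotSite_mem_image_site hS).1 h)⟩, rfl⟩
  exact westLeft_subset_westRight (rotSite_mem_westLeft ha hK hq hcol.le)

lemma IsDented.isMatching_union_rot (ha : 0 < a) (hK : ∀ κ ∈ K, 2 * κ < a)
    (hS : S.image (mirror a) = S) (hSW : site a '' S ⊆ westRight b K) (h : IsDented b K a S C) :
    IsMatching (rightSites a b K) (leftSites a b K) (C ∪ rotPair a ⁻¹' C) := by
  have hunion : C ∪ rotPair a ⁻¹' C = C ∪ rotPair a ⁻¹' (C \ horizontals (undented b K a S)) := by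
    refine Set.Subset.antisymm (Set.union_subset Set.subset_union_left fun c hc => ?_)
      (Set.union_subset_union_right _ fun c hc => hc.1)
    by_cases hc' : rotPair a c ∈ horizontals (undented b K a S)
    · rw [← involutive_rotPair a c]
      exact .inl (h.horizontals_subset (mapsTo_rotPair_horizontals ha hK hS hc'))
    · exact .inr ⟨hc, hc'⟩
  rw [hunion, rightSites_eq_union ha hK hS hSW, leftSites_eq_union ha hK]
  refine IsMatching.union h ((h.sdiff_horizontals ha hK hSW).rot a) ?_ ?_
  · refine Set.disjoint_left.2 fun q hq hq' => hq'.elim (fun h => ?_)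
      fun h => hq.2 ((rotSite_mem_image_site hS).1 h)
    have := col_rotSite a q
    have := h.2
    have := hq.1.2
    omega
  · refine Set.disjoint_left.2 fun q hq hq' => ?_
    have := col_rotSite a q
    have := hq'.2
    have := hq.2
    omega

lemma IsDented.westPart_union_rot (ha : 0 < a) (hK : ∀ κ ∈ K, 2 * κ < a)
    (hS : S.image (mirror a) = S) (h : IsDented b K a S C) :
    westPart a (C ∪ rotPair a ⁻¹' C) = C := by
  ext c
  refine ⟨fun ⟨hc, hcol⟩ => hc.elim id fun hc => ?_, fun hc => ⟨.inl hc, h.col_le hc⟩⟩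
  have hright := h.right.mapsTo hc
  have hcol₁ : col (rotSite a c.2) ≤ a := hright.1.2
  have hcol₂ : col (rotSite a c.1) ≤ a := h.col_le hc
  have hadj := (h.adj _ hc).col_eq
  simp only [rotPair] at hadj
  rw [col_rotSite] at hcol₁ hcol₂
  have heq : rotSite a c.1 = rotSite a c.2 := by
    refine hadj.resolve_right fun heq => ?_
    rw [col_rotSite, col_rotSite] at heq
    omega
  have hhor : rotPair a c ∈ horizontals (undented b K a S) :=
    ⟨rotSite a c.2, ⟨⟨hright.1.1, by rw [col_rotSite]; omega⟩, hright.2⟩,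
      Prod.ext rfl heq.symm⟩
  rw [← involutive_rotPair a c]
  exact h.horizontals_subset (mapsTo_rotPair_horizontals ha hK hS hhor)

lemma rotMatchings_eq_biUnion (ha : 0 < a) (hK : ∀ κ ∈ K, 2 * κ < a) :
    rotMatchings a b K σ = ⋃ S ∈ symmetricSites a b,
      (fun C => C ∪ rotPair a ⁻¹' C) '' dentedMatchings b K σ a S := by
  ext C
  simp only [Set.mem_iUnion, Set.mem_image]
  constructor
  · rintro ⟨hC, hrot, hflip⟩
    refine ⟨_, crossings_mem_symmetricSites hrot, westPart a C,
      ⟨?_, isDented_westPart ha hK hC, fun h c hc => ⟨hflip h hc.1, ?_⟩⟩,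
      westPart_union_rot hC.adj hrot⟩
    · rintro _ ⟨i, hi, rfl⟩
      exact ((site_mem_rightSites ha hK).2 (mem_crossings.1 hi).1).1
    · rw [flipPair, col_swap]
      exact hc.2
  · rintro ⟨S, hS, C, ⟨hSW, hC, hflip⟩, rfl⟩
    refine ⟨hC.isMatching_union_rot ha hK (mem_filter.1 hS).2 hSW, ?_, fun h => ?_⟩
    · rintro c (hc | hc)
      · exact .inr (by rwa [Set.mem_preimage, involutive_rotPair a])
      · exact .inl hc
    · rintro c (hc | hc)
      · exact .inl (hflip h hc)
      · exact .inr (hflip h hc)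

lemma IsDented.image_site_eq (hSW : site a '' S ⊆ westRight b K) (h : IsDented b K a S C) :
    site a '' S = {q ∈ westRight b K | col q ≤ a} \ Prod.fst '' C := by
  have hcol : site a '' S ⊆ {q ∈ westRight b K | col q ≤ a} := fun q hq =>
    ⟨hSW hq, by obtain ⟨i, -, rfl⟩ := hq; exact (col_site a i).le⟩
  rw [h.right.image_eq, Set.sdiff_sdiff_cancel_left hcol]

theorem encard_rotMatchings [Decidable σ] (ha : 0 < a) (hb : 0 < b) (hK : ∀ κ ∈ K, 2 * κ < a)
    (hK₀ : 0 ∉ K) : (rotMatchings a b K σ).encard =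
      (∑ S ∈ symmetricSites a b, pathCount b K σ a S : ℕ) := by
  have hmirror {S} (hS : S ∈ symmetricSites a b) : S.image (mirror a) = S := (mem_filter.1 hS).2
  rw [rotMatchings_eq_biUnion ha hK]
  refine ((symmetricSites a b).finite_toSet.encard_biUnion ?_).trans ?_
  · intro S hS S' hS' hne
    refine Set.disjoint_left.2 ?_
    rintro _ ⟨C, hC, rfl⟩ ⟨C', hC', heq⟩
    obtain rfl : C = C' := by
      rw [← hC.2.1.westPart_union_rot ha hK (hmirror hS),
        ← hC'.2.1.westPart_union_rot ha hK (hmirror hS')]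
      exact congrArg (westPart a) heq.symm
    refine hne (coe_injective (Set.image_injective.2 (fun i j h => site_inj.1 h)
      ((hC.2.1.image_site_eq hC.1).trans (hC'.2.1.image_site_eq hC'.1).symm)))
  · rw [finsum_mem_coe_finset, Nat.cast_sum]
    refine sum_congr rfl fun S hS => ?_
    have hinj : Set.InjOn (fun C => C ∪ rotPair a ⁻¹' C) (dentedMatchings b K σ a S) :=
      fun C hC C' hC' heq => by
        rw [← hC.2.1.westPart_union_rot ha hK (hmirror hS),
          ← hC'.2.1.westPart_union_rot ha hK (hmirror hS)]
        exact congrArg (westPart a) heq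
    have hIco : S ⊆ Ico (-b : ℤ) (a + b) := mem_powerset.1 (mem_filter.1 hS).1
    have hSW : site a '' S ⊆ westRight b K := by
      rintro _ ⟨i, hi, rfl⟩
      exact ((site_mem_rightSites ha hK).2 (hIco hi)).1
    have hhole : holeSites K a = ∅ :=
      eq_empty_of_forall_notMem fun i hi => by
        obtain ⟨κ, hκ, h, -⟩ := mem_holeSites.1 hi
        exact (hK κ hκ).ne h.symm
    rw [hinj.encard_image, encard_dentedMatchings hb hK₀ hSW fun _ => hmirror hS, hhole,
      if_pos (empty_subset S), sdiff_empty]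

theorem encard_rotMatchings_eq_sq (ha : 0 < a) (hb : 0 < b) (hK : ∀ κ ∈ K, 2 * κ < a)
    (hK₀ : 0 ∉ K) :
    (rotMatchings a b K False).encard = (rotMatchings a b K True).encard ^ 2 := by
  rw [encard_rotMatchings ha hb hK hK₀, encard_rotMatchings ha hb hK hK₀,
    sum_pathCount_false_eq_sq hb, Nat.cast_pow]

end RotationCount

section ObliquePlane

/-- The points of the plane with oblique coordinates `s ∈ A`, `t ∈ B` and `s + t ∈ C`; the sides of
a polygon along lattice lines are given by such conditions. -/
def strips (A B C : Set ℝ) : Set (ℝ × ℝ) := {q | q.1 ∈ A ∧ q.2 ∈ B ∧ q.1 + q.2 ∈ C}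

lemma isOpenMap_fst_add_snd : IsOpenMap fun q : ℝ × ℝ => q.1 + q.2 :=
  (LinearMap.fst ℝ ℝ ℝ + LinearMap.snd ℝ ℝ ℝ).isOpenMap_of_finiteDimensional
    fun x => ⟨(x, 0), add_zero x⟩

lemma interior_strips (A B C : Set ℝ) :
    interior (strips A B C) = strips (interior A) (interior B) (interior C) := by
  have hstrips : strips A B C =
      Prod.fst ⁻¹' A ∩ (Prod.snd ⁻¹' B ∩ (fun q : ℝ × ℝ => q.1 + q.2) ⁻¹' C) := rfl
  rw [hstrips, interior_inter, interior_inter,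
    ← isOpenMap_fst.preimage_interior_eq_interior_preimage continuous_fst,
    ← isOpenMap_snd.preimage_interior_eq_interior_preimage continuous_snd,
    ← isOpenMap_fst_add_snd.preimage_interior_eq_interior_preimage (by fun_prop)]
  rfl

variable {A B C : Set ℝ} {S : Set (ℝ × ℝ)}

lemma swap_mem_strips {q : ℝ × ℝ} : q.swap ∈ strips A B C ↔ q ∈ strips B A C := by
  simp only [strips, Set.mem_ofPred_eq, Prod.fst_swap, Prod.snd_swap, and_left_comm, add_comm]

lemma convex_strips (hA : Convex ℝ A) (hB : Convex ℝ B) (hC : Convex ℝ C) :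
    Convex ℝ (strips A B C) :=
  (hA.linear_preimage (LinearMap.fst ℝ ℝ ℝ)).inter <|
    (hB.linear_preimage (LinearMap.snd ℝ ℝ ℝ)).inter <|
      hC.linear_preimage (LinearMap.fst ℝ ℝ ℝ + LinearMap.snd ℝ ℝ ℝ)

lemma mem_of_trapezoid (hS : Convex ℝ S) {α β c d : ℝ} (h₁ : (c - β, β) ∈ S)
    (h₂ : (d - β, β) ∈ S) (h₃ : (α, c - α) ∈ S) (h₄ : (α, d - α) ∈ S) {q : ℝ × ℝ}
    (hq : q.1 + q.2 ∈ Set.Icc c d) (hq₁ : q.1 ∈ Set.uIcc α (q.1 + q.2 - β)) : q ∈ S := by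
  have hline (f : ℝ →ᵃ[ℝ] ℝ × ℝ) : (f ⁻¹' S).OrdConnected := (hS.affine_preimage f).ordConnected
  let x : ℝ →ᵃ[ℝ] ℝ := AffineMap.id ℝ ℝ
  have hβ : (q.1 + q.2 - β, β) ∈ S :=
    (hline ((x - AffineMap.const ℝ ℝ β).prod (AffineMap.const ℝ ℝ β))).out h₁ h₂ hq
  have hα : (α, q.1 + q.2 - α) ∈ S :=
    (hline ((AffineMap.const ℝ ℝ α).prod (x - AffineMap.const ℝ ℝ α))).out h₃ h₄ hq
  have hslice : (q.1, q.1 + q.2 - q.1) ∈ S :=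
    (hline (x.prod (AffineMap.const ℝ ℝ (q.1 + q.2) - x))).uIcc_subset hα
      (show (q.1 + q.2 - β, q.1 + q.2 - (q.1 + q.2 - β)) ∈ S by rwa [sub_sub_cancel]) hq₁
  rwa [add_sub_cancel_left] at hslice

/-- The hexagon in oblique coordinates. -/
def hexagonStrips (a b : ℝ) : Set (ℝ × ℝ) :=
  strips (Set.Icc (-b) (a + b)) (Set.Icc (-b) (a + b)) (Set.Icc 0 (2 * a))

lemma convexHull_hexagon {a b : ℝ} (ha : 0 ≤ a) (hb : 0 ≤ b) :
    convexHull ℝ {(-b, b), (b, -b), (a + b, -b), (a + b, a - b), (a - b, a + b), (-b, a + b)} =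
      hexagonStrips a b := by
  refine Set.Subset.antisymm (convexHull_min ?_ <|
    convex_strips (convex_Icc _ _) (convex_Icc _ _) (convex_Icc _ _)) ?_
  · rintro q (rfl | rfl | rfl | rfl | rfl | rfl) <;>
      refine ⟨⟨?_, ?_⟩, ⟨?_, ?_⟩, ⟨?_, ?_⟩⟩ <;> linarith
  · rintro q ⟨⟨hs, hs'⟩, ⟨ht, ht'⟩, ⟨hx, hx'⟩⟩
    obtain hxa | hxa := le_total (q.1 + q.2) a
    · refine mem_of_trapezoid (convex_convexHull ℝ _) (α := -b) (β := -b) (c := 0) (d := a)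
        (subset_convexHull _ _ ?_) (subset_convexHull _ _ ?_) (subset_convexHull _ _ ?_)
        (subset_convexHull _ _ ?_) ⟨hx, hxa⟩ (Set.mem_uIcc_of_le hs (by linarith)) <;>
      simp
    · refine mem_of_trapezoid (convex_convexHull ℝ _) (α := a + b) (β := a + b) (c := a)
        (d := 2 * a) (subset_convexHull _ _ ?_) (subset_convexHull _ _ ?_)
        (subset_convexHull _ _ ?_) (subset_convexHull _ _ ?_) ⟨hxa, hx'⟩
        (Set.mem_uIcc_of_ge (by linarith) hs') <;>
      simp [two_mul]

/-- The left-pointing triangular hole of side `2` with vertical side in column `2 * κ`, in oblique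
coordinates. -/
def holeStrips (κ : ℝ) : Set (ℝ × ℝ) :=
  strips (Set.Ici (κ - 1)) (Set.Ici (κ - 1)) (Set.Iic (2 * κ))

lemma convexHull_hole (κ : ℝ) :
    convexHull ℝ {(κ - 1, κ + 1), (κ + 1, κ - 1), (κ - 1, κ - 1)} = holeStrips κ := by
  refine Set.Subset.antisymm (convexHull_min ?_ <|
    convex_strips (convex_Ici _) (convex_Ici _) (convex_Iic _)) ?_
  · rintro q (rfl | rfl | rfl) <;> refine ⟨?_, ?_, ?_⟩ <;>
      simp only [Set.mem_Ici, Set.mem_Iic] <;> linarith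
  · rintro q ⟨hs, ht, hx⟩
    rw [Set.mem_Ici] at hs ht
    have hd : 2 * κ - (κ - 1) = κ + 1 := by ring
    refine mem_of_trapezoid (convex_convexHull ℝ _) (α := κ - 1) (β := κ - 1)
        (c := κ - 1 + (κ - 1)) (d := 2 * κ) (subset_convexHull _ _ ?_) (subset_convexHull _ _ ?_)
        (subset_convexHull _ _ ?_) (subset_convexHull _ _ ?_) ⟨by linarith, hx⟩
        (Set.mem_uIcc_of_le hs (by linarith)) <;>
      simp [hd]

/-- A site as a point of the plane, in oblique coordinates. -/
def latticePoint (z : Site) : ℝ × ℝ := (z.1, z.2)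

/-- The lozenge formed by the right-pointing triangle of `c.1` and the left-pointing triangle of
`c.2`, in oblique coordinates. The formula is the same for the three orientations. -/
def tile (c : Site × Site) : Set (ℝ × ℝ) :=
  strips (Set.Icc c.1.1 (c.2.1 + 1)) (Set.Icc c.1.2 (c.2.2 + 1))
    (Set.Icc (c.2.1 + c.2.2) (c.1.1 + c.1.2 + 2))

/-- The parallelogram with vertex `p` and sides `u` and `v`. -/
def parallelogram (p u v : ℝ × ℝ) : Set (ℝ × ℝ) := convexHull ℝ {p, p + u, p + v, p + u + v}

open scoped Pointwise in
lemma mem_parallelogram {p u v q : ℝ × ℝ} :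
    q ∈ parallelogram p u v ↔ ∃ σ ∈ Set.Icc (0 : ℝ) 1, ∃ τ ∈ Set.Icc (0 : ℝ) 1,
      q.1 = p.1 + σ * u.1 + τ * v.1 ∧ q.2 = p.2 + σ * u.2 + τ * v.2 := by
  have hsum : ({p, p + u, p + v, p + u + v} : Set (ℝ × ℝ)) =
      ({p, p + u} : Set (ℝ × ℝ)) + ({0, v} : Set (ℝ × ℝ)) := by
    rw [Set.insert_eq p {p + u}, Set.union_add, Set.singleton_add, Set.singleton_add,
      Set.image_pair, Set.image_pair, add_zero, add_zero, Set.insert_union, Set.singleton_union,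
      Set.insert_comm (p + v)]
  rw [parallelogram, hsum, convexHull_add, convexHull_pair, convexHull_pair, segment_eq_image',
    segment_eq_image', Set.mem_add, Set.exists_mem_image]
  refine exists_congr fun σ => and_congr_right fun _ => ?_
  rw [Set.exists_mem_image]
  refine exists_congr fun τ => and_congr_right fun _ => ?_
  simp only [add_sub_cancel_left, sub_zero, zero_add, Prod.ext_iff, Prod.fst_add, Prod.snd_add,
    Prod.smul_fst, Prod.smul_snd, smul_eq_mul, eq_comm]

lemma parallelogram_comm (p u v : ℝ × ℝ) : parallelogram p u v = parallelogram p v u := by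
  rw [parallelogram, parallelogram, Set.insert_comm (p + u), add_right_comm]

lemma parallelogram_neg (p u v : ℝ × ℝ) : parallelogram p (-u) v = parallelogram (p - u) u v := by
  rw [parallelogram, parallelogram, sub_add_cancel, ← sub_eq_add_neg, Set.insert_comm p,
    Set.pair_comm]

lemma parallelogram_eq_tile (z : Site) :
    parallelogram (latticePoint z) (1, 0) (0, 1) = tile (z, z) ∧
    parallelogram (latticePoint z) (1, 0) (1, -1) = tile ((z.1, z.2 - 1), (z.1 + 1, z.2 - 1)) ∧
    parallelogram (latticePoint z) (1, -1) (0, 1) = tile ((z.1, z.2 - 1), z) := by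
  refine ⟨?_, ?_, ?_⟩ <;> ext ⟨s, t⟩ <;>
    simp only [mem_parallelogram, latticePoint, tile, strips, Set.mem_ofPred_eq, Set.mem_Icc,
      Int.cast_add, Int.cast_sub, Int.cast_one] <;> constructor
  case refine_1.mp | refine_2.mp | refine_3.mp =>
    rintro ⟨σ, ⟨hσ₀, hσ₁⟩, τ, ⟨hτ₀, hτ₁⟩, rfl, rfl⟩
    refine ⟨⟨?_, ?_⟩, ⟨?_, ?_⟩, ⟨?_, ?_⟩⟩ <;> linarith
  · rintro ⟨⟨_, _⟩, ⟨_, _⟩, -⟩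
    refine ⟨s - z.1, ⟨?_, ?_⟩, t - z.2, ⟨?_, ?_⟩, ?_, ?_⟩ <;> linarith
  · rintro ⟨⟨_, _⟩, ⟨_, _⟩, _, _⟩
    refine ⟨s - z.1 - (z.2 - t), ⟨?_, ?_⟩, z.2 - t, ⟨?_, ?_⟩, ?_, ?_⟩ <;> linarith
  · rintro ⟨⟨_, _⟩, ⟨_, _⟩, _, _⟩
    refine ⟨s - z.1, ⟨?_, ?_⟩, t - z.2 + (s - z.1), ⟨?_, ?_⟩, ?_, ?_⟩ <;> linarith

/-- Up to sign, the lattice steps in oblique coordinates. -/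
def latticeSteps : Set (ℝ × ℝ) := {(1, 0), (0, 1), (1, -1)}

lemma exists_tile_eq_of_mem_latticeSteps {u v : ℝ × ℝ} (hu : u ∈ latticeSteps)
    (hv : v ∈ latticeSteps) (huv : u ≠ v) {p : ℝ × ℝ} (hp : p ∈ Set.range latticePoint) :
    ∃ c : Site × Site, Adj c.1 c.2 ∧ parallelogram p u v = tile c := by
  obtain ⟨z, rfl⟩ := hp
  obtain ⟨h₁, h₂, h₃⟩ := parallelogram_eq_tile z
  have hadj₁ : Adj z z := .inl rfl
  have hadj₂ : Adj (z.1, z.2 - 1) (z.1 + 1, z.2 - 1) := .inr (.inl rfl)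
  have hadj₃ : Adj (z.1, z.2 - 1) z := .inr (.inr (Prod.ext rfl (sub_add_cancel _ _).symm))
  rcases hu with rfl | rfl | rfl <;> rcases hv with rfl | rfl | rfl
  · exact absurd rfl huv
  · exact ⟨_, hadj₁, h₁⟩
  · exact ⟨_, hadj₂, h₂⟩
  · exact ⟨_, hadj₁, (parallelogram_comm _ _ _).trans h₁⟩
  · exact absurd rfl huv
  · exact ⟨_, hadj₃, (parallelogram_comm _ _ _).trans h₃⟩
  · exact ⟨_, hadj₂, (parallelogram_comm _ _ _).trans h₂⟩
  · exact ⟨_, hadj₃, h₃⟩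
  · exact absurd rfl huv

lemma sub_mem_range_latticePoint {p u : ℝ × ℝ} (hp : p ∈ Set.range latticePoint)
    (hu : u ∈ latticeSteps) : p - u ∈ Set.range latticePoint := by
  obtain ⟨z, rfl⟩ := hp
  rcases hu with rfl | rfl | rfl
  · exact ⟨z - (1, 0), by simp [latticePoint]⟩
  · exact ⟨z - (0, 1), by simp [latticePoint]⟩
  · exact ⟨z - (1, -1), by simp [latticePoint]⟩

lemma exists_tile_eq_parallelogram {u v p : ℝ × ℝ} (hu : u ∈ latticeSteps ∨ -u ∈ latticeSteps)
    (hv : v ∈ latticeSteps ∨ -v ∈ latticeSteps) (huv : u ≠ v) (huv' : u ≠ -v)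
    (hp : p ∈ Set.range latticePoint) :
    ∃ c : Site × Site, Adj c.1 c.2 ∧ parallelogram p u v = tile c := by
  have hpos {u v p : ℝ × ℝ} (hu : u ∈ latticeSteps) (hv : v ∈ latticeSteps ∨ -v ∈ latticeSteps)
      (huv : u ≠ v) (huv' : u ≠ -v) (hp : p ∈ Set.range latticePoint) :
      ∃ c : Site × Site, Adj c.1 c.2 ∧ parallelogram p u v = tile c := by
    obtain hv | hv := hv
    · exact exists_tile_eq_of_mem_latticeSteps hu hv huv hp
    · rw [parallelogram_comm, ← neg_neg v, parallelogram_neg, parallelogram_comm]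
      exact exists_tile_eq_of_mem_latticeSteps hu hv huv' (sub_mem_range_latticePoint hp hv)
  obtain hu | hu := hu
  · exact hpos hu hv huv huv' hp
  · rw [← neg_neg u, parallelogram_neg]
    exact hpos hu hv (fun h => huv' (neg_eq_iff_eq_neg.1 h)) (fun h => huv (neg_injective h))
      (sub_mem_range_latticePoint hp hu)

lemma exists_parallelogram_eq_tile {c : Site × Site} (hc : Adj c.1 c.2) :
    ∃ p ∈ Set.range latticePoint, ∃ u ∈ latticeSteps, ∃ v ∈ latticeSteps, u ≠ v ∧ u ≠ -v ∧
      parallelogram p u v = tile c := by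
  obtain ⟨⟨i, j⟩, l⟩ := c
  change l = (i, j) ∨ l = (i + 1, j) ∨ l = (i, j + 1) at hc
  rcases hc with rfl | rfl | rfl
  · exact ⟨_, ⟨(i, j), rfl⟩, (1, 0), by simp [latticeSteps], (0, 1), by simp [latticeSteps],
      by simp, by simp, (parallelogram_eq_tile _).1⟩
  · refine ⟨_, ⟨(i, j + 1), rfl⟩, (1, 0), by simp [latticeSteps], (1, -1),
      by simp [latticeSteps], by simp, by simp, (parallelogram_eq_tile _).2.1.trans ?_⟩
    simp only [add_sub_cancel_right]
  · refine ⟨_, ⟨(i, j + 1), rfl⟩, (1, -1), by simp [latticeSteps], (0, 1),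
      by simp [latticeSteps], by simp, by simp, (parallelogram_eq_tile _).2.2.trans ?_⟩
    simp only [add_sub_cancel_right]

end ObliquePlane

section ObliqueCoordinates

open PP

lemma s3_pos : 0 < s3 := Real.sqrt_pos.2 three_pos

/-- The linear part of `obliqueCoords`. -/
def obliqueLinear : (ℝ × ℝ) ≃ₗ[ℝ] ℝ × ℝ where
  toFun p := (p.1 / s3 + p.2, p.1 / s3 - p.2)
  invFun q := ((q.1 + q.2) / 2 * s3, (q.1 - q.2) / 2)
  map_add' p q := Prod.ext (by simp only [Prod.fst_add, Prod.snd_add]; ring)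
    (by simp only [Prod.fst_add, Prod.snd_add]; ring)
  map_smul' r p := Prod.ext
    (by simp only [Prod.smul_fst, Prod.smul_snd, smul_eq_mul, RingHom.id_apply]; ring)
    (by simp only [Prod.smul_fst, Prod.smul_snd, smul_eq_mul, RingHom.id_apply]; ring)
  left_inv p := Prod.ext
    (by simp only [add_add_sub_cancel, add_self_div_two, div_mul_cancel₀ _ s3_pos.ne'])
    (by ring)
  right_inv q := by
    simp only [mul_div_cancel_right₀ _ s3_pos.ne']
    exact Prod.ext (by ring) (by ring)

/-- The coordinates `(s, t)` along the lattice lines of slopes `1 / √3` and `-1 / √3`, with origin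
at the midpoint of the western side of the hexagon. The triangular lattice becomes `ℤ × ℤ`, and
the vertical lattice lines the lines where `s + t` is an integer. -/
def obliqueCoords (b : ℕ) : Pt ≃ᵃ[ℝ] ℝ × ℝ := .ofLinearEquiv obliqueLinear (0, (b : ℝ)) 0

lemma obliqueLinear_mul_s3 (x y : ℝ) : obliqueLinear (x * s3, y) = (x + y, x - y) := by
  change (x * s3 / s3 + y, x * s3 / s3 - y) = _
  rw [mul_div_cancel_right₀ _ s3_pos.ne']

variable {b : ℕ}

lemma obliqueCoords_apply (p : Pt) :
    obliqueCoords b p = (p.1 / s3 + (p.2 - b), p.1 / s3 - (p.2 - b)) := by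
  rw [obliqueCoords, AffineEquiv.ofLinearEquiv_apply, vadd_eq_add, add_zero, vsub_eq_sub]
  change (_, _) = _
  rw [Prod.fst_sub, Prod.snd_sub, sub_zero]

lemma obliqueCoords_mul_s3 (x y : ℝ) :
    obliqueCoords b (x * s3, y) = (x + (y - b), x - (y - b)) := by
  rw [obliqueCoords_apply, mul_div_cancel_right₀ _ s3_pos.ne']

lemma obliqueCoords_add (p u : Pt) :
    obliqueCoords b (p + u) = obliqueCoords b p + obliqueLinear u := by
  rw [add_comm p, ← vadd_eq_add, AffineEquiv.map_vadd, vadd_eq_add, add_comm]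
  rfl

lemma convexHull_eq_preimage (e : (ℝ × ℝ) ≃ᵃ[ℝ] ℝ × ℝ) (V : Set (ℝ × ℝ)) :
    convexHull ℝ V = e ⁻¹' convexHull ℝ (e '' V) := by
  have himage := AffineMap.image_convexHull e.toAffineMap V
  rw [AffineEquiv.coe_toAffineMap] at himage
  rw [← himage, Set.preimage_image_eq _ e.injective]

lemma interior_preimage (e : (ℝ × ℝ) ≃ᵃ[ℝ] ℝ × ℝ) (S : Set (ℝ × ℝ)) :
    interior (e ⁻¹' S) = e ⁻¹' interior S :=
  (AffineEquiv.toContinuousAffineEquiv e).toHomeomorph.preimage_interior S |>.symm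

lemma mem_triLattice {p : Pt} :
    p ∈ triLattice ↔ obliqueCoords b p ∈ Set.range latticePoint := by
  have hvertex (m n : ℤ) : obliqueCoords b ((m : ℝ) * (s3 / 2), (m : ℝ) / 2 + (n : ℝ)) =
      latticePoint (m + n - b, b - n) := by
    rw [mul_div_left_comm, mul_comm, obliqueCoords_mul_s3, latticePoint, Prod.mk.injEq]
    push_cast
    constructor <;> ring
  constructor
  · rintro ⟨m, n, rfl⟩
    exact ⟨_, (hvertex m n).symm⟩
  · rintro ⟨z, hz⟩
    refine ⟨z.1 + z.2, b - z.2, (obliqueCoords b).injective ?_⟩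
    rw [hvertex, ← hz]
    exact congrArg latticePoint (Prod.ext (by ring) (by ring))

lemma mem_unitVecs {u : Pt} :
    u ∈ unitVecs ↔ obliqueLinear u ∈ latticeSteps ∨ -obliqueLinear u ∈ latticeSteps := by
  have hunit : unitVecs = {(0 * s3, 1), (0 * s3, -1), (1 / 2 * s3, 1 / 2),
      (-(1 / 2) * s3, -(1 / 2)), (1 / 2 * s3, -(1 / 2)), (-(1 / 2) * s3, 1 / 2)} := by
    simp only [unitVecs, zero_mul, neg_mul, one_div_mul_eq_div]
  have himage : obliqueLinear '' unitVecs =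
      {(1, -1), (-1, 1), (1, 0), (-1, 0), (0, 1), (0, -1)} := by
    simp only [hunit, Set.image_insert_eq, Set.image_singleton, obliqueLinear_mul_s3]
    norm_num
  rw [← obliqueLinear.injective.mem_set_image, himage]
  simp only [latticeSteps, Set.mem_insert_iff, Set.mem_singleton_iff, neg_eq_iff_eq_neg,
    Prod.neg_mk, neg_zero, neg_neg]
  tauto

lemma isLozenge_iff {L : Set Pt} :
    IsLozenge L ↔ ∃ c : Site × Site, Adj c.1 c.2 ∧ L = obliqueCoords b ⁻¹' tile c := by
  have hhull (p u v : Pt) : convexHull ℝ {p, p + u, p + v, p + u + v} = obliqueCoords b ⁻¹'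
      parallelogram (obliqueCoords b p) (obliqueLinear u) (obliqueLinear v) := by
    rw [convexHull_eq_preimage (obliqueCoords b)]
    simp only [Set.image_insert_eq, Set.image_singleton, obliqueCoords_add]
    rfl
  constructor
  · rintro ⟨p, u, v, hp, hu, hv, huv, huv', rfl⟩
    obtain ⟨c, hc, htile⟩ := exists_tile_eq_parallelogram (mem_unitVecs.1 hu) (mem_unitVecs.1 hv)
      (obliqueLinear.injective.ne huv)
      (fun h => huv' (obliqueLinear.injective (h.trans (map_neg obliqueLinear v).symm)))
      (mem_triLattice.1 hp)
    exact ⟨c, hc, by rw [hhull, htile]⟩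
  · rintro ⟨c, hc, rfl⟩
    obtain ⟨p, hp, u, hu, v, hv, huv, huv', htile⟩ := exists_parallelogram_eq_tile hc
    obtain ⟨p, rfl⟩ := (obliqueCoords b).surjective p
    obtain ⟨u, rfl⟩ := obliqueLinear.surjective u
    obtain ⟨v, rfl⟩ := obliqueLinear.surjective v
    exact ⟨p, u, v, mem_triLattice.2 hp, mem_unitVecs.2 (.inl hu), mem_unitVecs.2 (.inl hv),
      ne_of_apply_ne _ huv, fun h => huv' (h ▸ map_neg obliqueLinear v), by rw [hhull, htile]⟩

end ObliqueCoordinates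

section Region

/-- The rotation by `180°` about the center of the hexagon, in oblique coordinates. -/
def rotPoint (a : ℕ) : (ℝ × ℝ) ≃ᵃ[ℝ] ℝ × ℝ := .constVSub ℝ (a, a)

/-- The region `H_{a,2b}`, in oblique coordinates; `K` is the set of the positions `k_i`. -/
def holeyHexagon (a b : ℕ) (K : Finset ℕ) : Set (ℝ × ℝ) :=
  {q ∈ hexagonStrips a b | ∀ κ ∈ K,
    q ∉ interior (holeStrips κ) ∧ rotPoint a q ∉ interior (holeStrips κ)}

variable {a b : ℕ} {K : Finset ℕ} {q : ℝ × ℝ}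

lemma rotPoint_apply : rotPoint a q = (a - q.1, a - q.2) := rfl

lemma rotPoint_rotPoint : rotPoint a (rotPoint a q) = q := sub_sub_cancel _ q

lemma mem_interior_holeStrips {κ : ℝ} :
    q ∈ interior (holeStrips κ) ↔ κ - 1 < q.1 ∧ κ - 1 < q.2 ∧ q.1 + q.2 < 2 * κ := by
  rw [holeStrips, interior_strips, interior_Ici, interior_Iic]
  rfl

lemma rotPoint_mem_holeyHexagon : rotPoint a q ∈ holeyHexagon a b K ↔ q ∈ holeyHexagon a b K := by
  have hhexagon {q : ℝ × ℝ} (hq : q ∈ hexagonStrips a b) : rotPoint a q ∈ hexagonStrips a b := by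
    obtain ⟨⟨hs, hs'⟩, ⟨ht, ht'⟩, ⟨hx, hx'⟩⟩ := hq
    refine ⟨⟨?_, ?_⟩, ⟨?_, ?_⟩, ⟨?_, ?_⟩⟩ <;> rw [rotPoint_apply] <;> linarith
  have hregion {q : ℝ × ℝ} (hq : q ∈ holeyHexagon a b K) : rotPoint a q ∈ holeyHexagon a b K :=
    ⟨hhexagon hq.1, fun κ hκ => ⟨(hq.2 κ hκ).2, by
      rw [rotPoint_rotPoint]
      exact (hq.2 κ hκ).1⟩⟩
  exact ⟨fun hq => rotPoint_rotPoint (a := a) (q := q) ▸ hregion hq, hregion⟩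

lemma swap_mem_holeyHexagon : q.swap ∈ holeyHexagon a b K ↔ q ∈ holeyHexagon a b K := by
  have hhole (κ : ℝ) (q : ℝ × ℝ) : q.swap ∈ interior (holeStrips κ) ↔
      q ∈ interior (holeStrips κ) := by
    rw [holeStrips, interior_strips, swap_mem_strips]
  exact and_congr swap_mem_strips <|
    forall₂_congr fun κ _ => and_congr (not_congr (hhole κ q)) (not_congr (hhole κ (rotPoint a q)))

open PP

lemma hexagon_eq_preimage : hexagon a b = obliqueCoords b ⁻¹' hexagonStrips a b := by
  have hwest (y : ℝ) : obliqueCoords b (0, y) = (y - b, -(y - b)) := by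
    rw [← zero_mul s3, obliqueCoords_mul_s3, zero_add, zero_sub]
  have hmiddle (y : ℝ) :
      obliqueCoords b (a * (s3 / 2), y) = (a / 2 + (y - b), a / 2 - (y - b)) := by
    rw [mul_div_left_comm, mul_comm, obliqueCoords_mul_s3]
  rw [hexagon, convexHull_eq_preimage (obliqueCoords b),
    ← convexHull_hexagon a.cast_nonneg b.cast_nonneg]
  simp only [Set.image_insert_eq, Set.image_singleton, hwest, hmiddle, obliqueCoords_mul_s3]
  ring_nf

lemma leftHole_eq_preimage (κ : ℕ) : leftHole b κ = obliqueCoords b ⁻¹' holeStrips κ := by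
  rw [leftHole, convexHull_eq_preimage (obliqueCoords b), ← convexHull_hole]
  simp only [Set.image_insert_eq, Set.image_singleton, obliqueCoords_mul_s3]
  ring_nf

lemma obliqueCoords_rot180 (p : Pt) :
    obliqueCoords b (rot180 a b p) = rotPoint a (obliqueCoords b p) := by
  obtain ⟨x, y⟩ := p
  obtain ⟨x, rfl⟩ : ∃ x', x = x' * s3 := ⟨x / s3, (div_mul_cancel₀ _ s3_pos.ne').symm⟩
  rw [rot180, ← sub_mul, obliqueCoords_mul_s3, obliqueCoords_mul_s3, rotPoint_apply]
  exact Prod.ext (by ring) (by ring)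

lemma rightHole_eq_preimage (κ : ℕ) :
    rightHole a b κ = obliqueCoords b ⁻¹' (rotPoint a ⁻¹' holeStrips κ) := by
  rw [rightHole, convexHull_eq_preimage ((obliqueCoords b).trans (rotPoint a)),
    ← convexHull_hole, ← Set.preimage_comp, ← AffineEquiv.coe_trans]
  simp only [Set.image_insert_eq, Set.image_singleton, AffineEquiv.trans_apply,
    obliqueCoords_mul_s3, rotPoint_apply]
  rw [Set.insert_comm]
  ring_nf

lemma Hreg_eq_preimage (s : ℕ) (k : Fin s → ℕ) :
    Hreg a b s k = obliqueCoords b ⁻¹' holeyHexagon a b (univ.image k) := by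
  ext p
  simp only [Hreg, hexagon_eq_preimage, leftHole_eq_preimage, rightHole_eq_preimage,
    interior_preimage, holeyHexagon, Set.mem_sdiff, Set.mem_iUnion, Set.mem_union, not_exists,
    not_or, Set.mem_preimage, Set.mem_ofPred_eq, mem_image, mem_univ, true_and,
    forall_exists_index, forall_apply_eq_imp_iff]

end Region

section Triangles

/-- The right-pointing unit triangle indexed by the site `r`, in oblique coordinates. -/
def rightTriangle (r : Site) : Set (ℝ × ℝ) :=
  strips (Set.Iic (r.1 + 1)) (Set.Iic (r.2 + 1)) (Set.Ici (r.1 + r.2 + 1))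

/-- The left-pointing unit triangle indexed by the site `l`, in oblique coordinates. -/
def leftTriangle (l : Site) : Set (ℝ × ℝ) :=
  strips (Set.Ici l.1) (Set.Ici l.2) (Set.Iic (l.1 + l.2 + 1))

/-- The point with oblique coordinates `m / 3` and `n / 3`; the barycenters of the unit triangles
are of this form. -/
def thirdPoint (m n : ℤ) : ℝ × ℝ := (m / 3, n / 3)

/-- The barycenter of `rightTriangle r`. -/
def rightBarycenter (r : Site) : ℝ × ℝ := thirdPoint (3 * r.1 + 2) (3 * r.2 + 2)

/-- The barycenter of `leftTriangle l`. -/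
def leftBarycenter (l : Site) : ℝ × ℝ := thirdPoint (3 * l.1 + 1) (3 * l.2 + 1)

variable {a b : ℕ} {K : Finset ℕ} {q : ℝ × ℝ} {c : Site × Site}

lemma tile_eq_union (hc : Adj c.1 c.2) : tile c = rightTriangle c.1 ∪ leftTriangle c.2 := by
  obtain ⟨⟨i, j⟩, l⟩ := c
  change l = (i, j) ∨ l = (i + 1, j) ∨ l = (i, j + 1) at hc
  ext ⟨s, t⟩
  simp only [tile, rightTriangle, leftTriangle, strips, Set.mem_union, Set.mem_ofPred_eq,
    Set.mem_Icc, Set.mem_Iic, Set.mem_Ici]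
  rcases hc with rfl | rfl | rfl <;> push_cast <;> constructor
  case inl.mpr | inr.inl.mpr | inr.inr.mpr =>
    rintro (⟨hs, ht, hx⟩ | ⟨hs, ht, hx⟩) <;> refine ⟨⟨?_, ?_⟩, ⟨?_, ?_⟩, ⟨?_, ?_⟩⟩ <;> linarith
  all_goals rintro ⟨⟨hs, hs'⟩, ⟨ht, ht'⟩, ⟨hx, hx'⟩⟩
  · refine (le_total (i + j + 1 : ℝ) (s + t)).imp (fun h => ⟨?_, ?_, ?_⟩) fun h => ⟨?_, ?_, ?_⟩ <;>
      linarith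
  · refine (le_total s (i + 1)).imp (fun h => ⟨?_, ?_, ?_⟩) fun h => ⟨?_, ?_, ?_⟩ <;> linarith
  · refine (le_total t (j + 1)).imp (fun h => ⟨?_, ?_, ?_⟩) fun h => ⟨?_, ?_, ?_⟩ <;> linarith

lemma preimage_rotPoint_tile (c : Site × Site) : rotPoint a ⁻¹' tile c = tile (rotPair a c) := by
  ext ⟨s, t⟩
  simp only [tile, strips, rotPair, rotSite, rotPoint_apply, Set.mem_preimage, Set.mem_ofPred_eq,
    Set.mem_Icc]
  push_cast
  constructor <;> rintro ⟨⟨hs, hs'⟩, ⟨ht, ht'⟩, ⟨hx, hx'⟩⟩ <;>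
    refine ⟨⟨?_, ?_⟩, ⟨?_, ?_⟩, ⟨?_, ?_⟩⟩ <;> linarith

lemma le_iff_le_of_sub_eq {x y u v k : ℝ} (hk : 0 < k) (h : v - u = k * (y - x)) :
    x ≤ y ↔ u ≤ v := by
  rw [← sub_nonneg, ← sub_nonneg (a := v), h, mul_nonneg_iff_of_pos_left hk]

lemma lt_iff_lt_of_sub_eq {x y u v k : ℝ} (hk : 0 < k) (h : v - u = k * (y - x)) :
    x < y ↔ u < v := by
  rw [← sub_pos, ← sub_pos (a := v), h, mul_pos_iff_of_pos_left hk]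

lemma thirdPoint_mem_holeyHexagon {m n : ℤ} : thirdPoint m n ∈ holeyHexagon a b K ↔
    ((-3 * b ≤ m ∧ m ≤ 3 * (a + b)) ∧ (-3 * b ≤ n ∧ n ≤ 3 * (a + b)) ∧
      (0 ≤ m + n ∧ m + n ≤ 6 * a)) ∧
    ∀ κ ∈ K, ¬ (3 * ((κ : ℤ) - 1) < m ∧ 3 * ((κ : ℤ) - 1) < n ∧ m + n < 6 * κ) ∧
      ¬ (m < 3 * (a - κ + 1) ∧ n < 3 * (a - κ + 1) ∧ 6 * (a - κ) < m + n) := by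
  simp only [holeyHexagon, hexagonStrips, strips, Set.mem_ofPred_eq, Set.mem_Icc,
    mem_interior_holeStrips, rotPoint_apply, thirdPoint, ← Int.cast_le (R := ℝ),
    ← Int.cast_lt (R := ℝ)]
  push_cast
  refine and_congr (and_congr ?_ (and_congr ?_ ?_))
    (forall₂_congr fun κ _ => and_congr (not_congr ?_) (not_congr ?_))
  iterate 3
    exact and_congr (le_iff_le_of_sub_eq three_pos (by ring))
      (le_iff_le_of_sub_eq three_pos (by ring))
  iterate 2
    exact and_congr (lt_iff_lt_of_sub_eq three_pos (by ring))
      (and_congr (lt_iff_lt_of_sub_eq three_pos (by ring))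
        (lt_iff_lt_of_sub_eq three_pos (by ring)))

lemma rightBarycenter_mem_holeyHexagon {r : Site} :
    rightBarycenter r ∈ holeyHexagon a b K ↔ r ∈ rightSites a b K := by
  rw [rightBarycenter, thirdPoint_mem_holeyHexagon]
  simp only [rightSites, westRight, westLeft, holeRight, holeLeft, rotSite, col, Set.mem_inter_iff,
    Set.mem_preimage, Set.mem_ofPred_eq]
  constructor
  · rintro ⟨hhexagon, hholes⟩
    refine ⟨⟨?_, ?_, ?_, fun ⟨κ, hκ, hhole⟩ => (hholes κ hκ).1 ?_⟩, ?_, ?_, ?_,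
      fun ⟨κ, hκ, hhole⟩ => (hholes κ hκ).2 ?_⟩ <;> omega
  · rintro ⟨⟨hs, ht, hx, hholes⟩, hs', ht', hx', hholes'⟩
    refine ⟨by omega, fun κ hκ => ⟨fun hhole => hholes ⟨κ, hκ, ?_⟩,
      fun hhole => hholes' ⟨κ, hκ, ?_⟩⟩⟩ <;> omega

lemma rotPoint_leftBarycenter (l : Site) :
    rotPoint a (leftBarycenter l) = rightBarycenter (rotSite a l) := by
  simp only [leftBarycenter, rightBarycenter, thirdPoint, rotSite, rotPoint_apply]
  push_cast
  exact Prod.ext (by ring) (by ring)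

lemma leftBarycenter_mem_holeyHexagon {l : Site} :
    leftBarycenter l ∈ holeyHexagon a b K ↔ l ∈ leftSites a b K := by
  rw [← rotPoint_mem_holeyHexagon, rotPoint_leftBarycenter, rightBarycenter_mem_holeyHexagon]
  rfl

lemma thirdPoint_mem_tile {m n : ℤ} : thirdPoint m n ∈ tile c ↔
    (3 * c.1.1 ≤ m ∧ m ≤ 3 * (c.2.1 + 1)) ∧ (3 * c.1.2 ≤ n ∧ n ≤ 3 * (c.2.2 + 1)) ∧
      3 * (c.2.1 + c.2.2) ≤ m + n ∧ m + n ≤ 3 * (c.1.1 + c.1.2 + 2) := by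
  simp only [tile, strips, Set.mem_ofPred_eq, Set.mem_Icc, thirdPoint, ← Int.cast_le (R := ℝ)]
  push_cast
  refine and_congr ?_ (and_congr ?_ ?_) <;>
    exact and_congr (le_iff_le_of_sub_eq three_pos (by ring))
      (le_iff_le_of_sub_eq three_pos (by ring))

lemma fst_eq_of_rightBarycenter_mem_tile {r : Site} (hc : Adj c.1 c.2)
    (hr : rightBarycenter r ∈ tile c) : c.1 = r := by
  obtain ⟨⟨i, j⟩, l⟩ := c
  rw [rightBarycenter, thirdPoint_mem_tile] at hr
  change l = (i, j) ∨ l = (i + 1, j) ∨ l = (i, j + 1) at hc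
  rcases hc with rfl | rfl | rfl <;> exact Prod.ext (by omega) (by omega)

lemma rightBarycenter_mem_interior_tile (hc : Adj c.1 c.2) :
    rightBarycenter c.1 ∈ interior (tile c) := by
  obtain ⟨⟨i, j⟩, l⟩ := c
  change l = (i, j) ∨ l = (i + 1, j) ∨ l = (i, j + 1) at hc
  rw [tile, interior_strips, interior_Icc, interior_Icc, interior_Icc]
  rcases hc with rfl | rfl | rfl <;>
    simp only [strips, Set.mem_ofPred_eq, Set.mem_Ioo, rightBarycenter, thirdPoint] <;>
    push_cast <;> refine ⟨⟨?_, ?_⟩, ⟨?_, ?_⟩, ⟨?_, ?_⟩⟩ <;> linarith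

lemma snd_eq_of_leftBarycenter_mem_tile {l : Site} (hc : Adj c.1 c.2)
    (hl : leftBarycenter l ∈ tile c) : c.2 = l := by
  refine (involutive_rotSite 0).injective
    (fst_eq_of_rightBarycenter_mem_tile (c := rotPair 0 c) (hc.rot 0) ?_)
  rwa [← preimage_rotPoint_tile, Set.mem_preimage, ← rotPoint_leftBarycenter, rotPoint_rotPoint]

lemma leftBarycenter_mem_interior_tile (hc : Adj c.1 c.2) :
    leftBarycenter c.2 ∈ interior (tile c) := by
  have hrot := rightBarycenter_mem_interior_tile (c := rotPair 0 c) (hc.rot 0)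
  rwa [← preimage_rotPoint_tile, interior_preimage, Set.mem_preimage, rotPair,
    ← rotPoint_leftBarycenter, rotPoint_rotPoint] at hrot

end Triangles

section Cover

variable {a b : ℕ} {K : Finset ℕ} {q : ℝ × ℝ} {c : Site × Site}

lemma rightTriangle_subset_holeyHexagon {r : Site} (hr : r ∈ rightSites a b K) :
    rightTriangle r ⊆ holeyHexagon a b K := by
  rintro ⟨s, t⟩ ⟨hs, ht, hx⟩
  simp only [Set.mem_Iic, Set.mem_Ici] at hs ht hx
  simp only [rightSites, westRight, westLeft, holeRight, holeLeft, rotSite, col, Set.mem_inter_iff,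
    Set.mem_preimage, Set.mem_ofPred_eq] at hr
  obtain ⟨⟨hr₁, hr₂, hcol, hholes⟩, hr₁', hr₂', hcol', hholes'⟩ := hr
  replace hcol' : r.1 + r.2 + 2 ≤ 2 * a := by omega
  have hlt {m n : ℤ} (h : (m : ℝ) < n) : m < n := Int.cast_lt.1 h
  rw [← Int.cast_le (R := ℝ)] at hr₁ hr₂ hcol hr₁' hr₂' hcol'
  push_cast at hr₁ hr₂ hcol hr₁' hr₂' hcol'
  refine ⟨⟨⟨?_, ?_⟩, ⟨?_, ?_⟩, ?_, ?_⟩, fun κ hκ => ?_⟩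
  iterate 6 linarith
  simp only [mem_interior_holeStrips, rotPoint_apply]
  constructor
  · rintro ⟨hs', ht', hx'⟩
    have h₁ : (κ : ℤ) - 1 < r.1 + 1 := hlt (by push_cast; linarith)
    have h₂ : (κ : ℤ) - 1 < r.2 + 1 := hlt (by push_cast; linarith)
    have h₃ : r.1 + r.2 + 1 < 2 * (κ : ℤ) := hlt (by push_cast; linarith)
    exact hholes ⟨κ, hκ, by omega⟩
  · rintro ⟨hs', ht', hx'⟩
    have h₁ : (κ : ℤ) - 1 < a - r.1 := hlt (by push_cast; linarith)
    have h₂ : (κ : ℤ) - 1 < a - r.2 := hlt (by push_cast; linarith)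
    have h₃ : 2 * (a : ℤ) - (r.1 + r.2 + 2) < 2 * (κ : ℤ) := hlt (by push_cast; linarith)
    exact hholes' ⟨κ, hκ, by omega⟩

lemma preimage_rotPoint_rightTriangle (r : Site) :
    rotPoint a ⁻¹' rightTriangle r = leftTriangle (rotSite a r) := by
  ext ⟨s, t⟩
  simp only [rightTriangle, leftTriangle, strips, rotSite, rotPoint_apply, Set.mem_preimage,
    Set.mem_ofPred_eq, Set.mem_Iic, Set.mem_Ici]
  push_cast
  constructor <;> rintro ⟨hs, ht, hx⟩ <;> refine ⟨?_, ?_, ?_⟩ <;> linarith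

lemma leftTriangle_subset_holeyHexagon {l : Site} (hl : l ∈ leftSites a b K) :
    leftTriangle l ⊆ holeyHexagon a b K := by
  intro q hq
  rw [← involutive_rotSite a l, ← preimage_rotPoint_rightTriangle] at hq
  exact rotPoint_mem_holeyHexagon.1 (rightTriangle_subset_holeyHexagon hl hq)

lemma exists_cell_of_le {s t : ℝ} (hb : 0 < b) (hts : t ≤ s) (ht : -b ≤ t) (hs : s ≤ a + b)
    (hx : 0 ≤ s + t) (hxa : s + t ≤ a) :
    ∃ i j : ℤ, s ∈ Set.Icc (i : ℝ) (i + 1) ∧ t ∈ Set.Icc (j : ℝ) (j + 1) ∧ s + t < i + j + 2 ∧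
      i ∈ Set.Ico (-b : ℤ) (a + b) ∧ j ∈ Set.Ico (-b : ℤ) (a + b) ∧ (j < 0 ∨ (j : ℝ) < t) := by
  have hb' : (0 : ℝ) < b := Nat.cast_pos.2 hb
  have hfloor (x : ℝ) : (⌊x⌋ : ℝ) ≤ x ∧ x < ⌊x⌋ + 1 := ⟨Int.floor_le x, Int.lt_floor_add_one x⟩
  have hceil (x : ℝ) : ((⌈x⌉ - 1 : ℤ) : ℝ) < x ∧ x ≤ (⌈x⌉ - 1 : ℤ) + 1 := by
    push_cast
    exact ⟨by linarith [Int.ceil_lt_add_one x], by linarith [Int.le_ceil x]⟩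
  obtain ht₀ | ht₀ := le_or_gt 0 t
  · obtain ⟨hi, hi'⟩ := hfloor s
    obtain ⟨hj, hj'⟩ := hceil t
    refine ⟨⌊s⌋, ⌈t⌉ - 1, ⟨hi, hi'.le⟩, ⟨hj.le, hj'⟩, by linarith,
      ⟨Int.le_floor.2 ?_, Int.floor_lt.2 ?_⟩, ⟨?_, ?_⟩, .inr hj⟩
    · push_cast; linarith
    · push_cast; linarith
    · have := Int.ceil_nonneg ht₀
      omega
    · rw [← Int.cast_lt (R := ℝ)]
      push_cast at hj ⊢
      linarith
  · obtain ⟨hi, hi'⟩ := hceil s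
    obtain ⟨hj, hj'⟩ := hfloor t
    refine ⟨⌈s⌉ - 1, ⌊t⌋, ⟨hi.le, hi'⟩, ⟨hj, hj'.le⟩, by linarith, ⟨?_, ?_⟩,
      ⟨Int.le_floor.2 ?_, Int.floor_lt.2 ?_⟩, .inl (Int.floor_lt.2 ?_)⟩
    · have := Int.ceil_nonneg (show 0 ≤ s by linarith)
      omega
    · rw [← Int.cast_lt (R := ℝ)]
      push_cast at hi ⊢
      linarith
    all_goals push_cast; linarith

lemma exists_cell (hb : 0 < b) (hK₀ : 0 ∉ K) (hq : q ∈ holeyHexagon a b K) (hqa : q.1 + q.2 ≤ a) :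
    ∃ i j : ℤ, q.1 ∈ Set.Icc (i : ℝ) (i + 1) ∧ q.2 ∈ Set.Icc (j : ℝ) (j + 1) ∧
      i ∈ Set.Ico (-b : ℤ) (a + b) ∧ j ∈ Set.Ico (-b : ℤ) (a + b) ∧
      (⌊q.1 + q.2⌋ = i + j ∨ ⌊q.1 + q.2⌋ = i + j + 1) ∧
      ∀ κ ∈ K, (κ : ℤ) - 1 ≤ i → (κ : ℤ) - 1 ≤ j → 2 * (κ : ℤ) ≤ ⌊q.1 + q.2⌋ := by
  wlog hts : q.2 ≤ q.1 generalizing q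
  · obtain ⟨i, j, hi, hj, hi', hj', hij, hholes⟩ :=
      this (swap_mem_holeyHexagon.2 hq) ((add_comm _ _).trans_le hqa) (le_of_not_ge hts)
    rw [Prod.fst_swap, Prod.snd_swap, add_comm q.2] at hij hholes
    rw [add_comm i] at hij
    exact ⟨j, i, hj, hi, hj', hi', hij, fun κ hκ h₁ h₂ => hholes κ hκ h₂ h₁⟩
  obtain ⟨⟨⟨-, hs⟩, ⟨ht, -⟩, hx, -⟩, hholes⟩ := hq
  obtain ⟨i, j, hi, hj, hij, hi', hj', hstrict⟩ := exists_cell_of_le hb hts ht hs hx hqa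
  refine ⟨i, j, hi, hj, hi', hj', ?_, fun κ hκ _ hκj => ?_⟩
  · have hle : i + j ≤ ⌊q.1 + q.2⌋ := Int.le_floor.2 (by push_cast; linarith [hi.1, hj.1])
    have hlt : ⌊q.1 + q.2⌋ < i + j + 2 := Int.floor_lt.2 (by exact_mod_cast hij)
    omega
  · have hκ₀ : κ ≠ 0 := fun h => hK₀ (h ▸ hκ)
    have hκt : ((κ - 1 : ℤ) : ℝ) < q.2 :=
      (Int.cast_le.2 hκj).trans_lt (hstrict.resolve_left (by omega))
    push_cast at hκt
    have hx' := (hholes κ hκ).1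
    simp only [mem_interior_holeStrips, not_and, not_lt] at hx'
    exact Int.le_floor.2 (by exact_mod_cast hx' (hκt.trans_le hts) hκt)

lemma exists_triangle_of_add_le (ha : 0 < a) (hb : 0 < b) (hK : ∀ κ ∈ K, 2 * κ < a) (hK₀ : 0 ∉ K)
    (hq : q ∈ holeyHexagon a b K) (hqa : q.1 + q.2 ≤ a) :
    (∃ r ∈ rightSites a b K, q ∈ rightTriangle r) ∨
      ∃ l ∈ leftSites a b K, q ∈ leftTriangle l := by
  obtain ⟨i, j, ⟨hi, hi'⟩, ⟨hj, hj'⟩, ⟨hib, hiab⟩, ⟨hjb, hjab⟩, hij, hholes⟩ :=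
    exists_cell hb hK₀ hq hqa
  obtain ⟨-, -, hx, -⟩ := hq.1
  have hfloor : 0 ≤ ⌊q.1 + q.2⌋ := Int.floor_nonneg.2 hx
  have hfloor' : ⌊q.1 + q.2⌋ ≤ a := by exact_mod_cast (Int.floor_le _).trans hqa
  simp only [leftSites, rightSites, westRight, westLeft, holeRight, holeLeft, rotSite, col,
    Set.mem_inter_iff, Set.mem_preimage, Set.mem_ofPred_eq]
  obtain hij | hij := hij
  · refine .inr ⟨(i, j), ⟨⟨?_, ?_, ?_, fun ⟨κ, hκ, h⟩ => ?_⟩, ?_, ?_, ?_, fun ⟨κ, hκ, h⟩ => ?_⟩,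
      hi, hj, ?_⟩
    iterate 3 omega
    · have := hK κ hκ
      omega
    iterate 3 omega
    · have := hholes κ hκ
      omega
    · have hlt := Int.lt_floor_add_one (q.1 + q.2)
      rw [hij] at hlt
      exact_mod_cast hlt.le
  · refine .inl ⟨(i, j), ⟨⟨?_, ?_, ?_, fun ⟨κ, hκ, h⟩ => ?_⟩, ?_, ?_, ?_, fun ⟨κ, hκ, h⟩ => ?_⟩,
      hi', hj', ?_⟩
    iterate 3 omega
    · have := hholes κ hκ
      omega
    iterate 3 omega
    · have := hK κ hκ
      omega
    · have hle := Int.floor_le (q.1 + q.2)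
      rw [hij] at hle
      exact_mod_cast hle

lemma exists_triangle (ha : 0 < a) (hb : 0 < b) (hK : ∀ κ ∈ K, 2 * κ < a) (hK₀ : 0 ∉ K)
    (hq : q ∈ holeyHexagon a b K) :
    (∃ r ∈ rightSites a b K, q ∈ rightTriangle r) ∨
      ∃ l ∈ leftSites a b K, q ∈ leftTriangle l := by
  obtain hqa | hqa := le_total (q.1 + q.2) a
  · exact exists_triangle_of_add_le ha hb hK hK₀ hq hqa
  · have hrot : (rotPoint a q).1 + (rotPoint a q).2 ≤ a := by
      rw [rotPoint_apply]
      linarith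
    refine (exists_triangle_of_add_le ha hb hK hK₀ (rotPoint_mem_holeyHexagon.2 hq) hrot).symm.imp
      (fun ⟨l, hl, hql⟩ => ⟨rotSite a l, hl, ?_⟩) fun ⟨r, hr, hqr⟩ => ⟨rotSite a r, ?_, ?_⟩
    · rwa [← involutive_rotSite a l, ← preimage_rotPoint_rightTriangle, Set.mem_preimage,
        rotPoint_rotPoint] at hql
    · rwa [leftSites, Set.mem_preimage, involutive_rotSite]
    · rwa [← preimage_rotPoint_rightTriangle]

lemma IsMatching.biUnion_tile (ha : 0 < a) (hb : 0 < b) (hK : ∀ κ ∈ K, 2 * κ < a) (hK₀ : 0 ∉ K)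
    {C : Set (Site × Site)} (hC : IsMatching (rightSites a b K) (leftSites a b K) C) :
    ⋃ c ∈ C, tile c = holeyHexagon a b K := by
  refine Set.Subset.antisymm (Set.iUnion₂_subset fun c hc => ?_) fun q hq => Set.mem_iUnion₂.2 ?_
  · rw [tile_eq_union (hC.adj c hc)]
    exact Set.union_subset (rightTriangle_subset_holeyHexagon (hC.right.mapsTo hc))
      (leftTriangle_subset_holeyHexagon (hC.left.mapsTo hc))
  · obtain ⟨r, hr, hqr⟩ | ⟨l, hl, hql⟩ := exists_triangle ha hb hK hK₀ hq
    · obtain ⟨c, hc, rfl⟩ := hC.right.surjOn hr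
      exact ⟨c, hc, tile_eq_union (hC.adj c hc) ▸ .inl hqr⟩
    · obtain ⟨c, hc, rfl⟩ := hC.left.surjOn hl
      exact ⟨c, hc, tile_eq_union (hC.adj c hc) ▸ .inr hql⟩

lemma eq_floor_of_mem_interior_tile (hc : Adj c.1 c.2) (hq : q ∈ interior (tile c)) :
    (⌊q.1 + q.2⌋ = ⌊q.1⌋ + ⌊q.2⌋ → c.2 = (⌊q.1⌋, ⌊q.2⌋)) ∧
      (⌊q.1 + q.2⌋ = ⌊q.1⌋ + ⌊q.2⌋ + 1 → c.1 = (⌊q.1⌋, ⌊q.2⌋)) := by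
  have hfloor {m n : ℤ} {x : ℝ} (hx : x ∈ Set.Ioo (m : ℝ) n) : m ≤ ⌊x⌋ ∧ ⌊x⌋ < n :=
    ⟨Int.le_floor.2 hx.1.le, Int.floor_lt.2 hx.2⟩
  rw [tile, interior_strips, interior_Icc, interior_Icc, interior_Icc] at hq
  obtain ⟨hs, ht, hx⟩ := hq
  replace hs := hfloor (n := c.2.1 + 1) (by exact_mod_cast hs)
  replace ht := hfloor (n := c.2.2 + 1) (by exact_mod_cast ht)
  replace hx := hfloor (m := c.2.1 + c.2.2) (n := c.1.1 + c.1.2 + 2) (by exact_mod_cast hx)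
  obtain ⟨⟨i, j⟩, l⟩ := c
  change l = (i, j) ∨ l = (i + 1, j) ∨ l = (i, j + 1) at hc
  rcases hc with rfl | rfl | rfl <;> constructor <;> intro h <;>
    exact Prod.ext (by omega) (by omega)

lemma IsMatching.disjoint_interior_tile {R L : Set Site} {C : Set (Site × Site)}
    (hC : IsMatching R L C) {c c' : Site × Site} (hc : c ∈ C) (hc' : c' ∈ C) (hne : c ≠ c') :
    Disjoint (interior (tile c)) (interior (tile c')) := by
  refine Set.disjoint_left.2 fun q hq hq' => hne ?_
  obtain ⟨hleft, hright⟩ := eq_floor_of_mem_interior_tile (hC.adj c hc) hq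
  obtain ⟨hleft', hright'⟩ := eq_floor_of_mem_interior_tile (hC.adj c' hc') hq'
  have hle := Int.le_floor_add q.1 q.2
  have hle' := Int.le_floor_add_floor q.1 q.2
  obtain hx | hx : ⌊q.1 + q.2⌋ = ⌊q.1⌋ + ⌊q.2⌋ ∨ ⌊q.1 + q.2⌋ = ⌊q.1⌋ + ⌊q.2⌋ + 1 := by omega
  · exact hC.left.injOn hc hc' ((hleft hx).trans (hleft' hx).symm)
  · exact hC.right.injOn hc hc' ((hright hx).trans (hright' hx).symm)

lemma isMatching_of_tiling {C : Set (Site × Site)} (hC : ∀ c ∈ C, Adj c.1 c.2)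
    (hcover : ⋃ c ∈ C, tile c = holeyHexagon a b K)
    (hdisj : C.PairwiseDisjoint fun c => interior (tile c)) :
    IsMatching (rightSites a b K) (leftSites a b K) C := by
  have hbijOn {f : Site × Site → Site} {w : Site → ℝ × ℝ} {S : Set Site}
      (hregion : ∀ z, w z ∈ holeyHexagon a b K ↔ z ∈ S)
      (htile : ∀ c ∈ C, ∀ z, w z ∈ tile c → f c = z)
      (hinterior : ∀ c ∈ C, w (f c) ∈ interior (tile c)) : Set.BijOn f C S := by
    refine ⟨fun c hc => ?_, fun c hc c' hc' h => ?_, fun z hz => ?_⟩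
    · rw [← hregion, ← hcover]
      exact Set.mem_biUnion hc (interior_subset (hinterior c hc))
    · refine hdisj.elim hc hc' (Set.not_disjoint_iff.2 ⟨_, hinterior c hc, ?_⟩)
      exact h ▸ hinterior c' hc'
    · rw [← hregion, ← hcover] at hz
      obtain ⟨c, hc, hzc⟩ := Set.mem_iUnion₂.1 hz
      exact ⟨c, hc, htile c hc z hzc⟩
  exact ⟨hC,
    hbijOn (fun _ => rightBarycenter_mem_holeyHexagon)
      (fun c hc _ => fst_eq_of_rightBarycenter_mem_tile (hC c hc))
      fun c hc => rightBarycenter_mem_interior_tile (hC c hc),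
    hbijOn (fun _ => leftBarycenter_mem_holeyHexagon)
      (fun c hc _ => snd_eq_of_leftBarycenter_mem_tile (hC c hc))
      fun c hc => leftBarycenter_mem_interior_tile (hC c hc)⟩

lemma centre_notMem_rightTriangle {κ : ℕ} (hκ : κ ∈ K) (hκa : 2 * κ = a) {r : Site}
    (hr : r ∈ rightSites a b K) : ((κ : ℝ), (κ : ℝ)) ∉ rightTriangle r := by
  rintro ⟨hs, ht, hx⟩
  simp only [Set.mem_Iic, Set.mem_Ici] at hs ht hx
  have hs' : (κ : ℤ) ≤ r.1 + 1 := by exact_mod_cast hs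
  have ht' : (κ : ℤ) ≤ r.2 + 1 := by exact_mod_cast ht
  have hx' : r.1 + r.2 + 1 ≤ κ + (κ : ℤ) := by exact_mod_cast hx
  obtain ⟨⟨-, -, -, hright⟩, -, -, -, hleft⟩ := hr
  simp only [holeRight, holeLeft, rotSite, col, Set.mem_ofPred_eq, not_exists,
    not_and] at hright hleft
  have hcol := hright κ hκ
  have hcol' := hleft κ hκ
  omega

lemma IsMatching.biUnion_tile_ne {C : Set (Site × Site)}
    (hC : IsMatching (rightSites a b K) (leftSites a b K) C) (hK : ∀ κ ∈ K, 2 * κ ≤ a) {κ : ℕ}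
    (hκ : κ ∈ K) (hκa : 2 * κ = a) : ⋃ c ∈ C, tile c ≠ holeyHexagon a b K := by
  intro hcover
  have hrot : rotPoint a (κ, κ) = ((κ : ℝ), (κ : ℝ)) := by
    rw [rotPoint_apply, ← hκa]
    push_cast
    ring_nf
  have hcentre : ((κ : ℝ), (κ : ℝ)) ∈ holeyHexagon a b K := by
    have hκa' : 2 * (κ : ℝ) = a := by exact_mod_cast hκa
    refine ⟨⟨⟨?_, ?_⟩, ⟨?_, ?_⟩, ?_, ?_⟩, fun κ' hκ' => ?_⟩
    iterate 6 linarith [κ.cast_nonneg (α := ℝ), b.cast_nonneg (α := ℝ)]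
    rw [hrot, and_self, mem_interior_holeStrips, ← two_mul]
    have hle : 2 * (κ' : ℝ) ≤ a := by exact_mod_cast hK κ' hκ'
    exact fun h => h.2.2.not_ge (hle.trans_eq hκa'.symm)
  rw [← hcover] at hcentre
  obtain ⟨c, hc, hmem⟩ := Set.mem_iUnion₂.1 hcentre
  rw [tile_eq_union (hC.adj c hc)] at hmem
  obtain hright | hleft := hmem
  · exact centre_notMem_rightTriangle hκ hκa (hC.right.mapsTo hc) hright
  · rw [← involutive_rotSite a c.2, ← preimage_rotPoint_rightTriangle, Set.mem_preimage,
      hrot] at hleft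
    exact centre_notMem_rightTriangle hκ hκa (hC.left.mapsTo hc) hleft

end Cover

section Tilings

open PP

/-- The lozenge formed by the right-pointing triangle of `c.1` and the left-pointing triangle of
`c.2`. -/
def lozenge (b : ℕ) (c : Site × Site) : Set Pt := obliqueCoords b ⁻¹' tile c

variable {a b : ℕ} {K : Finset ℕ} {c c' : Site × Site} {C : Set (Site × Site)}

lemma lozenge_injOn : Set.InjOn (lozenge b) {c | Adj c.1 c.2} := by
  intro c hc c' hc' h
  have htile : tile c = tile c' := (obliqueCoords b).surjective.preimage_injective h
  refine Prod.ext (fst_eq_of_rightBarycenter_mem_tile hc ?_)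
    (snd_eq_of_leftBarycenter_mem_tile hc ?_)
  · exact htile ▸ interior_subset (rightBarycenter_mem_interior_tile hc')
  · exact htile ▸ interior_subset (leftBarycenter_mem_interior_tile hc')

lemma image_rot180_lozenge (c : Site × Site) :
    rot180 a b '' lozenge b c = lozenge b (rotPair a c) := by
  have hinv : Function.Involutive (rot180 a b) := fun p => by
    simp only [rot180, sub_sub_cancel]
  rw [Set.image_eq_preimage_of_inverse hinv hinv, lozenge, lozenge, ← preimage_rotPoint_tile]
  ext p
  rw [Set.mem_preimage, Set.mem_preimage, obliqueCoords_rot180]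
  rfl

lemma obliqueCoords_reflV (p : Pt) :
    obliqueCoords b (reflV a p) = rotPoint a (obliqueCoords b p).swap := by
  obtain ⟨x, y⟩ := p
  obtain ⟨x, rfl⟩ : ∃ x', x = x' * s3 := ⟨x / s3, (div_mul_cancel₀ _ s3_pos.ne').symm⟩
  rw [reflV, ← sub_mul, obliqueCoords_mul_s3, obliqueCoords_mul_s3, rotPoint_apply]
  exact Prod.ext (by simp only [Prod.fst_swap]; ring) (by simp only [Prod.snd_swap]; ring)

lemma swap_mem_tile {q : ℝ × ℝ} : q.swap ∈ tile c ↔ q ∈ tile (flipPair c) := by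
  rw [tile, swap_mem_strips, tile, flipPair, Prod.fst_swap, Prod.snd_swap, Prod.fst_swap,
    Prod.snd_swap, add_comm (c.1.1 : ℝ), add_comm (c.2.1 : ℝ) c.2.2]

lemma image_reflV_lozenge (c : Site × Site) :
    reflV a '' lozenge b c = lozenge b (flipPair (rotPair a c)) := by
  have hinv : Function.Involutive (reflV a) := fun p => by
    simp only [reflV, sub_sub_cancel]
  rw [Set.image_eq_preimage_of_inverse hinv hinv]
  ext p
  rw [lozenge, lozenge, Set.mem_preimage, Set.mem_preimage, obliqueCoords_reflV, Set.mem_preimage,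
    ← Set.mem_preimage (f := rotPoint a), preimage_rotPoint_tile]
  exact swap_mem_tile

lemma isLozengeTiling_image_iff (hC : ∀ c ∈ C, Adj c.1 c.2) (s : ℕ) (k : Fin s → ℕ) :
    IsLozengeTiling (Hreg a b s k) (lozenge b '' C) ↔
      ⋃ c ∈ C, tile c = holeyHexagon a b (univ.image k) ∧
        C.PairwiseDisjoint fun c => interior (tile c) := by
  have hcover : ⋃₀ (lozenge b '' C) = Hreg a b s k ↔
      ⋃ c ∈ C, tile c = holeyHexagon a b (univ.image k) := by
    have hunion : ⋃ c ∈ C, lozenge b c = obliqueCoords b ⁻¹' ⋃ c ∈ C, tile c :=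
      Set.preimage_iUnion₂.symm
    rw [Hreg_eq_preimage, Set.sUnion_image, hunion,
      (obliqueCoords b).surjective.preimage_injective.eq_iff]
  have hdisj (c c' : Site × Site) : interior (lozenge b c) ∩ interior (lozenge b c') = ∅ ↔
      Disjoint (interior (tile c)) (interior (tile c')) := by
    rw [← Set.disjoint_iff_inter_eq_empty, lozenge, lozenge, interior_preimage, interior_preimage,
      Set.disjoint_preimage_iff (obliqueCoords b).surjective]
  rw [IsLozengeTiling, hcover, Set.forall_mem_image]
  simp only [Set.forall_mem_image, hdisj]
  constructor
  · rintro ⟨-, hunion, hpairwise⟩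
    exact ⟨hunion, fun c hc c' hc' hne =>
      hpairwise hc hc' (lozenge_injOn.ne (hC c hc) (hC c' hc') hne)⟩
  · rintro ⟨hunion, hpairwise⟩
    exact ⟨fun c hc => isLozenge_iff.2 ⟨c, hC c hc, rfl⟩, hunion,
      fun c hc c' hc' hne => hpairwise hc hc' (ne_of_apply_ne _ hne)⟩

/-- The rotation-invariant tilings of the region; with the condition `σ`, only those also invariant
under reflection. -/
def rotTilings (a b s : ℕ) (k : Fin s → ℕ) (σ : Prop) : Set (Set (Set Pt)) :=
  {T | IsLozengeTiling (Hreg a b s k) T ∧ RotInvariant a b T ∧ (σ → ReflInvariant a T)}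

variable {s : ℕ} {k : Fin s → ℕ} {T : Set (Set Pt)}

lemma exists_image_lozenge_eq (hT : IsLozengeTiling (Hreg a b s k) T) :
    ∃ C : Set (Site × Site), (∀ c ∈ C, Adj c.1 c.2) ∧ lozenge b '' C = T := by
  refine ⟨{c | Adj c.1 c.2 ∧ lozenge b c ∈ T}, fun c hc => hc.1, Set.ext fun L =>
    ⟨fun ⟨c, hc, hL⟩ => hL ▸ hc.2, fun hL => ?_⟩⟩
  obtain ⟨c, hc, rfl⟩ := (isLozenge_iff (b := b)).1 (hT.1 L hL)
  exact ⟨c, ⟨hc, hL⟩, rfl⟩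

lemma isMatching_of_isLozengeTiling (hC : ∀ c ∈ C, Adj c.1 c.2)
    (hT : IsLozengeTiling (Hreg a b s k) (lozenge b '' C)) :
    IsMatching (rightSites a b (univ.image k)) (leftSites a b (univ.image k)) C :=
  have ⟨hcover, hdisj⟩ := (isLozengeTiling_image_iff hC s k).1 hT
  isMatching_of_tiling hC hcover hdisj

lemma lozenge_mem_image (hC : ∀ c ∈ C, Adj c.1 c.2) (hc : Adj c.1 c.2) :
    lozenge b c ∈ lozenge b '' C ↔ c ∈ C :=
  lozenge_injOn.mem_image_iff hC hc

lemma rotInvariant_image_iff (hC : ∀ c ∈ C, Adj c.1 c.2) :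
    RotInvariant a b (lozenge b '' C) ↔ Set.MapsTo (rotPair a) C C := by
  simp only [RotInvariant, Set.forall_mem_image, image_rot180_lozenge]
  exact forall₂_congr fun c hc => lozenge_mem_image hC ((hC c hc).rot a)

lemma reflInvariant_image_iff (hC : ∀ c ∈ C, Adj c.1 c.2)
    (hrot : Set.MapsTo (rotPair a) C C) :
    ReflInvariant a (lozenge b '' C) ↔ Set.MapsTo flipPair C C := by
  have hmaps : ReflInvariant a (lozenge b '' C) ↔ Set.MapsTo (flipPair ∘ rotPair a) C C := by
    simp only [ReflInvariant, Set.forall_mem_image, image_reflV_lozenge]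
    exact forall₂_congr fun c hc => lozenge_mem_image hC ((hC c hc).rot a).swap
  refine hmaps.trans ⟨fun h c hc => ?_, fun h => h.comp hrot⟩
  have hflip := h (hrot hc)
  rwa [Function.comp_apply, involutive_rotPair] at hflip

lemma bijOn_rotTilings (ha : 0 < a) (hb : 0 < b) (hk : ∀ i, 2 * k i < a) (hk₀ : ∀ i, 0 < k i)
    (σ : Prop) : Set.BijOn (Set.image (lozenge b)) (rotMatchings a b (univ.image k) σ)
      (rotTilings a b s k σ) := by
  have hK : ∀ κ ∈ univ.image k, 2 * κ < a := forall_mem_image.2 fun i _ => hk i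
  have hK₀ : 0 ∉ univ.image k := by
    simpa only [mem_image, mem_univ, true_and, not_exists] using fun i => (hk₀ i).ne'
  have hinvariant {C : Set (Site × Site)} (hC : ∀ c ∈ C, Adj c.1 c.2) :
      (RotInvariant a b (lozenge b '' C) ∧ (σ → ReflInvariant a (lozenge b '' C))) ↔
        Set.MapsTo (rotPair a) C C ∧ (σ → Set.MapsTo flipPair C C) := by
    rw [rotInvariant_image_iff hC]
    exact and_congr_right fun hrot => imp_congr_right fun _ => reflInvariant_image_iff hC hrot
  refine ⟨fun C hC => ⟨?_, (hinvariant hC.1.adj).2 hC.2⟩, fun C hC C' hC' h => ?_, ?_⟩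
  · exact (isLozengeTiling_image_iff hC.1.adj s k).2 ⟨hC.1.biUnion_tile ha hb hK hK₀,
      fun c hc c' hc' => hC.1.disjoint_interior_tile hc hc'⟩
  · exact (lozenge_injOn.image_eq_image_iff hC.1.adj hC'.1.adj).1 h
  · rintro T ⟨hT, hT'⟩
    obtain ⟨C, hC, rfl⟩ := exists_image_lozenge_eq hT
    exact ⟨C, ⟨isMatching_of_isLozengeTiling hC hT, (hinvariant hC).1 hT'⟩, rfl⟩

lemma ncard_rotTilings_eq_sq (ha : 0 < a) (hb : 0 < b) (hk : ∀ i, 2 * k i < a)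
    (hk₀ : ∀ i, 0 < k i) :
    (rotTilings a b s k False).ncard = (rotTilings a b s k True).ncard ^ 2 := by
  have hncard (σ : Prop) : (rotTilings a b s k σ).ncard =
      (rotMatchings a b (univ.image k) σ).encard.toNat := by
    have hbijOn := bijOn_rotTilings ha hb hk hk₀ σ
    rw [← hbijOn.image_eq, hbijOn.injOn.ncard_image, Set.ncard]
  have hK : ∀ κ ∈ univ.image k, 2 * κ < a := forall_mem_image.2 fun i _ => hk i
  have hK₀ : 0 ∉ univ.image k := by
    simpa only [mem_image, mem_univ, true_and, not_exists] using fun i => (hk₀ i).ne'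
  rw [hncard, hncard, encard_rotMatchings_eq_sq ha hb hK hK₀]
  exact map_pow ENat.toNatHom _ _

lemma rotTilings_eq_empty (hk : ∀ i, 2 * k i ≤ a) {i : Fin s} (hi : 2 * k i = a) (σ : Prop) :
    rotTilings a b s k σ = ∅ := by
  refine Set.eq_empty_of_forall_notMem fun T ⟨hT, _⟩ => ?_
  obtain ⟨C, hC, rfl⟩ := exists_image_lozenge_eq hT
  exact (isMatching_of_isLozengeTiling hC hT).biUnion_tile_ne
    (forall_mem_image.2 fun j _ => hk j) (mem_image_of_mem k (mem_univ i)) hi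
    ((isLozengeTiling_image_iff hC s k).1 hT).1

lemma Mrot_eq_ncard : Mrot a b (Hreg a b s k) = (rotTilings a b s k False).ncard := by
  rw [← Nat.card_coe_set_eq]
  simp only [rotTilings, false_imp_iff, and_true]
  rfl

lemma MrotRefl_eq_ncard : MrotRefl a b (Hreg a b s k) = (rotTilings a b s k True).ncard := by
  rw [← Nat.card_coe_set_eq]
  simp only [rotTilings, true_imp_iff]
  rfl

end Tilings

end HoleyHexagon

open PP in
/-- Theorem 2.1, equation (2.3):
`M_⊙(H_{a,2b}(k_1,…,k_s)) = M_{⊙,|}(H_{a,2b}(k_1,…,k_s))²`. -/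
theorem Mrot_Hreg_eq_MrotRefl_sq (a b s : ℕ) (ha : 0 < a) (hb : 0 < b) (hs : 0 < s)
    (k : Fin s → ℕ) (hmono : StrictMono k) (hpos : ∀ i, 0 < k i)
    (hbound : ∀ i, 2 * k i ≤ a) :
    Mrot a b (Hreg a b s k) = MrotRefl a b (Hreg a b s k) ^ 2 := by
  rw [HoleyHexagon.Mrot_eq_ncard, HoleyHexagon.MrotRefl_eq_ncard]
  by_cases hcentral : ∃ i, 2 * k i = a
  · -- The hole at `k_i` and its reflection share a vertical side. The midpoint of that side stays
    -- in the region, while all six triangles around it are removed.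
    obtain ⟨i, hi⟩ := hcentral
    rw [HoleyHexagon.rotTilings_eq_empty hbound hi, HoleyHexagon.rotTilings_eq_empty hbound hi,
      Set.ncard_empty, zero_pow two_ne_zero]
  · exact HoleyHexagon.ncard_rotTilings_eq_sq ha hb
      (fun i => (hbound i).lt_of_ne fun hi => hcentral ⟨i, hi⟩) hpos
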